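/- Let T be a scalar Calderón–Zygmund operator on ℝ^d with modulus of continuity ω satisfying the Dini condition, let ρ ∈ (2,∞), and assume V_ρ(T_*) is bounded on L^q(ℝ^d) for some q ∈ (1,∞). Let Q₀ ⊂ ℝ^d be a fixed cube and let p ∈ (1,q]. Then the local grand maximal truncated operator M_{V_ρ(T_*),Q₀} is bounded on L^p(ℝ^d) and is of weak type (1,1); moreover, the operator norms ‖M_{V_ρ(T_*),Q₀}‖_{L^p→L^p} and ‖M_{V_ρ(T_*),Q₀}‖_{L^1→L^{1,∞}} are bounded by constants independent of the cube Q₀. -/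

import Mathlib

open MeasureTheory Set Filter Classical
open scoped ENNReal
noncomputable section

abbrev Rd (d : ℕ) := EuclideanSpace ℝ (Fin d)

/-- An axis-parallel (half-open) cube in `ℝ^d`, given by its center and side length. -/
structure Cube (d : ℕ) where
  c : Fin d → ℝ
  l : ℝ
  hl : 0 < l

/-- The underlying (half-open) set of a cube. -/
def Cube.set {d : ℕ} (Q : Cube d) : Set (Rd d) :=
  {y | ∀ i, Q.c i - Q.l / 2 ≤ y i ∧ y i < Q.c i + Q.l / 2}

/-- The (half-open) set `tQ`, the cube concentric with `Q` of side length `t·ℓ(Q)`. -/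
def Cube.dilate {d : ℕ} (Q : Cube d) (t : ℝ) : Set (Rd d) :=
  {y | ∀ i, Q.c i - t * Q.l / 2 ≤ y i ∧ y i < Q.c i + t * Q.l / 2}

/-- The volume `|Q| = ℓ(Q)^d` of a cube, as an extended nonnegative real. -/
def Cube.vol {d : ℕ} (Q : Cube d) : ℝ≥0∞ := ENNReal.ofReal (Q.l ^ d)

/-- `Q` is one of the dyadic subcubes of `Q₀` obtained by repeated subdivision of `Q₀`
into `2^d` congruent subcubes. -/
def IsDyadicSubcube {d : ℕ} (Q₀ Q : Cube d) : Prop :=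
  ∃ (k : ℕ) (m : Fin d → ℕ), (∀ i, m i < 2 ^ k) ∧ Q.l = Q₀.l / 2 ^ k ∧
    ∀ i, Q.c i = Q₀.c i - Q₀.l / 2 + ((m i : ℝ) + 1 / 2) * (Q₀.l / 2 ^ k)
/-- A scalar Calderón–Zygmund operator on `ℝ^d` with Dini modulus of continuity:
a linear operator `T` bounded on `L²(ℝ^d)` associated with a kernel `K` satisfying the
size condition and the `ω`-smoothness condition, where `ω` is increasing, subadditive,
vanishes at `0`, and satisfies the Dini condition `∫₀¹ ω(t) dt/t < ∞`. -/
structure CZO (d : ℕ) where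
  K : Rd d → Rd d → ℝ
  measK : Measurable (Function.uncurry K)
  ω : ℝ → ℝ
  Cst : ℝ
  hCst : 0 < Cst
  ω_mono : MonotoneOn ω (Set.Ici 0)
  ω_zero : ω 0 = 0
  ω_subadd : ∀ s t : ℝ, 0 ≤ s → 0 ≤ t → ω (s + t) ≤ ω s + ω t
  dini : IntegrableOn (fun t => ω t / t) (Set.Ioo (0 : ℝ) 1)
  size : ∀ x y : Rd d, x ≠ y → |K x y| ≤ Cst / dist x y ^ d
  smooth : ∀ x x' y : Rd d, x ≠ y → dist x x' ≤ dist x y / 2 →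
    |K x y - K x' y| + |K y x - K y x'| ≤ Cst * ω (dist x x' / dist x y) / dist x y ^ d
  T : Lp ℝ 2 (volume : Measure (Rd d)) →L[ℝ] Lp ℝ 2 (volume : Measure (Rd d))
  assoc : ∀ f : Lp ℝ 2 (volume : Measure (Rd d)),
    ∀ᵐ x ∂(volume : Measure (Rd d)), x ∉ tsupport (f : Rd d → ℝ) →
      (T f : Rd d → ℝ) x = ∫ y, K x y * f y

/-- The truncated singular integral `T_ε f(x) = ∫_{|x-y|>ε} K(x,y) f(y) dy`. -/
def CZO.trunc {d : ℕ} (S : CZO d) (ε : ℝ) (f : Rd d → ℝ) (x : Rd d) : ℝ :=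
  ∫ y in {y : Rd d | ε < dist x y}, S.K x y * f y

/-- The variation operator `V_ρ(T_* f)(x)`, with values in `[0,∞]`: the supremum over all
strictly decreasing positive sequences `ε_i → 0` of `(Σ_i |T_{ε_{i+1}}f(x) - T_{ε_i}f(x)|^ρ)^{1/ρ}`. -/
def CZO.var {d : ℕ} (S : CZO d) (ρ : ℝ) (f : Rd d → ℝ) (x : Rd d) : ℝ≥0∞ :=
  ⨆ (ε : ℕ → ℝ) (_ : StrictAnti ε ∧ (∀ i, 0 < ε i) ∧ Tendsto ε atTop (nhds 0)),
    (∑' i : ℕ, ENNReal.ofReal |S.trunc (ε (i + 1)) f x - S.trunc (ε i) f x| ^ ρ) ^ (1 / ρ)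

/-- `V_ρ(T_*)` is bounded on `L^q(ℝ^d)`. -/
def CZO.VarBdd {d : ℕ} (S : CZO d) (ρ q : ℝ) : Prop :=
  ∃ A : ℝ, 0 < A ∧ ∀ f : Rd d → ℝ, Measurable f →
    ∫⁻ x, S.var ρ f x ^ q ∂volume ≤ ENNReal.ofReal A * ∫⁻ x, ENNReal.ofReal |f x| ^ q ∂volume

/-- The weak `(1,1)` operator (quasi-)norm `‖V_ρ(T_*)‖_{L¹ → L^{1,∞}}`. -/
def CZO.weak11Norm {d : ℕ} (S : CZO d) (ρ : ℝ) : ℝ≥0∞ :=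
  sInf {A : ℝ≥0∞ | ∀ f : Rd d → ℝ, Measurable f → ∀ t : ℝ, 0 < t →
    ENNReal.ofReal t * volume {x | ENNReal.ofReal t < S.var ρ f x} ≤
      A * ∫⁻ x, ENNReal.ofReal |f x| ∂volume}

/-- The local grand maximal truncated operator `M_{V_ρ(T_*),Q₀}`. -/
def CZO.grandMaxLoc {d : ℕ} (S : CZO d) (ρ : ℝ) (Q₀ : Cube d) (f : Rd d → ℝ) (x : Rd d) : ℝ≥0∞ :=
  if x ∈ Q₀.set then
    ⨆ (Q : Cube d) (_ : x ∈ Q.set ∧ Q.set ⊆ Q₀.set),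
      essSup (fun ξ => S.var ρ ((Q₀.dilate 3 \ Q.dilate 3).indicator f) ξ)
        (volume.restrict Q.set)
  else 0

/-- The (global) grand maximal truncated operator `M_{V_ρ(T_*)}`. -/
def CZO.grandMax {d : ℕ} (S : CZO d) (ρ : ℝ) (f : Rd d → ℝ) (x : Rd d) : ℝ≥0∞ :=
  ⨆ (Q : Cube d) (_ : x ∈ Q.set),
    essSup (fun ξ => S.var ρ (((Q.dilate 3)ᶜ).indicator f) ξ) (volume.restrict Q.set)

/-- The Hardy–Littlewood maximal operator over cubes, with values in `[0,∞]`. -/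
def maxCube {d : ℕ} (f : Rd d → ℝ) (x : Rd d) : ℝ≥0∞ :=
  ⨆ (Q : Cube d) (_ : x ∈ Q.set), Q.vol⁻¹ * ∫⁻ y in Q.set, ENNReal.ofReal |f y|

/-- The average `⟨|f|⟩_{3Q} = (1/|3Q|) ∫_{3Q} |f|`. -/
def avg3 {d : ℕ} (Q : Cube d) (f : Rd d → ℝ) : ℝ :=
  (∫ y in Q.dilate 3, |f y|) / (3 * Q.l) ^ d
/-- The Euclidean norm of a vector in `ℝ^n`. -/
def enorm' {n : ℕ} (v : Fin n → ℝ) : ℝ := Real.sqrt (∑ i, v i ^ 2)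

/-- The operator norm (with respect to Euclidean norms) of an `n × n` real matrix. -/
def matOpNorm {n : ℕ} (A : Matrix (Fin n) (Fin n) ℝ) : ℝ :=
  sSup ((fun v => enorm' (A.mulVec v)) '' {v | enorm' v ≤ 1})

/-- The spectral power `A^s` of a symmetric matrix `A = U D Uᵗ`, defined as `U D^s Uᵗ`
(junk value `A` if `A` is not symmetric). -/
def Matrix.rpowH {n : ℕ} (A : Matrix (Fin n) (Fin n) ℝ) (s : ℝ) : Matrix (Fin n) (Fin n) ℝ :=
  if h : A.IsHermitian then
    (h.eigenvectorUnitary : Matrix (Fin n) (Fin n) ℝ) *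
      Matrix.diagonal (fun i => h.eigenvalues i ^ s) *
      star (h.eigenvectorUnitary : Matrix (Fin n) (Fin n) ℝ)
  else A

/-- A matrix weight on `ℝ^d`: a measurable function with a.e. symmetric positive definite
values whose operator norm is locally integrable. -/
structure MatrixWeight (d n : ℕ) where
  W : Rd d → Matrix (Fin n) (Fin n) ℝ
  meas : ∀ i j, Measurable fun x => W x i j
  pd : ∀ᵐ x : Rd d, (W x).PosDef
  locInt : LocallyIntegrable (fun x => matOpNorm (W x)) (volume : Measure (Rd d))

/-- The matrix `A_p` characteristic `[W]_{A_p}`. -/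
def MatrixWeight.apConst {d n : ℕ} (W : MatrixWeight d n) (p : ℝ) : ℝ≥0∞ :=
  ⨆ Q : Cube d, Q.vol⁻¹ * ∫⁻ x in Q.set,
    (Q.vol⁻¹ * ∫⁻ t in Q.set,
        ENNReal.ofReal (matOpNorm ((W.W x).rpowH (1 / p) * (W.W t).rpowH (-(1 / p))))
          ^ (p / (p - 1))) ^ (p - 1)

/-- The norm of `f` in `L^p(W)`. -/
def MatrixWeight.wNorm {d n : ℕ} (W : MatrixWeight d n) (p : ℝ)
    (f : Rd d → Fin n → ℝ) : ℝ≥0∞ :=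
  (∫⁻ x, ENNReal.ofReal (enorm' (((W.W x).rpowH (1 / p)).mulVec (f x))) ^ p) ^ (1 / p)

/-- The Euclidean length `|V_ρ(T_{n,*} f⃗)(x)|` of the componentwise variation vector
(with values in `[0,∞]`). -/
def CZO.varVecNorm {d : ℕ} (n : ℕ) (S : CZO d) (ρ : ℝ) (f : Rd d → Fin n → ℝ)
    (x : Rd d) : ℝ≥0∞ :=
  (∑ j : Fin n, S.var ρ (fun y => f y j) x ^ (2 : ℝ)) ^ ((1 : ℝ) / 2)

/-- An `η`-sparse family of cubes. -/
def IsSparse {d : ℕ} (η : ℝ) (F : Set (Cube d)) : Prop :=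
  ∃ E : Cube d → Set (Rd d),
    (∀ Q ∈ F, E Q ⊆ Q.set ∧ MeasurableSet (E Q) ∧ ENNReal.ofReal η * Q.vol ≤ volume (E Q)) ∧
    F.PairwiseDisjoint E

/-- The convex body average `⟨⟨f⃗⟩⟩_{tQ}` of a vector-valued function over the cube `tQ`. -/
def convexBodyAvg {d n : ℕ} (f : Rd d → Fin n → ℝ) (Q : Cube d) (t : ℝ) :
    Set (Fin n → ℝ) :=
  {v | ∃ φ : Rd d → ℝ, Measurable φ ∧ (∀ y, |φ y| ≤ 1) ∧
    ∀ j, v j = (∫ y in Q.dilate t, φ y * f y j) / (t * Q.l) ^ d}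


/-! ### Part 1: maximal function and interpolation -/

/-- Volume of the unit ball. -/
def vB (d : ℕ) : ℝ≥0∞ := volume (Metric.ball (0 : Rd d) 1)

lemma vB_ne_zero (d : ℕ) : vB d ≠ 0 := (Metric.measure_ball_pos volume (0 : Rd d) one_pos).ne'

lemma vB_ne_top (d : ℕ) : vB d ≠ ∞ := measure_ball_lt_top.ne

lemma vol_closedBall {d : ℕ} (x : Rd d) {r : ℝ} (hr : 0 ≤ r) :
    volume (Metric.closedBall x r) = ENNReal.ofReal (r ^ d) * vB d := by
  have := Measure.addHaar_closedBall (volume : Measure (Rd d)) x hr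
  rw [this]
  simp [vB]

/-- Centered Hardy-Littlewood maximal function. -/
def HL {d : ℕ} (u : Rd d → ℝ≥0∞) (x : Rd d) : ℝ≥0∞ :=
  ⨆ (r : ℝ) (_ : 0 < r), (ENNReal.ofReal (r ^ d))⁻¹ * ∫⁻ y in Metric.closedBall x r, u y

lemma le_HL {d : ℕ} (u : Rd d → ℝ≥0∞) (x : Rd d) {r : ℝ} (hr : 0 < r) :
    ∫⁻ y in Metric.closedBall x r, u y ≤ ENNReal.ofReal (r ^ d) * HL u x := by
  have h : (ENNReal.ofReal (r ^ d))⁻¹ * ∫⁻ y in Metric.closedBall x r, u y ≤ HL u x :=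
    le_iSup₂_of_le (f := fun (r : ℝ) (_ : 0 < r) =>
      (ENNReal.ofReal (r ^ d))⁻¹ * ∫⁻ y in Metric.closedBall x r, u y) r hr le_rfl
  have h0 : ENNReal.ofReal (r ^ d) ≠ 0 := by simp; positivity
  calc ∫⁻ y in Metric.closedBall x r, u y
      = ENNReal.ofReal (r ^ d) * ((ENNReal.ofReal (r ^ d))⁻¹ *
          ∫⁻ y in Metric.closedBall x r, u y) := by
        rw [← mul_assoc, ENNReal.mul_inv_cancel h0 ENNReal.ofReal_ne_top, one_mul]
    _ ≤ _ := by gcongr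

lemma HL_mono {d : ℕ} {u v : Rd d → ℝ≥0∞} (h : ∀ y, u y ≤ v y) (x : Rd d) : HL u x ≤ HL v x := by
  unfold HL
  gcongr with r hr y
  exact h y

lemma HL_const_le {d : ℕ} {u : Rd d → ℝ≥0∞} {a : ℝ≥0∞} (h : ∀ y, u y ≤ a) (x : Rd d) :
    HL u x ≤ a * vB d := by
  unfold HL
  refine iSup₂_le fun r hr => ?_
  have h0 : ENNReal.ofReal (r ^ d) ≠ 0 := by simp; positivity
  calc (ENNReal.ofReal (r ^ d))⁻¹ * ∫⁻ y in Metric.closedBall x r, u y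
      ≤ (ENNReal.ofReal (r ^ d))⁻¹ * ∫⁻ y in Metric.closedBall x r, a := by
        gcongr with y; exact h y
    _ = (ENNReal.ofReal (r ^ d))⁻¹ * (a * (ENNReal.ofReal (r ^ d) * vB d)) := by
        rw [setLIntegral_const, vol_closedBall x hr.le]
    _ = ((ENNReal.ofReal (r ^ d))⁻¹ * ENNReal.ofReal (r ^ d)) * (a * vB d) := by ring
    _ = _ := by rw [ENNReal.inv_mul_cancel h0 ENNReal.ofReal_ne_top, one_mul]

lemma HL_add {d : ℕ} {u v : Rd d → ℝ≥0∞} (hu : Measurable u) (x : Rd d) :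
    HL (fun y => u y + v y) x ≤ HL u x + HL v x := by
  conv_lhs => unfold HL
  refine iSup₂_le fun r hr => ?_
  rw [lintegral_add_left hu, mul_add]
  gcongr
  · exact le_iSup₂_of_le (f := fun (r : ℝ) (_ : 0 < r) =>
      (ENNReal.ofReal (r ^ d))⁻¹ * ∫⁻ y in Metric.closedBall x r, u y) r hr le_rfl
  · exact le_iSup₂_of_le (f := fun (r : ℝ) (_ : 0 < r) =>
      (ENNReal.ofReal (r ^ d))⁻¹ * ∫⁻ y in Metric.closedBall x r, v y) r hr le_rfl

/-- Constant in the weak type inequality. -/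
def cHL (d : ℕ) : ℝ≥0∞ := ENNReal.ofReal (5 ^ d) * vB d

lemma cHL_ne_top (d : ℕ) : cHL d ≠ ∞ := ENNReal.mul_ne_top ENNReal.ofReal_ne_top (vB_ne_top d)

lemma cHL_ne_zero (d : ℕ) : cHL d ≠ 0 := by
  refine mul_ne_zero ?_ (vB_ne_zero d)
  simp

lemma HL_weak {d : ℕ} (hd : 0 < d) (u : Rd d → ℝ≥0∞) {t : ℝ≥0∞} (ht : t ≠ 0) (ht' : t ≠ ∞) :
    t * volume {x | t < HL u x} ≤ cHL d * ∫⁻ y, u y := by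
  by_cases hI : ∫⁻ y, u y = ∞
  · rw [hI, ENNReal.mul_top (cHL_ne_zero d)]; exact le_top
  set A := {x | t < HL u x} with hA
  have h1 : ∀ x : Rd d, ∃ r : ℝ, x ∈ A → 0 < r ∧
      t * ENNReal.ofReal (r ^ d) ≤ ∫⁻ y in Metric.closedBall x r, u y := by
    intro x
    by_cases hx : x ∈ A
    · have hx' : t < HL u x := hx
      unfold HL at hx'
      simp only [lt_iSup_iff] at hx'
      obtain ⟨r, hr, h⟩ := hx'
      refine ⟨r, fun _ => ⟨hr, ?_⟩⟩
      have h0 : ENNReal.ofReal (r ^ d) ≠ 0 := by simp; positivity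
      calc t * ENNReal.ofReal (r ^ d) ≤ ((ENNReal.ofReal (r ^ d))⁻¹ *
            ∫⁻ y in Metric.closedBall x r, u y) * ENNReal.ofReal (r ^ d) := by gcongr
        _ = ((ENNReal.ofReal (r ^ d))⁻¹ * ENNReal.ofReal (r ^ d)) *
            ∫⁻ y in Metric.closedBall x r, u y := by ring
        _ = _ := by rw [ENNReal.inv_mul_cancel h0 ENNReal.ofReal_ne_top, one_mul]
    · exact ⟨0, fun h => absurd h hx⟩
  choose r hr using h1
  set R : ℝ := max 1 ((∫⁻ y, u y) / t).toReal with hR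
  have hrR : ∀ x ∈ A, r x ≤ R := by
    intro x hx
    obtain ⟨h0, h⟩ := hr x hx
    by_cases h1 : r x ≤ 1
    · exact h1.trans (le_max_left _ _)
    refine le_trans ?_ (le_max_right _ _)
    have h2 : ENNReal.ofReal (r x ^ d) ≤ (∫⁻ y, u y) / t := by
      rw [ENNReal.le_div_iff_mul_le (Or.inl ht) (Or.inl ht'), mul_comm]
      exact h.trans (setLIntegral_le_lintegral _ _)
    have h3 : (∫⁻ y, u y) / t ≠ ∞ := ENNReal.div_ne_top hI ht
    have h4 : r x ^ d ≤ ((∫⁻ y, u y) / t).toReal := (ENNReal.ofReal_le_iff_le_toReal h3).1 h2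
    exact (le_self_pow₀ (not_le.1 h1).le hd.ne').trans h4
  obtain ⟨w, hwA, hdisj, hcov⟩ := Vitali.exists_disjoint_subfamily_covering_enlargement_closedBall
    A (fun x => x) r R hrR 5 (by norm_num)
  have hwc : w.Countable := by
    refine hdisj.countable_of_nonempty_interior fun x hx => ?_
    refine ⟨x, ?_⟩
    apply Metric.ball_subset_interior_closedBall
    exact Metric.mem_ball_self (hr x (hwA hx)).1
  have hsub : A ⊆ ⋃ x ∈ w, Metric.closedBall x (5 * r x) := by
    intro x hx
    obtain ⟨b, hb, hbs⟩ := hcov x hx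
    exact mem_biUnion hb (hbs (Metric.mem_closedBall_self (hr x hx).1.le))
  have : Countable w := hwc
  calc t * volume A ≤ t * ∑' x : w, volume (Metric.closedBall (x : Rd d) (5 * r x)) := by
        gcongr
        exact (measure_mono hsub).trans (measure_biUnion_le _ hwc _)
    _ = ∑' x : w, t * volume (Metric.closedBall (x : Rd d) (5 * r x)) := by
        rw [ENNReal.tsum_mul_left]
    _ ≤ ∑' x : w, cHL d * ∫⁻ y in Metric.closedBall (x : Rd d) (r x), u y := by
        refine ENNReal.tsum_le_tsum fun x => ?_
        obtain ⟨h0, h⟩ := hr x (hwA x.2)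
        rw [vol_closedBall _ (by positivity), mul_pow, ENNReal.ofReal_mul (by positivity)]
        calc t * (ENNReal.ofReal (5 ^ d) * ENNReal.ofReal (r x ^ d) * vB d)
            = cHL d * (t * ENNReal.ofReal (r x ^ d)) := by unfold cHL; ring
          _ ≤ _ := by gcongr
    _ = cHL d * ∑' x : w, ∫⁻ y in Metric.closedBall (x : Rd d) (r x), u y := by
        rw [ENNReal.tsum_mul_left]
    _ = cHL d * ∫⁻ y in ⋃ x : w, Metric.closedBall (x : Rd d) (r x), u y := by
        rw [lintegral_iUnion (fun _ => Metric.isClosed_closedBall.measurableSet)]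
        intro a b hab
        exact hdisj a.2 b.2 (fun h => hab (Subtype.ext h))
    _ ≤ _ := mul_le_mul_right (setLIntegral_le_lintegral _ _) _

lemma lint_Ioc_rpow {a : ℝ} (ha : -1 < a) {u : ℝ} (hu : 0 ≤ u) :
    ∫⁻ t in Ioc 0 u, ENNReal.ofReal (t ^ a) = ENNReal.ofReal (u ^ (a + 1) / (a + 1)) := by
  have h1 := intervalIntegral.intervalIntegrable_rpow' (a := 0) (b := u) ha
  rw [intervalIntegrable_iff_integrableOn_Ioc_of_le hu] at h1
  rw [← ofReal_integral_eq_lintegral_ofReal h1]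
  · rw [← intervalIntegral.integral_of_le hu, integral_rpow (Or.inl ha),
      Real.zero_rpow (by linarith), sub_zero]
  · filter_upwards [ae_restrict_mem measurableSet_Ioc] with t ht
    exact Real.rpow_nonneg ht.1.le _

lemma lint_Ioi_rpow {a : ℝ} (ha : a < -1) {u : ℝ} (hu : 0 < u) :
    ∫⁻ t in Ioi u, ENNReal.ofReal (t ^ a) = ENNReal.ofReal (-u ^ (a + 1) / (a + 1)) := by
  rw [← ofReal_integral_eq_lintegral_ofReal (integrableOn_Ioi_rpow_of_lt ha hu)]
  · rw [integral_Ioi_rpow_of_lt ha hu]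
  · filter_upwards [ae_restrict_mem measurableSet_Ioi] with t ht
    exact Real.rpow_nonneg (hu.trans ht).le _

lemma rpow_le_layer {p : ℝ} (hp : 0 < p) (a : ℝ≥0∞) :
    a ^ p ≤ ENNReal.ofReal p * ∫⁻ t in Ioi (0 : ℝ), ENNReal.ofReal (t ^ (p - 1)) *
      (if ENNReal.ofReal t < a then 1 else 0) := by
  have key : ∀ s : ℝ, 0 ≤ s → ENNReal.ofReal s ≤ a → ENNReal.ofReal s ^ p ≤
      ENNReal.ofReal p * ∫⁻ t in Ioi (0 : ℝ), ENNReal.ofReal (t ^ (p - 1)) *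
      (if ENNReal.ofReal t < a then 1 else 0) := by
    intro s hs hsa
    have h1 := lint_Ioc_rpow (a := p - 1) (by linarith) hs
    rw [sub_add_cancel] at h1
    calc ENNReal.ofReal s ^ p = ENNReal.ofReal p * ENNReal.ofReal (s ^ p / p) := by
          rw [← ENNReal.ofReal_mul hp.le, ENNReal.ofReal_rpow_of_nonneg hs hp.le]
          congr 1; field_simp
      _ = ENNReal.ofReal p * ∫⁻ t in Ioo 0 s, ENNReal.ofReal (t ^ (p - 1)) := by
          rw [← h1, restrict_Ioo_eq_restrict_Ioc]
      _ = ENNReal.ofReal p * ∫⁻ t in Ioo 0 s, ENNReal.ofReal (t ^ (p - 1)) *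
            (if ENNReal.ofReal t < a then 1 else 0) := by
          congr 1
          refine setLIntegral_congr_fun measurableSet_Ioo fun t ht => ?_
          have : ENNReal.ofReal t < a :=
            lt_of_lt_of_le ((ENNReal.ofReal_lt_ofReal_iff (ht.1.trans ht.2)).2 ht.2) hsa
          simp [this]
      _ ≤ _ := by
          gcongr
          exact Ioo_subset_Ioi_self
  by_cases ha : a = ∞
  · have : a ^ p = ∞ := by simp [ha, hp]
    rw [this, top_le_iff]
    refine ENNReal.eq_top_of_forall_nnreal_le fun r => ?_
    have := key ((r : ℝ) ^ (1 / p)) (by positivity) (by simp [ha])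
    rwa [ENNReal.ofReal_rpow_of_nonneg (by positivity) hp.le, ← Real.rpow_mul (by positivity),
      one_div, inv_mul_cancel₀ hp.ne', Real.rpow_one, ENNReal.ofReal_coe_nnreal] at this
  · have := key a.toReal ENNReal.toReal_nonneg (by rw [ENNReal.ofReal_toReal ha])
    rwa [ENNReal.ofReal_toReal ha] at this

/-- Marcinkiewicz-type interpolation. -/
lemma marc {α : Type*} [MeasurableSpace α] (μ : Measure α) [SFinite μ] {p q : ℝ} (hp : 1 < p)
    (hpq : p < q) (C1 C2 : ℝ≥0∞) (F : α → ℝ≥0∞) (u : α → ℝ) (hu : Measurable u)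
    (hu0 : ∀ y, 0 ≤ u y)
    (h : ∀ t : ℝ, 0 < t → μ {x | ENNReal.ofReal t < F x} ≤
      C1 * ENNReal.ofReal t⁻¹ * ∫⁻ y, (if t < u y then ENNReal.ofReal (u y) else 0) ∂μ +
      C2 * ENNReal.ofReal (t ^ (-q)) * ∫⁻ y, (if u y ≤ t then ENNReal.ofReal (u y ^ q) else 0) ∂μ) :
    ∫⁻ x, F x ^ p ∂μ ≤ (ENNReal.ofReal p * (C1 * ENNReal.ofReal (1 / (p - 1)) +
      C2 * ENNReal.ofReal (1 / (q - p)))) * ∫⁻ x, ENNReal.ofReal (u x ^ p) ∂μ := by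
  have hp0 : 0 < p := by linarith
  obtain ⟨G, hG, hGF, hGe⟩ := exists_measurable_le_lintegral_eq μ (fun x => F x ^ p)
  set H : α → ℝ≥0∞ := fun x => G x ^ (1 / p) with hH
  have hHm : Measurable H := hG.pow_const _
  have hHp : ∀ x, H x ^ p = G x := by
    intro x; simp only [hH]
    rw [← ENNReal.rpow_mul, one_div, inv_mul_cancel₀ hp0.ne', ENNReal.rpow_one]
  have hHF : ∀ x, H x ≤ F x := by
    intro x
    rw [← ENNReal.rpow_le_rpow_iff hp0, hHp]; exact hGF x
  have m1 : Measurable (fun z : α × ℝ => (if z.2 < u z.1 then ENNReal.ofReal (u z.1) else 0)) := by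
    refine Measurable.ite (measurableSet_lt measurable_snd (hu.comp measurable_fst)) ?_
      measurable_const
    exact (hu.comp measurable_fst).ennreal_ofReal
  have m2 : Measurable (fun z : α × ℝ =>
      (if u z.1 ≤ z.2 then ENNReal.ofReal (u z.1 ^ q) else 0)) := by
    refine Measurable.ite (measurableSet_le (hu.comp measurable_fst) measurable_snd) ?_
      measurable_const
    exact ((hu.comp measurable_fst).pow_const _).ennreal_ofReal
  have mr : ∀ a : ℝ, Measurable (fun t : ℝ => ENNReal.ofReal (t ^ a)) := fun a =>
    (measurable_id.pow_const a).ennreal_ofReal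
  have m0 : Measurable (fun z : α × ℝ => (if ENNReal.ofReal z.2 < H z.1 then (1 : ℝ≥0∞) else 0)) :=
    Measurable.ite (measurableSet_lt measurable_snd.ennreal_ofReal (hHm.comp measurable_fst))
      measurable_const measurable_const
  have e1 : ∀ y, ∫⁻ t in Ioi (0 : ℝ), ENNReal.ofReal (t ^ (p - 2)) *
      (if t < u y then ENNReal.ofReal (u y) else 0) ≤
        ENNReal.ofReal (1 / (p - 1)) * ENNReal.ofReal (u y ^ p) := by
    intro y
    have h1 := lint_Ioc_rpow (a := p - 2) (by linarith) (hu0 y)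
    calc ∫⁻ t in Ioi (0 : ℝ), ENNReal.ofReal (t ^ (p - 2)) *
          (if t < u y then ENNReal.ofReal (u y) else 0)
        ≤ ∫⁻ t in Ioi (0 : ℝ), (Ioc 0 (u y)).indicator
            (fun t => ENNReal.ofReal (t ^ (p - 2)) * ENNReal.ofReal (u y)) t := by
          refine setLIntegral_mono' measurableSet_Ioi fun t ht => ?_
          by_cases h : t < u y
          · rw [indicator_of_mem (show t ∈ Ioc 0 (u y) from ⟨ht, h.le⟩)]; simp [h]
          · simp [h]
      _ ≤ ∫⁻ t, (Ioc 0 (u y)).indicator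
            (fun t => ENNReal.ofReal (t ^ (p - 2)) * ENNReal.ofReal (u y)) t :=
          setLIntegral_le_lintegral _ _
      _ = ∫⁻ t in Ioc 0 (u y), ENNReal.ofReal (t ^ (p - 2)) * ENNReal.ofReal (u y) := by
          rw [lintegral_indicator measurableSet_Ioc]
      _ = ENNReal.ofReal (1 / (p - 1)) * ENNReal.ofReal (u y ^ p) := by
          rw [lintegral_mul_const _ (mr _), h1, ← ENNReal.ofReal_mul', ← ENNReal.ofReal_mul]
          · congr 1
            have : u y ^ (p - 2 + 1) * u y = u y ^ p := by
              rcases (hu0 y).eq_or_lt with h0 | h0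
              · rw [← h0, Real.zero_rpow hp0.ne', mul_zero]
              · rw [← Real.rpow_add_one h0.ne']; congr 1; ring
            rw [← this]; ring
          · apply one_div_nonneg.2; linarith
          · exact hu0 y
  have e2 : ∀ y, ∫⁻ t in Ioi (0 : ℝ), ENNReal.ofReal (t ^ (p - 1 - q)) *
      (if u y ≤ t then ENNReal.ofReal (u y ^ q) else 0) ≤
        ENNReal.ofReal (1 / (q - p)) * ENNReal.ofReal (u y ^ p) := by
    intro y
    rcases (hu0 y).eq_or_lt with h0 | h0
    · rw [← h0, Real.zero_rpow (by linarith : q ≠ 0)]; simp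
    have h1 := lint_Ioi_rpow (a := p - 1 - q) (by linarith) h0
    calc ∫⁻ t in Ioi (0 : ℝ), ENNReal.ofReal (t ^ (p - 1 - q)) *
          (if u y ≤ t then ENNReal.ofReal (u y ^ q) else 0)
        ≤ ∫⁻ t in Ioi (0 : ℝ), (Ici (u y)).indicator
            (fun t => ENNReal.ofReal (t ^ (p - 1 - q)) * ENNReal.ofReal (u y ^ q)) t := by
          refine setLIntegral_mono' measurableSet_Ioi fun t ht => ?_
          by_cases h : u y ≤ t
          · rw [indicator_of_mem (show t ∈ Ici (u y) from h)]; simp [h]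
          · simp [h]
      _ ≤ ∫⁻ t, (Ici (u y)).indicator
            (fun t => ENNReal.ofReal (t ^ (p - 1 - q)) * ENNReal.ofReal (u y ^ q)) t :=
          setLIntegral_le_lintegral _ _
      _ = ∫⁻ t in Ioi (u y), ENNReal.ofReal (t ^ (p - 1 - q)) * ENNReal.ofReal (u y ^ q) := by
          rw [lintegral_indicator measurableSet_Ici, restrict_Ioi_eq_restrict_Ici]
      _ = ENNReal.ofReal (1 / (q - p)) * ENNReal.ofReal (u y ^ p) := by
          rw [lintegral_mul_const _ (mr _), h1, ← ENNReal.ofReal_mul', ← ENNReal.ofReal_mul]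
          · congr 1
            have : u y ^ (p - 1 - q + 1) * u y ^ q = u y ^ p := by
              rw [← Real.rpow_add h0]; congr 1; ring
            rw [← this]
            have h3 : p - 1 - q + 1 = -(q - p) := by ring
            rw [h3, div_neg, neg_div, neg_neg]; ring
          · apply one_div_nonneg.2; linarith
          · exact Real.rpow_nonneg h0.le _
  calc ∫⁻ x, F x ^ p ∂μ = ∫⁻ x, H x ^ p ∂μ := by rw [hGe]; simp only [hHp]
    _ ≤ ∫⁻ x, ENNReal.ofReal p * (∫⁻ t in Ioi (0 : ℝ), ENNReal.ofReal (t ^ (p - 1)) *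
          (if ENNReal.ofReal t < H x then 1 else 0)) ∂μ :=
        lintegral_mono fun x => rpow_le_layer hp0 _
    _ = ENNReal.ofReal p * ∫⁻ t in Ioi (0 : ℝ), ENNReal.ofReal (t ^ (p - 1)) *
          μ {x | ENNReal.ofReal t < H x} := by
        rw [lintegral_const_mul' _ _ ENNReal.ofReal_ne_top, lintegral_lintegral_swap]
        · congr 1
          refine lintegral_congr fun t => ?_
          rw [lintegral_const_mul' _ _ ENNReal.ofReal_ne_top]
          congr 1
          rw [← lintegral_indicator_one (measurableSet_lt measurable_const hHm)]
          refine lintegral_congr fun x => ?_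
          simp [indicator]
        · exact (((mr (p - 1)).comp measurable_snd).mul m0).aemeasurable
    _ ≤ ENNReal.ofReal p * ∫⁻ t in Ioi (0 : ℝ), (C1 * ∫⁻ y, ENNReal.ofReal (t ^ (p - 2)) *
          (if t < u y then ENNReal.ofReal (u y) else 0) ∂μ +
          C2 * ∫⁻ y, ENNReal.ofReal (t ^ (p - 1 - q)) *
          (if u y ≤ t then ENNReal.ofReal (u y ^ q) else 0) ∂μ) := by
        gcongr ENNReal.ofReal p * ?_
        refine setLIntegral_mono' measurableSet_Ioi fun t ht => ?_
        have ht0 : (0 : ℝ) < t := ht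
        rw [lintegral_const_mul' _ _ ENNReal.ofReal_ne_top,
          lintegral_const_mul' _ _ ENNReal.ofReal_ne_top]
        have a1 : ENNReal.ofReal (t ^ (p - 2)) =
            ENNReal.ofReal (t ^ (p - 1)) * ENNReal.ofReal t⁻¹ := by
          rw [← ENNReal.ofReal_mul (by positivity), ← Real.rpow_neg_one, ← Real.rpow_add ht0]
          congr 2; ring
        have a2 : ENNReal.ofReal (t ^ (p - 1 - q)) =
            ENNReal.ofReal (t ^ (p - 1)) * ENNReal.ofReal (t ^ (-q)) := by
          rw [← ENNReal.ofReal_mul (by positivity), ← Real.rpow_add ht0]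
          congr 2
        calc ENNReal.ofReal (t ^ (p - 1)) * μ {x | ENNReal.ofReal t < H x}
            ≤ ENNReal.ofReal (t ^ (p - 1)) * μ {x | ENNReal.ofReal t < F x} := by
              gcongr with x; exact hHF x
          _ ≤ _ := mul_le_mul_right (h t ht0) _
          _ = _ := by rw [a1, a2]; ring
    _ = ENNReal.ofReal p * (C1 * ∫⁻ y, (∫⁻ t in Ioi (0 : ℝ), ENNReal.ofReal (t ^ (p - 2)) *
          (if t < u y then ENNReal.ofReal (u y) else 0)) ∂μ +
          C2 * ∫⁻ y, (∫⁻ t in Ioi (0 : ℝ), ENNReal.ofReal (t ^ (p - 1 - q)) *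
          (if u y ≤ t then ENNReal.ofReal (u y ^ q) else 0)) ∂μ) := by
        have n1 : Measurable (fun z : α × ℝ => ENNReal.ofReal (z.2 ^ (p - 2)) *
          (if z.2 < u z.1 then ENNReal.ofReal (u z.1) else 0)) :=
          ((mr (p - 2)).comp measurable_snd).mul m1
        have n2 : Measurable (fun z : α × ℝ => ENNReal.ofReal (z.2 ^ (p - 1 - q)) *
          (if u z.1 ≤ z.2 then ENNReal.ofReal (u z.1 ^ q) else 0)) :=
          ((mr (p - 1 - q)).comp measurable_snd).mul m2
        have s1 := lintegral_lintegral_swap (μ := μ) (ν := volume.restrict (Ioi (0 : ℝ)))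
          (f := fun y t => ENNReal.ofReal (t ^ (p - 2)) *
          (if t < u y then ENNReal.ofReal (u y) else 0)) n1.aemeasurable
        have s2 := lintegral_lintegral_swap (μ := μ) (ν := volume.restrict (Ioi (0 : ℝ)))
          (f := fun y t => ENNReal.ofReal (t ^ (p - 1 - q)) *
          (if u y ≤ t then ENNReal.ofReal (u y ^ q) else 0)) n2.aemeasurable
        rw [s1, s2]
        rw [lintegral_add_left, lintegral_const_mul, lintegral_const_mul]
        · exact n2.lintegral_prod_left'
        · exact n1.lintegral_prod_left'
        · exact n1.lintegral_prod_left'.const_mul _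
    _ ≤ ENNReal.ofReal p * (C1 * ∫⁻ y, ENNReal.ofReal (1 / (p - 1)) * ENNReal.ofReal (u y ^ p) ∂μ +
          C2 * ∫⁻ y, ENNReal.ofReal (1 / (q - p)) * ENNReal.ofReal (u y ^ p) ∂μ) := by
        gcongr with y y
        · exact e1 y
        · exact e2 y
    _ = _ := by
        rw [lintegral_const_mul' _ _ ENNReal.ofReal_ne_top,
          lintegral_const_mul' _ _ ENNReal.ofReal_ne_top]
        ring

lemma HL_strong {d : ℕ} (hd : 0 < d) {s : ℝ} (hs : 1 < s) :
    ∃ C : ℝ≥0∞, C ≠ ∞ ∧ ∀ u : Rd d → ℝ, Measurable u → (∀ y, 0 ≤ u y) →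
      ∫⁻ x, HL (fun y => ENNReal.ofReal (u y)) x ^ s ≤ C * ∫⁻ x, ENNReal.ofReal (u x ^ s) := by
  set v : ℝ := (vB d).toReal with hv
  have hv0 : 0 < v := ENNReal.toReal_pos (vB_ne_zero d) (vB_ne_top d)
  have hvo : ENNReal.ofReal v = vB d := ENNReal.ofReal_toReal (vB_ne_top d)
  refine ⟨(ENNReal.ofReal s * (cHL d * ENNReal.ofReal (v⁻¹) * ENNReal.ofReal (1 / (s - 1)) +
      0 * ENNReal.ofReal (1 / ((s + 1) - s)))) * ENNReal.ofReal ((2 * v) ^ s), ?_, ?_⟩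
  · simp only [zero_mul, add_zero]
    exact ENNReal.mul_ne_top (ENNReal.mul_ne_top ENNReal.ofReal_ne_top (ENNReal.mul_ne_top
      (ENNReal.mul_ne_top (cHL_ne_top d) ENNReal.ofReal_ne_top) ENNReal.ofReal_ne_top))
      ENNReal.ofReal_ne_top
  intro u hu hu0
  have := marc (volume : Measure (Rd d)) hs (lt_add_one s) (cHL d * ENNReal.ofReal (v⁻¹)) 0
    (HL (fun y => ENNReal.ofReal (u y))) (fun y => 2 * v * u y) (hu.const_mul _)
    (fun y => mul_nonneg (by positivity) (hu0 y)) ?_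
  · refine this.trans (le_of_eq ?_)
    conv_rhs => rw [mul_assoc, ← lintegral_const_mul' _ _ ENNReal.ofReal_ne_top]
    congr 2
    ext x
    rw [Real.mul_rpow (by positivity) (hu0 x), ENNReal.ofReal_mul (by positivity)]
  intro t ht
  rw [zero_mul, zero_mul, add_zero]
  set u1 : Rd d → ℝ≥0∞ := fun y => if t < 2 * v * u y then ENNReal.ofReal (u y) else 0 with hu1
  set u2 : Rd d → ℝ≥0∞ := fun y => if t < 2 * v * u y then 0 else ENNReal.ofReal (u y) with hu2
  have hu1m : Measurable u1 :=
    Measurable.ite (measurableSet_lt measurable_const (hu.const_mul _)) hu.ennreal_ofReal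
      measurable_const
  have hle : ∀ x, HL (fun y => ENNReal.ofReal (u y)) x ≤ HL u1 x + ENNReal.ofReal (t / 2) := by
    intro x
    have e : (fun y => ENNReal.ofReal (u y)) = fun y => u1 y + u2 y := by
      ext y; simp only [hu1, hu2]; split_ifs <;> simp
    rw [e]
    refine (HL_add hu1m x).trans ?_
    gcongr
    refine (HL_const_le (a := ENNReal.ofReal (t / (2 * v))) ?_ x).trans ?_
    · intro y
      simp only [hu2]; split_ifs with h
      · simp
      · apply ENNReal.ofReal_le_ofReal
        rw [le_div_iff₀ (by positivity)]; linarith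
    · rw [← hvo, ← ENNReal.ofReal_mul (by positivity)]
      apply ENNReal.ofReal_le_ofReal
      apply le_of_eq; field_simp
  have hsub : {x | ENNReal.ofReal t < HL (fun y => ENNReal.ofReal (u y)) x} ⊆
      {x | ENNReal.ofReal (t / 2) < HL u1 x} := by
    intro x hx
    simp only [mem_ofPred_eq] at hx ⊢
    by_contra hcon
    have h1 := (hx.trans_le (hle x)).trans_le (add_le_add_left (not_lt.1 hcon) _)
    rw [← ENNReal.ofReal_add (by positivity) (by positivity), add_halves] at h1
    exact lt_irrefl _ h1
  refine (measure_mono hsub).trans ?_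
  have hw := HL_weak hd u1 (t := ENNReal.ofReal (t / 2)) (by simp; linarith) ENNReal.ofReal_ne_top
  have : ∫⁻ y, (if t < 2 * v * u y then ENNReal.ofReal (2 * v * u y) else 0) =
      ENNReal.ofReal (2 * v) * ∫⁻ y, u1 y := by
    rw [← lintegral_const_mul' _ _ ENNReal.ofReal_ne_top]
    congr 1; ext y; simp only [hu1]; split_ifs
    · rw [ENNReal.ofReal_mul (by positivity)]
    · simp
  rw [this]
  have h2 : volume {x | ENNReal.ofReal (t / 2) < HL u1 x} = ENNReal.ofReal (2 * t⁻¹) *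
      (ENNReal.ofReal (t / 2) * volume {x | ENNReal.ofReal (t / 2) < HL u1 x}) := by
    rw [← mul_assoc, ← ENNReal.ofReal_mul (by positivity)]
    have : 2 * t⁻¹ * (t / 2) = 1 := by field_simp
    rw [this]; simp
  rw [h2]
  calc _ ≤ ENNReal.ofReal (2 * t⁻¹) * (cHL d * ∫⁻ y, u1 y) := by gcongr
    _ = (ENNReal.ofReal (v⁻¹) * ENNReal.ofReal (2 * v)) * ENNReal.ofReal t⁻¹ *
        (cHL d * ∫⁻ y, u1 y) := by
      rw [← ENNReal.ofReal_mul (by positivity), ← ENNReal.ofReal_mul (by positivity)]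
      congr 2; field_simp
    _ = _ := by ring


/-! ### Part 2: kernels, shells, sequences -/

/-- A dyadic radial majorant. -/
def Psi (d : ℕ) (c : ℕ → ℝ≥0∞) (h w : ℝ) : ℝ≥0∞ :=
  ∑' k : ℕ, c k * (ENNReal.ofReal ((2 ^ k * h) ^ d))⁻¹ * (if w ≤ 2 ^ (k + 1) * h then 1 else 0)

lemma Psi_measurable (d : ℕ) (c : ℕ → ℝ≥0∞) (h : ℝ) : Measurable (Psi d c h) := by
  unfold Psi
  refine Measurable.tsum fun k => ?_
  refine Measurable.const_mul ?_ _
  exact Measurable.ite measurableSet_Iic measurable_const measurable_const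

lemma Psi_lint {d : ℕ} (c : ℕ → ℝ≥0∞) {h : ℝ} (hh : 0 < h) (x : Rd d) (u : Rd d → ℝ≥0∞)
    (hu : Measurable u) :
    ∫⁻ y, Psi d c h (dist x y) * u y ≤ ENNReal.ofReal (2 ^ d) * (∑' k, c k) * HL u x := by
  unfold Psi
  have e : ∀ y, (∑' k : ℕ, c k * (ENNReal.ofReal ((2 ^ k * h) ^ d))⁻¹ *
      (if dist x y ≤ 2 ^ (k + 1) * h then 1 else 0)) * u y = ∑' k : ℕ,
      c k * (ENNReal.ofReal ((2 ^ k * h) ^ d))⁻¹ *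
      (Metric.closedBall x (2 ^ (k + 1) * h)).indicator u y := by
    intro y
    rw [← ENNReal.tsum_mul_right]
    congr 1; ext k
    rw [mul_assoc]
    congr 1
    by_cases hy : dist x y ≤ 2 ^ (k + 1) * h
    · rw [indicator_of_mem (by rwa [Metric.mem_closedBall']), if_pos hy, one_mul]
    · rw [indicator_of_notMem (by rwa [Metric.mem_closedBall']), if_neg hy, zero_mul]
  simp_rw [e]
  rw [lintegral_tsum (fun k => ((hu.indicator measurableSet_closedBall).const_mul _).aemeasurable)]
  rw [← ENNReal.tsum_mul_left, ← ENNReal.tsum_mul_right]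
  refine ENNReal.tsum_le_tsum fun k => ?_
  rw [lintegral_const_mul _ (hu.indicator measurableSet_closedBall),
    lintegral_indicator measurableSet_closedBall]
  have h2 : (0 : ℝ) < 2 ^ k * h := by positivity
  have h1 : (0 : ℝ) < 2 ^ (k + 1) * h := by positivity
  have h0 : ENNReal.ofReal ((2 ^ k * h) ^ d) ≠ 0 := by
    rw [ENNReal.ofReal_ne_zero_iff]; positivity
  calc c k * (ENNReal.ofReal ((2 ^ k * h) ^ d))⁻¹ *
        ∫⁻ y in Metric.closedBall x (2 ^ (k + 1) * h), u y
      ≤ c k * (ENNReal.ofReal ((2 ^ k * h) ^ d))⁻¹ *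
        (ENNReal.ofReal ((2 ^ (k + 1) * h) ^ d) * HL u x) := by
        gcongr; exact le_HL u x h1
    _ = c k * (ENNReal.ofReal ((2 ^ k * h) ^ d))⁻¹ *
        (ENNReal.ofReal (2 ^ d) * ENNReal.ofReal ((2 ^ k * h) ^ d) * HL u x) := by
        have e2 : (2 : ℝ) ^ (k + 1) * h = 2 * (2 ^ k * h) := by ring
        rw [← ENNReal.ofReal_mul (by positivity), ← mul_pow, e2]
    _ = ((ENNReal.ofReal ((2 ^ k * h) ^ d))⁻¹ * ENNReal.ofReal ((2 ^ k * h) ^ d)) *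
        (ENNReal.ofReal (2 ^ d) * c k * HL u x) := by ring
    _ = _ := by rw [ENNReal.inv_mul_cancel h0 ENNReal.ofReal_ne_top, one_mul]

lemma Psi_lint_one {d : ℕ} (c : ℕ → ℝ≥0∞) {h : ℝ} (hh : 0 < h) (z : Rd d) :
    ∫⁻ x, Psi d c h (dist x z) ≤ ENNReal.ofReal (2 ^ d) * (∑' k, c k) * vB d := by
  have := Psi_lint c hh z (fun _ => 1) measurable_const
  simp only [mul_one] at this
  simp_rw [dist_comm _ z]
  refine this.trans ?_
  gcongr
  refine (HL_const_le (a := 1) (fun _ => le_rfl) z).trans (by simp)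

lemma Psi_ge {d : ℕ} {φ : ℝ → ℝ} (hφ : MonotoneOn φ (Ici 0)) {h w : ℝ} (hh : 0 < h) (hw : h ≤ w) :
    ENNReal.ofReal (φ (h / w) / w ^ d) ≤ Psi d (fun k => ENNReal.ofReal (φ ((2 ^ k)⁻¹))) h w := by
  have hw0 : 0 < w := hh.trans_le hw
  obtain ⟨k, hk1, hk2⟩ := exists_nat_pow_near (x := w / h) (y := 2)
    (by rwa [one_le_div hh]) (by norm_num)
  rw [le_div_iff₀ hh] at hk1
  rw [div_lt_iff₀ hh] at hk2
  unfold Psi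
  refine le_trans ?_ (ENNReal.le_tsum k)
  rw [if_pos hk2.le, mul_one, ENNReal.ofReal_div_of_pos (by positivity), ENNReal.div_eq_inv_mul,
    mul_comm]
  gcongr
  have m1 : h / w ∈ Ici (0 : ℝ) := mem_Ici.2 (by positivity)
  have m2 : ((2 : ℝ) ^ k)⁻¹ ∈ Ici (0 : ℝ) := mem_Ici.2 (by positivity)
  refine ENNReal.ofReal_le_ofReal (hφ m1 m2 ?_)
  rw [div_le_iff₀ hw0, inv_mul_eq_div, le_div_iff₀ (by positivity)]
  linarith

lemma tsum_pow_ne_top {a : ℝ} (ha : 0 < a) :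
    ∑' k : ℕ, ENNReal.ofReal (((2 : ℝ) ^ k)⁻¹ ^ a) ≠ ∞ := by
  have e : ∀ k : ℕ, ((2 : ℝ) ^ k)⁻¹ ^ a = ((2 : ℝ)⁻¹ ^ a) ^ k := by
    intro k
    rw [← inv_pow, ← Real.rpow_natCast, ← Real.rpow_natCast, ← Real.rpow_mul (by norm_num),
      ← Real.rpow_mul (by norm_num), mul_comm]
  simp_rw [e]
  refine Summable.tsum_ofReal_ne_top (summable_geometric_of_lt_one (by positivity) ?_)
  exact Real.rpow_lt_one (by norm_num) (by norm_num) ha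

lemma CZO.ω_nonneg {d : ℕ} (S : CZO d) {t : ℝ} (ht : 0 ≤ t) : 0 ≤ S.ω t := by
  rw [← S.ω_zero]; exact S.ω_mono (by simp) ht ht

lemma CZO.ω_nat_mul {d : ℕ} (S : CZO d) (n : ℕ) {t : ℝ} (ht : 0 ≤ t) :
    S.ω (n * t) ≤ n * S.ω t := by
  induction n with
  | zero => simp [S.ω_zero]
  | succ n ih =>
    have := S.ω_subadd (n * t) t (by positivity) ht
    push_cast
    have e : ((n : ℝ) + 1) * t = n * t + t := by ring
    rw [e]; linarith

lemma CZO.tsum_ω_ne_top {d : ℕ} (S : CZO d) :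
    ∑' k : ℕ, ENNReal.ofReal (S.ω ((2 ^ k)⁻¹)) ≠ ∞ := by
  rw [tsum_eq_zero_add' ENNReal.summable]
  refine ENNReal.add_ne_top.2 ⟨ENNReal.ofReal_ne_top, ?_⟩
  have hfin : ∫⁻ t in Ioo (0 : ℝ) 1, ENNReal.ofReal (S.ω t / t) ≠ ∞ := by
    have := S.dini.lintegral_lt_top
    exact this.ne
  set I : ℕ → Set ℝ := fun k => Ioo ((2 ^ (k + 1))⁻¹) ((2 ^ k)⁻¹) with hI
  have hdisj : Pairwise (Function.onFun Disjoint I) := by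
    have key : ∀ i j : ℕ, i < j → Disjoint (I i) (I j) := by
      intro i j hij
      rw [Set.disjoint_left]
      intro t h1 h2
      have : ((2 : ℝ) ^ j)⁻¹ ≤ (2 ^ (i + 1))⁻¹ := by
        gcongr
        · norm_num
        · omega
      simp only [hI, mem_Ioo] at h1 h2
      linarith [h1.1, h2.2]
    intro i j hij
    rcases lt_or_gt_of_ne hij with h | h
    · exact key i j h
    · exact (key j i h).symm
  have hk : ∀ k : ℕ, ENNReal.ofReal (S.ω ((2 ^ (k + 1))⁻¹)) ≤
      2 * ∫⁻ t in I k, ENNReal.ofReal (S.ω t / t) := by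
    intro k
    set a : ℝ := (2 ^ (k + 1))⁻¹ with ha
    have ha0 : 0 < a := by positivity
    have h2a : ((2 : ℝ) ^ k)⁻¹ = 2 * a := by rw [ha, pow_succ]; field_simp
    have hI' : I k = Ioo a (2 * a) := by simp only [hI, h2a, ha]
    have hω := S.ω_nonneg ha0.le
    calc ENNReal.ofReal (S.ω a) = 2 * (ENNReal.ofReal (S.ω a / (2 * a)) * volume (I k)) := by
          rw [hI', Real.volume_Ioo, ← ENNReal.ofReal_mul (by positivity)]
          rw [show (2 : ℝ≥0∞) = ENNReal.ofReal 2 by simp, ← ENNReal.ofReal_mul (by positivity)]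
          congr 1; field_simp; ring
      _ = 2 * ∫⁻ t in I k, ENNReal.ofReal (S.ω a / (2 * a)) := by rw [setLIntegral_const]
      _ ≤ _ := by
          gcongr 2 * ?_
          refine setLIntegral_mono' (by rw [hI']; exact measurableSet_Ioo) fun t ht => ?_
          rw [hI'] at ht
          apply ENNReal.ofReal_le_ofReal
          have ht0 : 0 < t := ha0.trans ht.1
          have := S.ω_mono ha0.le ht0.le ht.1.le
          have h2 := ht.2.le
          gcongr
          exact S.ω_nonneg ht0.le
  refine ne_top_of_le_ne_top (ENNReal.mul_ne_top (by simp : (2 : ℝ≥0∞) ≠ ∞) hfin) ?_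
  calc ∑' k : ℕ, ENNReal.ofReal (S.ω ((2 ^ (k + 1))⁻¹))
      ≤ ∑' k : ℕ, 2 * ∫⁻ t in I k, ENNReal.ofReal (S.ω t / t) := ENNReal.tsum_le_tsum hk
    _ = 2 * ∫⁻ t in ⋃ k, I k, ENNReal.ofReal (S.ω t / t) := by
        rw [ENNReal.tsum_mul_left, lintegral_iUnion (fun k => measurableSet_Ioo) hdisj]
    _ ≤ _ := by
        gcongr 2 * ?_
        apply lintegral_mono_set
        refine iUnion_subset fun k => ?_
        apply Ioo_subset_Ioo (by positivity)
        apply inv_le_one_of_one_le₀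
        exact one_le_pow₀ (by norm_num)

lemma pow_sub_pow_le' {a b : ℝ} (hb : 0 ≤ b) (hab : b ≤ a) (n : ℕ) :
    a ^ (n + 1) - b ^ (n + 1) ≤ (n + 1) * (a - b) * a ^ n := by
  induction n with
  | zero => simp
  | succ n ih =>
    have h1 : b ^ (n + 1) ≤ a ^ (n + 1) := by gcongr
    have ha : 0 ≤ a := hb.trans hab
    have h2 := mul_le_mul_of_nonneg_left ih ha
    have h3 := mul_le_mul_of_nonneg_left h1 (sub_nonneg.2 hab)
    push_cast
    calc a ^ (n + 1 + 1) - b ^ (n + 1 + 1)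
        = a * (a ^ (n + 1) - b ^ (n + 1)) + (a - b) * b ^ (n + 1) := by ring
      _ ≤ a * ((n + 1) * (a - b) * a ^ n) + (a - b) * a ^ (n + 1) := add_le_add h2 h3
      _ = _ := by ring

lemma vol_shell {d : ℕ} (hd : 0 < d) (x : Rd d) {ε h : ℝ} (hε : 0 < ε) (hh : 0 ≤ h) :
    volume {y | |dist x y - ε| ≤ h} ≤
      ENNReal.ofReal (d * (2 * h) * (ε + h) ^ (d - 1)) * vB d := by
  set m := max 0 (ε - h) with hm
  have hm0 : 0 ≤ m := le_max_left _ _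
  have hmle : m ≤ ε + h := max_le (by linarith) (by linarith)
  have hsub : {y | |dist x y - ε| ≤ h} ⊆ Metric.closedBall x (ε + h) \ Metric.ball x m := by
    intro y hy
    have hy' : |dist x y - ε| ≤ h := hy
    rw [abs_le] at hy'
    refine ⟨by rw [Metric.mem_closedBall']; linarith, ?_⟩
    rw [Metric.mem_ball', not_lt]
    exact max_le dist_nonneg (by linarith)
  refine (measure_mono hsub).trans ?_
  have hbm : volume (Metric.ball x m) = ENNReal.ofReal (m ^ d) * vB d := by
    have : Nontrivial (Rd d) := by
      haveI : Nonempty (Fin d) := ⟨⟨0, hd⟩⟩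
      infer_instance
    have := Measure.addHaar_ball (volume : Measure (Rd d)) x hm0
    rw [this]; simp [vB]
  rw [measure_sdiff (Metric.ball_subset_closedBall.trans (Metric.closedBall_subset_closedBall hmle))
    measurableSet_ball.nullMeasurableSet measure_ball_lt_top.ne, hbm,
    vol_closedBall x (by positivity), ← ENNReal.sub_mul (fun _ _ => vB_ne_top d),
    ← ENNReal.ofReal_sub _ (by positivity)]
  gcongr
  obtain ⟨n, rfl⟩ : ∃ n, d = n + 1 := ⟨d - 1, by omega⟩
  refine (pow_sub_pow_le' hm0 hmle n).trans ?_
  have : ε - h ≤ m := le_max_right _ _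
  simp only [Nat.add_sub_cancel]
  push_cast
  gcongr
  linarith

lemma layerA {d : ℕ} (hd : 0 < d) (x : Rd d) {ε h : ℝ} (hε : 0 < ε) (hh : 0 < h) :
    ∫⁻ y in {y | |dist x y - ε| ≤ h ∧ h < dist x y}, (ENNReal.ofReal (dist x y ^ (d - 1)))⁻¹ ≤
      ENNReal.ofReal (3 ^ (d - 1) * d * 2) * vB d * ENNReal.ofReal h := by
  have hm : MeasurableSet {y : Rd d | |dist x y - ε| ≤ h ∧ h < dist x y} := by
    have h1 : MeasurableSet {y : Rd d | |dist x y - ε| ≤ h} :=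
      measurableSet_le (by fun_prop) (by fun_prop)
    have h2 : MeasurableSet {y : Rd d | h < dist x y} :=
      measurableSet_lt (by fun_prop) (by fun_prop)
    exact h1.inter h2
  calc _ ≤ ∫⁻ y in {y | |dist x y - ε| ≤ h ∧ h < dist x y},
          (ENNReal.ofReal (((ε + h) / 3) ^ (d - 1)))⁻¹ := by
        refine setLIntegral_mono' hm fun y hy => ?_
        obtain ⟨h1, h2⟩ := hy
        rw [abs_le] at h1
        gcongr
        by_cases h3 : 2 * h ≤ ε <;> linarith
    _ ≤ (ENNReal.ofReal (((ε + h) / 3) ^ (d - 1)))⁻¹ *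
        (ENNReal.ofReal (d * (2 * h) * (ε + h) ^ (d - 1)) * vB d) := by
        rw [setLIntegral_const]
        gcongr
        exact (measure_mono (fun y hy => hy.1)).trans (vol_shell hd x hε hh.le)
    _ = _ := by
        rw [mul_right_comm _ (vB d), ← ENNReal.ofReal_inv_of_pos (by positivity), ← mul_assoc,
          ← ENNReal.ofReal_mul (by positivity), ← ENNReal.ofReal_mul (by positivity)]
        congr 2
        rw [div_pow]; field_simp

/-- Normalized singular layer function. -/
def Theta {d : ℕ} (x : Rd d) (ε : ℝ) (y : Rd d) : ℝ≥0∞ :=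
  ∑' k : ℕ, (ENNReal.ofReal (√(2 ^ (k + 1)) / ε ^ d)) *
    (if |dist x y - ε| ≤ ε / 2 ^ k then 1 else 0)

lemma Theta_ge {d : ℕ} {x : Rd d} {ε δ : ℝ} {y : Rd d} (hδ : 0 < δ) (hδε : δ ≤ ε)
    (hy : |dist x y - ε| ≤ δ) : ENNReal.ofReal (√(ε / δ) / ε ^ d) ≤ Theta x ε y := by
  have hε : 0 < ε := hδ.trans_le hδε
  obtain ⟨k, hk1, hk2⟩ := exists_nat_pow_near (x := ε / δ) (y := 2)
    (by rwa [one_le_div hδ]) (by norm_num)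
  unfold Theta
  refine le_trans ?_ (ENNReal.le_tsum k)
  have : |dist x y - ε| ≤ ε / 2 ^ k := by
    refine hy.trans ?_
    rw [le_div_iff₀ hδ] at hk1
    rw [le_div_iff₀ (by positivity)]; linarith
  rw [if_pos this, mul_one]
  gcongr

lemma Theta_measurable {d : ℕ} (x : Rd d) (ε : ℝ) : Measurable (Theta x ε) := by
  unfold Theta
  refine Measurable.tsum fun k => ?_
  refine Measurable.const_mul ?_ _
  refine Measurable.ite ?_ measurable_const measurable_const
  exact measurableSet_le (by fun_prop) (by fun_prop)

lemma Theta_lint (d : ℕ) (hd : 0 < d) : ∃ C : ℝ≥0∞, C ≠ ∞ ∧ ∀ (x : Rd d) (ε : ℝ), 0 < ε →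
    ∫⁻ y, Theta x ε y ≤ C := by
  refine ⟨(∑' k : ℕ, ENNReal.ofReal (((2 : ℝ) ^ k)⁻¹ ^ (1 / 2 : ℝ))) *
    ENNReal.ofReal (√2 * d * 2 ^ d) * vB d, ?_, ?_⟩
  · exact ENNReal.mul_ne_top (ENNReal.mul_ne_top (tsum_pow_ne_top (by norm_num))
      ENNReal.ofReal_ne_top) (vB_ne_top d)
  intro x ε hε
  unfold Theta
  have hms : ∀ k : ℕ, MeasurableSet {y : Rd d | |dist x y - ε| ≤ ε / 2 ^ k} := fun k =>
    measurableSet_le (by fun_prop) (by fun_prop)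
  rw [lintegral_tsum, ← ENNReal.tsum_mul_right, ← ENNReal.tsum_mul_right]
  · refine ENNReal.tsum_le_tsum fun k => ?_
    rw [lintegral_const_mul' _ _ ENNReal.ofReal_ne_top]
    have e : ∫⁻ y : Rd d, (if |dist x y - ε| ≤ ε / 2 ^ k then (1 : ℝ≥0∞) else 0) =
        volume {y : Rd d | |dist x y - ε| ≤ ε / 2 ^ k} := by
      rw [← lintegral_indicator_one (hms k)]
      refine lintegral_congr fun y => ?_
      simp [indicator]
    rw [e]
    refine (mul_le_mul_right (vol_shell hd x hε (by positivity)) _).trans ?_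
    rw [← mul_assoc, ← ENNReal.ofReal_mul (by positivity), ← ENNReal.ofReal_mul (by positivity)]
    refine mul_le_mul_left (ENNReal.ofReal_le_ofReal ?_) _
    have h1 : ε / 2 ^ k ≤ ε := div_le_self hε.le (one_le_pow₀ (by norm_num))
    have h2 : √((2 : ℝ) ^ (k + 1)) = √2 * √(2 ^ k) := by
      rw [pow_succ, mul_comm, Real.sqrt_mul (by norm_num)]
    have h3 : (((2 : ℝ) ^ k)⁻¹) ^ (1 / 2 : ℝ) = √(2 ^ k) / 2 ^ k := by
      rw [← Real.sqrt_eq_rpow, Real.sqrt_inv]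
      have : √((2 : ℝ) ^ k) ≠ 0 := by positivity
      rw [eq_div_iff (by positivity), inv_mul_eq_div, div_eq_iff this,
        Real.mul_self_sqrt (by positivity)]
    obtain ⟨n, rfl⟩ : ∃ n, d = n + 1 := ⟨d - 1, by omega⟩
    rw [show n + 1 - 1 = n from rfl]
    calc √(2 ^ (k + 1)) / ε ^ (n + 1) * (((n + 1 : ℕ) : ℝ) * (2 * (ε / 2 ^ k)) * (ε + ε / 2 ^ k) ^ n)
        ≤ √(2 ^ (k + 1)) / ε ^ (n + 1) * (((n + 1 : ℕ) : ℝ) * (2 * (ε / 2 ^ k)) * (ε + ε) ^ n) := by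
          gcongr
      _ = _ := by
          rw [h2, h3, ← two_mul, mul_pow]
          field_simp
          ring
  · intro k
    exact (Measurable.const_mul (Measurable.ite (hms k) measurable_const measurable_const)
      _).aemeasurable

lemma mink_tsum {ρ : ℝ} (hρ : 1 ≤ ρ) (a b : ℕ → ℝ≥0∞) :
    (∑' i, (a i + b i) ^ ρ) ^ (1 / ρ) ≤ (∑' i, a i ^ ρ) ^ (1 / ρ) + (∑' i, b i ^ ρ) ^ (1 / ρ) := by
  have := ENNReal.lintegral_Lp_add_le (μ := (Measure.count : Measure ℕ)) (f := a) (g := b)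
    (measurable_of_countable _).aemeasurable (measurable_of_countable _).aemeasurable hρ
  simpa [lintegral_count] using this

lemma tsum_rpow_le {ι : Type*} {θ : ℝ} (hθ : 1 ≤ θ) (x : ι → ℝ≥0∞) :
    ∑' i, x i ^ θ ≤ (∑' i, x i) ^ θ := by
  by_cases hS : ∑' i, x i = ∞
  · rw [hS, ENNReal.top_rpow_of_pos (by linarith)]; exact le_top
  have hx : ∀ i, x i ≤ ∑' i, x i := ENNReal.le_tsum
  have split : ∀ a : ℝ≥0∞, a ^ θ = a * a ^ (θ - 1) := by
    intro a
    conv_lhs => rw [show θ = 1 + (θ - 1) by ring]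
    rw [ENNReal.rpow_add_of_nonneg _ _ (by norm_num) (by linarith), ENNReal.rpow_one]
  calc ∑' i, x i ^ θ = ∑' i, x i * x i ^ (θ - 1) := by simp_rw [split]
    _ ≤ ∑' i, x i * (∑' i, x i) ^ (θ - 1) := by
        refine ENNReal.tsum_le_tsum fun i => ?_
        exact mul_le_mul_right (ENNReal.rpow_le_rpow (hx i) (by linarith)) _
    _ = _ := by rw [ENNReal.tsum_mul_right, ← split]

lemma lp_le_lp {ι : Type*} {s ρ : ℝ} (hs : 0 < s) (hsρ : s ≤ ρ) (e : ι → ℝ≥0∞) :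
    (∑' i, e i ^ ρ) ^ (1 / ρ) ≤ (∑' i, e i ^ s) ^ (1 / s) := by
  have hρ : 0 < ρ := hs.trans_le hsρ
  have h := tsum_rpow_le (θ := ρ / s) (by rwa [one_le_div hs]) (fun i => e i ^ s)
  have e1 : ∀ i, (e i ^ s) ^ (ρ / s) = e i ^ ρ := by
    intro i; rw [← ENNReal.rpow_mul]; congr 1; field_simp
  simp_rw [e1] at h
  calc (∑' i, e i ^ ρ) ^ (1 / ρ) ≤ ((∑' i, e i ^ s) ^ (ρ / s)) ^ (1 / ρ) := by gcongr
    _ = _ := by rw [← ENNReal.rpow_mul]; congr 1; field_simp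

lemma cs_tsum {ι : Type*} [Countable ι] (x m : ι → ℝ≥0∞) (hm : ∀ j, m j ≠ 0) (hm' : ∀ j, m j ≠ ∞) :
    (∑' j, x j) ^ (2 : ℝ) ≤ (∑' j, x j * m j) * ∑' j, x j * (m j)⁻¹ := by
  letI : MeasurableSpace ι := ⊤
  have h := ENNReal.lintegral_mul_le_Lp_mul_Lq (Measure.count : Measure ι)
    (p := 2) (q := 2) (Real.HolderConjugate.two_two)
    (f := fun j => (x j * m j) ^ (1 / 2 : ℝ)) (g := fun j => (x j * (m j)⁻¹) ^ (1 / 2 : ℝ))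
    (measurable_from_top).aemeasurable (measurable_from_top).aemeasurable
  simp only [lintegral_count, Pi.mul_apply] at h
  have e1 : ∀ j, (x j * m j) ^ (1 / 2 : ℝ) * (x j * (m j)⁻¹) ^ (1 / 2 : ℝ) = x j := by
    intro j
    rw [← ENNReal.mul_rpow_of_nonneg _ _ (by norm_num)]
    have : x j * m j * (x j * (m j)⁻¹) = x j ^ (2 : ℝ) * (m j * (m j)⁻¹) := by
      rw [ENNReal.rpow_two]; ring
    rw [this, ENNReal.mul_inv_cancel (hm j) (hm' j), mul_one, ← ENNReal.rpow_mul]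
    norm_num
  have e2 : ∀ y : ℝ≥0∞, (y ^ (1 / 2 : ℝ)) ^ (2 : ℝ) = y := by
    intro y; rw [← ENNReal.rpow_mul]; norm_num
  simp_rw [e1, e2] at h
  calc (∑' j, x j) ^ (2 : ℝ) ≤ _ := ENNReal.rpow_le_rpow h (by norm_num)
    _ = _ := by rw [ENNReal.mul_rpow_of_nonneg _ _ (by norm_num), e2, e2]


/-! ### Part 3: basic facts on the variation operator -/

/-- Annulus. -/
def ann {d : ℕ} (x : Rd d) (a b : ℝ) : Set (Rd d) := {y | a < dist x y ∧ dist x y ≤ b}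

lemma far_meas {d : ℕ} (x : Rd d) (a : ℝ) : MeasurableSet {y : Rd d | a < dist x y} :=
  measurableSet_lt (by fun_prop) (by fun_prop)

lemma near_meas {d : ℕ} (x : Rd d) (a : ℝ) : MeasurableSet {y : Rd d | dist x y ≤ a} :=
  measurableSet_le (by fun_prop) (by fun_prop)

lemma ann_meas {d : ℕ} (x : Rd d) (a b : ℝ) : MeasurableSet (ann x a b) :=
  (far_meas x a).inter (near_meas x b)

lemma CZO.K_meas {d : ℕ} (S : CZO d) (x : Rd d) : Measurable (S.K x) :=
  S.measK.comp (measurable_const.prodMk measurable_id)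

lemma CZO.K_le {d : ℕ} (S : CZO d) {x y : Rd d} {a : ℝ} (ha : 0 < a) (h : a ≤ dist x y) :
    |S.K x y| ≤ S.Cst / a ^ d := by
  have hxy : 0 < dist x y := ha.trans_le h
  refine (S.size x y (dist_pos.1 hxy)).trans ?_
  have := S.hCst
  gcongr

lemma CZO.K_int {d : ℕ} (S : CZO d) {f : Rd d → ℝ} (hf : Integrable f) (x : Rd d) {a : ℝ}
    (ha : 0 < a) : IntegrableOn (fun y => S.K x y * f y) {y | a < dist x y} := by
  refine Integrable.mono' (g := fun y => S.Cst / a ^ d * |f y|) ?_ ?_ ?_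
  · exact (hf.norm.const_mul _).integrableOn
  · exact ((S.K_meas x).aestronglyMeasurable.mul hf.1).restrict
  · refine (ae_restrict_iff' (far_meas x a)).2 (ae_of_all _ fun y hy => ?_)
    rw [Real.norm_eq_abs, abs_mul]
    gcongr
    exact S.K_le ha (le_of_lt hy)

lemma CZO.trunc_sub {d : ℕ} (S : CZO d) {f : Rd d → ℝ} (hf : Integrable f) (x : Rd d) {a b : ℝ}
    (ha : 0 < a) (hab : a ≤ b) :
    S.trunc a f x - S.trunc b f x = ∫ y in ann x a b, S.K x y * f y := by
  unfold CZO.trunc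
  have e : {y : Rd d | a < dist x y} = ann x a b ∪ {y : Rd d | b < dist x y} := by
    ext y; simp only [ann, mem_union, mem_setOf_eq]
    constructor
    · intro h
      rcases le_or_gt (dist x y) b with h1 | h1
      · exact Or.inl ⟨h, h1⟩
      · exact Or.inr h1
    · rintro (h | h)
      · exact h.1
      · exact hab.trans_lt h
  have hi := S.K_int hf x ha
  rw [e, setIntegral_union _ (far_meas x b)]
  · ring
  · exact hi.mono_set (fun y hy => hy.1)
  · exact hi.mono_set (fun y hy => hab.trans_lt hy)
  · rw [Set.disjoint_left]
    intro y h1 h2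
    exact absurd h1.2 (not_le.2 h2)

lemma CZO.trunc_add {d : ℕ} (S : CZO d) {f g : Rd d → ℝ} (hf : Integrable f) (hg : Integrable g)
    (x : Rd d) {a : ℝ} (ha : 0 < a) :
    S.trunc a (fun y => f y + g y) x = S.trunc a f x + S.trunc a g x := by
  unfold CZO.trunc
  rw [← integral_add (S.K_int hf x ha) (S.K_int hg x ha)]
  congr 1; ext y; ring

lemma CZO.trunc_cont {d : ℕ} (S : CZO d) {f : Rd d → ℝ} (hf : Integrable f) (x : Rd d) {a : ℝ}
    (ha : 0 < a) : ContinuousWithinAt (fun ε => S.trunc ε f x) (Ici a) a := by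
  have e : ∀ ε, S.trunc ε f x =
      ∫ y, ({y : Rd d | ε < dist x y}).indicator (fun y => S.K x y * f y) y := by
    intro ε
    rw [integral_indicator (far_meas x ε)]; rfl
  unfold ContinuousWithinAt
  simp_rw [e]
  refine tendsto_integral_filter_of_dominated_convergence
    (fun y => ‖({y : Rd d | a < dist x y}).indicator (fun y => S.K x y * f y) y‖) ?_ ?_ ?_ ?_
  · refine Eventually.of_forall fun ε => ?_
    exact ((S.K_meas x).aestronglyMeasurable.mul hf.1).indicator (far_meas x ε)
  · filter_upwards [self_mem_nhdsWithin] with ε hε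
    refine ae_of_all _ fun y => ?_
    by_cases hy : ε < dist x y
    · have hy' : a < dist x y := lt_of_le_of_lt hε hy
      rw [indicator_of_mem (show y ∈ {y : Rd d | ε < dist x y} from hy),
        indicator_of_mem (show y ∈ {y : Rd d | a < dist x y} from hy')]
    · rw [indicator_of_notMem (show y ∉ {y : Rd d | ε < dist x y} from hy)]
      simp
  · exact ((integrable_indicator_iff (far_meas x a)).2 (S.K_int hf x ha)).norm
  · refine ae_of_all _ fun y => ?_
    refine tendsto_const_nhds.congr' ?_
    by_cases hy : a < dist x y
    · have : ∀ᶠ ε in nhdsWithin a (Ici a), ε < dist x y :=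
        mem_nhdsWithin_of_mem_nhds (Iio_mem_nhds hy)
      filter_upwards [this] with ε hε
      rw [indicator_of_mem (show y ∈ {y : Rd d | ε < dist x y} from hε),
        indicator_of_mem (show y ∈ {y : Rd d | a < dist x y} from hy)]
    · filter_upwards [self_mem_nhdsWithin] with ε hε
      have : ¬ ε < dist x y := fun h => hy (lt_of_le_of_lt hε h)
      rw [indicator_of_notMem (show y ∉ {y : Rd d | ε < dist x y} from this),
        indicator_of_notMem (show y ∉ {y : Rd d | a < dist x y} from hy)]

/-- finite variation sum -/
def CZO.vsum {d : ℕ} (S : CZO d) (ρ : ℝ) (f : Rd d → ℝ) (x : Rd d) (n : ℕ) (a : ℕ → ℝ) : ℝ≥0∞ :=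
  ∑ i ∈ Finset.range n, ENNReal.ofReal |S.trunc (a (i + 1)) f x - S.trunc (a i) f x| ^ ρ

lemma CZO.vsum_le_strict {d : ℕ} (S : CZO d) {ρ : ℝ} (hρ : 0 < ρ) (f : Rd d → ℝ) (x : Rd d) (n : ℕ)
    (a : ℕ → ℝ) (h1 : ∀ i < n, a (i + 1) < a i) (h2 : 0 < a n) :
    S.vsum ρ f x n a ≤ S.var ρ f x ^ ρ := by
  set b : ℕ → ℝ := fun i => if i ≤ n then a i else a n / ((i - n : ℕ) + 1) with hb
  have hbe : ∀ i, i ≤ n → b i = a i := fun i hi => by simp [hb, hi]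
  have hbt : ∀ i, b (i + n) = a n / (i + 1) := by
    intro i
    rcases Nat.eq_zero_or_pos i with h | h
    · subst h; simp [hb]
    · have : ¬ i + n ≤ n := by omega
      simp [hb, this]
  have hsa : StrictAnti b := by
    refine strictAnti_nat_of_succ_lt fun i => ?_
    rcases lt_or_ge i n with h | h
    · rw [hbe i h.le, hbe (i + 1) h]; exact h1 i h
    · obtain ⟨k, rfl⟩ : ∃ k, i = k + n := ⟨i - n, by omega⟩
      rw [hbt k, show k + n + 1 = (k + 1) + n by ring, hbt (k + 1)]
      push_cast
      gcongr
      linarith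
  have ht : Tendsto b atTop (nhds 0) := by
    rw [← tendsto_add_atTop_iff_nat n]
    simp_rw [hbt]
    exact tendsto_const_div_atTop_nhds_zero_nat (a n) |>.comp (tendsto_add_atTop_nat 1) |>.congr
      (fun i => by simp)
  have hpos : ∀ i, 0 < b i := by
    intro i
    rcases le_or_gt i n with h | h
    · have := hsa.antitone h
      rw [hbe n le_rfl] at this; linarith
    · obtain ⟨k, rfl⟩ : ∃ k, i = k + n := ⟨i - n, by omega⟩
      rw [hbt k]; positivity
  have key : (∑' i : ℕ, ENNReal.ofReal |S.trunc (b (i + 1)) f x - S.trunc (b i) f x| ^ ρ) ^ (1 / ρ)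
      ≤ S.var ρ f x := by
    unfold CZO.var
    exact le_iSup₂_of_le b ⟨hsa, hpos, ht⟩ le_rfl
  have key2 : (∑' i : ℕ, ENNReal.ofReal |S.trunc (b (i + 1)) f x - S.trunc (b i) f x| ^ ρ)
      ≤ S.var ρ f x ^ ρ := by
    have := ENNReal.rpow_le_rpow key hρ.le
    rwa [← ENNReal.rpow_mul, one_div_mul_cancel hρ.ne', ENNReal.rpow_one] at this
  refine le_trans ?_ key2
  refine le_trans (le_of_eq ?_) (ENNReal.sum_le_tsum (Finset.range n))
  unfold CZO.vsum
  refine Finset.sum_congr rfl fun i hi => ?_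
  rw [Finset.mem_range] at hi
  rw [hbe i hi.le, hbe (i + 1) hi]

lemma CZO.vsum_tendsto {d : ℕ} (S : CZO d) {ρ : ℝ} (hρ : 0 < ρ) {f : Rd d → ℝ} (hf : Integrable f)
    (x : Rd d) (n : ℕ) (a : ℕ → ℝ) (ha : ∀ i ≤ n, 0 < a i) (u : ℕ → ℕ → ℝ)
    (hu : ∀ i m, a i ≤ u m i) (hut : ∀ i, Tendsto (fun m => u m i) atTop (nhds (a i))) :
    Tendsto (fun m => S.vsum ρ f x n (u m)) atTop (nhds (S.vsum ρ f x n a)) := by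
  have ht : ∀ i ≤ n, Tendsto (fun m => S.trunc (u m i) f x) atTop (nhds (S.trunc (a i) f x)) := by
    intro i hi
    exact (S.trunc_cont hf x (ha i hi)).tendsto.comp
      (tendsto_nhdsWithin_iff.2 ⟨hut i, Eventually.of_forall fun m => hu i m⟩)
  unfold CZO.vsum
  refine tendsto_finsetSum _ fun i hi => ?_
  rw [Finset.mem_range] at hi
  refine (ENNReal.continuous_rpow_const.tendsto _).comp ?_
  refine (ENNReal.continuous_ofReal.tendsto _).comp ?_
  exact ((ht (i + 1) hi).sub (ht i hi.le)).abs

lemma CZO.vsum_le {d : ℕ} (S : CZO d) {ρ : ℝ} (hρ : 0 < ρ) {f : Rd d → ℝ} (hf : Integrable f)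
    (x : Rd d) (n : ℕ) (a : ℕ → ℝ) (h1 : ∀ i < n, a (i + 1) ≤ a i) (h2 : ∀ i ≤ n, 0 < a i) :
    S.vsum ρ f x n a ≤ S.var ρ f x ^ ρ := by
  have ht := S.vsum_tendsto hρ hf x n a h2 (fun m i => a i + (n - i : ℕ) * (1 / ((m : ℝ) + 1)))
    (fun i m => by
      have : (0 : ℝ) ≤ (n - i : ℕ) * (1 / ((m : ℝ) + 1)) := by positivity
      linarith)
    (fun i => by
      have := (tendsto_one_div_add_atTop_nhds_zero_nat (𝕜 := ℝ)).const_mul ((n - i : ℕ) : ℝ)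
      simpa using this.const_add (a i))
  refine le_of_tendsto ht (Eventually.of_forall fun m => ?_)
  refine S.vsum_le_strict hρ f x n _ (fun i hi => ?_) ?_
  · have e : ((n - i : ℕ) : ℝ) = ((n - (i + 1) : ℕ) : ℝ) + 1 := by
      rw [← Nat.cast_add_one]; congr 1; omega
    rw [e]
    have : (0 : ℝ) < 1 / ((m : ℝ) + 1) := by positivity
    have := h1 i hi
    simp only [add_mul, one_mul]
    linarith
  · simpa using h2 n le_rfl

lemma CZO.var_le_of_vsum {d : ℕ} (S : CZO d) {ρ : ℝ} (hρ : 0 < ρ) {f : Rd d → ℝ}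
    (x : Rd d) (R : ℝ≥0∞) (h : ∀ (n : ℕ) (a : ℕ → ℝ), StrictAnti a → (∀ i, 0 < a i) →
      S.vsum ρ f x n a ≤ R ^ ρ) : S.var ρ f x ≤ R := by
  unfold CZO.var
  refine iSup₂_le fun ε hε => ?_
  have : (∑' i : ℕ, ENNReal.ofReal |S.trunc (ε (i + 1)) f x - S.trunc (ε i) f x| ^ ρ) ≤ R ^ ρ :=
    ENNReal.tsum_le_of_sum_range_le fun n => h n ε hε.1 hε.2.1
  have := ENNReal.rpow_le_rpow this (z := 1 / ρ) (by positivity)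
  rwa [← ENNReal.rpow_mul, mul_one_div_cancel hρ.ne', ENNReal.rpow_one] at this

lemma CZO.trunc_meas {d : ℕ} (S : CZO d) {f : Rd d → ℝ} (hfm : Measurable f) (a : ℝ) :
    Measurable (S.trunc a f) := by
  have e : S.trunc a f = fun x =>
      ∫ y, ({z : Rd d × Rd d | a < dist z.1 z.2}).indicator
        (fun z => S.K z.1 z.2 * f z.2) (x, y) := by
    ext x
    unfold CZO.trunc
    rw [← integral_indicator (far_meas x a)]
    rfl
  rw [e]
  refine (StronglyMeasurable.integral_prod_right' (ν := (volume : Measure (Rd d))) ?_).measurable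
  refine Measurable.stronglyMeasurable ?_
  refine Measurable.indicator ?_ (measurableSet_lt (by fun_prop) (by fun_prop))
  exact S.measK.mul (hfm.comp measurable_snd)

lemma CZO.var_meas {d : ℕ} (S : CZO d) {ρ : ℝ} (hρ : 0 < ρ) {f : Rd d → ℝ} (hfm : Measurable f)
    (hf : Integrable f) : Measurable (S.var ρ f) := by
  let I := Σ n : ℕ, (Fin (n + 1) → ℚ)
  let sq : I → ℕ → ℝ := fun c i => (c.2 (Fin.ofNat (c.1 + 1) i) : ℝ)
  let P : I → Prop := fun c => (∀ i < c.1, sq c (i + 1) < sq c i) ∧ 0 < sq c c.1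
  have e : S.var ρ f = fun x => ⨆ (c : I), (if P c then S.vsum ρ f x c.1 (sq c) else 0) ^ (1 / ρ) := by
    ext x
    apply le_antisymm
    · refine S.var_le_of_vsum hρ x _ fun n a ha hpos => ?_
      choose u hu1 hu2 hu3 using fun i => Real.exists_seq_rat_strictAnti_tendsto (a i)
      have ht := S.vsum_tendsto hρ hf x n a (fun i _ => hpos i) (fun m i => (u i m : ℝ))
        (fun i m => (hu2 i m).le) hu3
      refine le_of_tendsto ht ?_
      have hev : ∀ᶠ m in atTop, ∀ i ∈ Finset.range n, (u (i + 1) m : ℝ) < u i m := by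
        rw [Filter.eventually_all_finset]
        intro i _
        exact (hu3 (i + 1)).eventually_lt (hu3 i) (ha (Nat.lt_succ_self i))
      filter_upwards [hev] with m hm
      let c : I := ⟨n, fun j => u j m⟩
      have hsq : ∀ i ≤ n, sq c i = u i m := by
        intro i hi
        simp only [sq, c, Fin.val_ofNat]
        rw [Nat.mod_eq_of_lt (by omega)]
      have hP : P c := by
        refine ⟨fun i hi => ?_, ?_⟩
        · have hi' : i < n := hi
          rw [hsq i hi'.le, hsq (i + 1) hi']
          exact hm i (Finset.mem_range.2 hi')
        · rw [show c.1 = n from rfl, hsq n le_rfl]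
          exact (hpos n).trans (hu2 n m)
      have h1 : S.vsum ρ f x n (fun i => (u i m : ℝ)) = S.vsum ρ f x c.1 (sq c) := by
        unfold CZO.vsum
        refine Finset.sum_congr rfl fun i hi => ?_
        rw [Finset.mem_range] at hi
        rw [hsq i hi.le, hsq (i + 1) hi]
      have h2 : (if P c then S.vsum ρ f x c.1 (sq c) else 0) ^ (1 / ρ) ≤
          ⨆ (c : I), (if P c then S.vsum ρ f x c.1 (sq c) else 0) ^ (1 / ρ) :=
        le_iSup (fun c : I => (if P c then S.vsum ρ f x c.1 (sq c) else 0) ^ (1 / ρ)) c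
      rw [if_pos hP, ← h1] at h2
      have := ENNReal.rpow_le_rpow h2 hρ.le
      rwa [← ENNReal.rpow_mul, one_div_mul_cancel hρ.ne', ENNReal.rpow_one] at this
    · refine iSup_le fun c => ?_
      split_ifs with hP
      · have := ENNReal.rpow_le_rpow (S.vsum_le_strict hρ f x c.1 (sq c) hP.1 hP.2)
          (z := 1 / ρ) (by positivity)
        rwa [← ENNReal.rpow_mul (S.var ρ f x), mul_one_div_cancel hρ.ne', ENNReal.rpow_one] at this
      · rw [ENNReal.zero_rpow_of_pos (by positivity)]; exact zero_le'
  rw [e]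
  refine Measurable.iSup fun c => ?_
  refine Measurable.pow_const ?_ _
  split_ifs
  · unfold CZO.vsum
    refine Finset.measurable_sum _ fun i _ => ?_
    refine Measurable.pow_const ?_ _
    exact ((S.trunc_meas hfm _).sub (S.trunc_meas hfm _)).abs.ennreal_ofReal
  · exact measurable_const

lemma CZO.var_add_le {d : ℕ} (S : CZO d) {ρ : ℝ} (hρ : 1 ≤ ρ) {f g : Rd d → ℝ}
    (hf : Integrable f) (hg : Integrable g) (x : Rd d) :
    S.var ρ (fun y => f y + g y) x ≤ S.var ρ f x + S.var ρ g x := by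
  unfold CZO.var
  refine iSup₂_le fun ε hε => ?_
  have hρ0 : 0 < ρ := by linarith
  calc _ ≤ (∑' i : ℕ, (ENNReal.ofReal |S.trunc (ε (i + 1)) f x - S.trunc (ε i) f x| +
        ENNReal.ofReal |S.trunc (ε (i + 1)) g x - S.trunc (ε i) g x|) ^ ρ) ^ (1 / ρ) := by
        gcongr with i
        rw [← ENNReal.ofReal_add (abs_nonneg _) (abs_nonneg _)]
        apply ENNReal.ofReal_le_ofReal
        rw [S.trunc_add hf hg x (hε.2.1 _), S.trunc_add hf hg x (hε.2.1 _)]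
        refine le_trans (le_of_eq ?_) (abs_add_le _ _)
        congr 1; ring
    _ ≤ _ := mink_tsum hρ _ _
    _ ≤ _ := add_le_add (le_iSup₂_of_le ε hε le_rfl) (le_iSup₂_of_le ε hε le_rfl)

lemma ann_disj {d : ℕ} (x : Rd d) {ε : ℕ → ℝ} (h : Antitone ε) :
    Pairwise (Function.onFun Disjoint fun i => ann x (ε (i + 1)) (ε i)) := by
  have key : ∀ i j : ℕ, i < j → Disjoint (ann x (ε (i + 1)) (ε i)) (ann x (ε (j + 1)) (ε j)) := by
    intro i j hij
    rw [Set.disjoint_left]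
    intro y h1 h2
    have := h (Nat.succ_le_of_lt hij)
    exact absurd (h1.1.trans_le h2.2) (not_lt.2 this)
  intro i j hij
  rcases lt_or_gt_of_ne hij with h | h
  · exact key i j h
  · exact (key j i h).symm

/-- Sum of integrals over the annuli is at most the total integral. -/
lemma ann_tsum_le {d : ℕ} (x : Rd d) {ε : ℕ → ℝ} (h : Antitone ε) (E : Set (Rd d))
    (u : Rd d → ℝ≥0∞) :
    ∑' i, ∫⁻ y in ann x (ε (i + 1)) (ε i), u y ≤ ∫⁻ y, u y := by
  rw [← lintegral_iUnion (fun i => ann_meas x _ _) (ann_disj x h)]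
  exact setLIntegral_le_lintegral _ _

lemma ofReal_abs_integral_le {α : Type*} [MeasurableSpace α] {μ : Measure α} (F : α → ℝ) :
    ENNReal.ofReal |∫ y, F y ∂μ| ≤ ∫⁻ y, ENNReal.ofReal |F y| ∂μ := by
  have := enorm_integral_le_lintegral_enorm (μ := μ) F
  simpa only [Real.enorm_eq_ofReal_abs] using this

lemma CZO.var_le_lint {d : ℕ} (S : CZO d) {ρ : ℝ} (hρ : 1 ≤ ρ) {f : Rd d → ℝ}
    (hf : Integrable f) (x : Rd d) :
    S.var ρ f x ≤ ∫⁻ y, ENNReal.ofReal |S.K x y * f y| := by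
  unfold CZO.var
  refine iSup₂_le fun ε hε => ?_
  refine (lp_le_lp one_pos hρ _).trans ?_
  simp only [ENNReal.rpow_one, div_one]
  refine le_trans (ENNReal.tsum_le_tsum fun i => ?_) (ann_tsum_le x hε.1.antitone univ _)
  rw [S.trunc_sub hf x (hε.2.1 _) (hε.1.antitone (Nat.le_succ i))]
  exact ofReal_abs_integral_le _

lemma CZO.var_far_le {d : ℕ} (S : CZO d) {ρ : ℝ} (hρ : 0 < ρ) {f : Rd d → ℝ}
    (hf : Integrable f) (x : Rd d) {h : ℝ} (hh : 0 < h) :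
    S.var ρ (({y : Rd d | h < dist x y}).indicator f) x ≤ S.var ρ f x := by
  refine S.var_le_of_vsum hρ x _ fun n a ha hpos => ?_
  have e : ∀ ε, S.trunc ε (({y : Rd d | h < dist x y}).indicator f) x = S.trunc (max ε h) f x := by
    intro ε
    unfold CZO.trunc
    rw [← integral_indicator (far_meas x _), ← integral_indicator (far_meas x _)]
    congr 1; ext y
    simp only [indicator, mem_setOf_eq, max_lt_iff]
    split_ifs <;> simp_all
  have := S.vsum_le hρ hf x n (fun i => max (a i) h)
    (fun i _ => max_le_max (ha (Nat.lt_succ_self i)).le le_rfl) (fun i _ => lt_max_of_lt_right hh)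
  refine le_trans (le_of_eq ?_) this
  unfold CZO.vsum
  simp_rw [e]


/-! ### Part 4: the pointwise estimate with the Hardy-Littlewood maximal function -/

lemma coord_le_dist {d : ℕ} (x y : Rd d) (i : Fin d) : |x i - y i| ≤ dist x y := by
  rw [EuclideanSpace.dist_eq, ← Real.dist_eq]
  refine Real.le_sqrt_of_sq_le ?_
  exact Finset.single_le_sum (f := fun i => dist (x i) (y i) ^ 2) (fun j _ => by positivity)
    (Finset.mem_univ i)

lemma dist_le_of_coord {d : ℕ} (x y : Rd d) {a : ℝ} (ha : 0 ≤ a) (h : ∀ i, |x i - y i| ≤ a) :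
    dist x y ≤ √d * a := by
  rw [EuclideanSpace.dist_eq]
  calc √(∑ i, dist (x i) (y i) ^ 2) ≤ √(∑ _i : Fin d, a ^ 2) := by
        gcongr with i
        rw [Real.dist_eq]; exact h i
    _ = √d * a := by
        simp [Real.sqrt_sq ha]

lemma meas_box {d : ℕ} (a b : Fin d → ℝ) : MeasurableSet {y : Rd d | ∀ i, a i ≤ y i ∧ y i < b i} := by
  have : {y : Rd d | ∀ i, a i ≤ y i ∧ y i < b i} =
      ⋂ i, ((fun y : Rd d => y i) ⁻¹' (Ico (a i) (b i))) := by
    ext y; simp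
  rw [this]
  refine MeasurableSet.iInter fun i => ?_
  exact measurableSet_Ico.preimage (by fun_prop)

lemma Cube.meas_set {d : ℕ} (Q : Cube d) : MeasurableSet Q.set := meas_box _ _

lemma Cube.meas_dilate {d : ℕ} (Q : Cube d) (t : ℝ) : MeasurableSet (Q.dilate t) := meas_box _ _

lemma Cube.dist_le {d : ℕ} (Q : Cube d) {x y : Rd d} (hx : x ∈ Q.set) (hy : y ∈ Q.set) :
    dist x y ≤ √d * Q.l := by
  refine dist_le_of_coord x y Q.hl.le fun i => ?_
  have h1 := hx i
  have h2 := hy i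
  rw [abs_le]; constructor <;> linarith

lemma Cube.dist_le_three {d : ℕ} (Q : Cube d) {x y : Rd d} (hx : x ∈ Q.set)
    (hy : y ∈ Q.dilate 3) : dist x y ≤ √d * (2 * Q.l) := by
  have := Q.hl
  refine dist_le_of_coord x y (by linarith) fun i => ?_
  have h1 := hx i
  have h2 := hy i
  rw [abs_le]; constructor <;> linarith

lemma Cube.le_dist {d : ℕ} (Q : Cube d) {x y : Rd d} (hx : x ∈ Q.set)
    (hy : y ∉ Q.dilate 3) : Q.l ≤ dist x y := by
  simp only [Cube.dilate, mem_ofPred_eq, not_forall, not_and_or, not_le, not_lt] at hy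
  obtain ⟨i, hi⟩ := hy
  have h1 := hx i
  refine le_trans ?_ (coord_le_dist x y i)
  rcases hi with hi | hi
  · exact le_trans (by linarith) (le_abs_self _)
  · exact le_trans (by linarith) (neg_le_abs _)

lemma one_le_sqrt_d {d : ℕ} (hd : 0 < d) : 1 ≤ √(d : ℝ) := by
  rw [Real.one_le_sqrt]; exact_mod_cast hd

lemma jensen_w {α : Type*} [MeasurableSpace α] {μ : Measure α} {r : ℝ} (hr : 1 < r)
    {m v : α → ℝ≥0∞} (hm : Measurable m) (hv : Measurable v) :
    (∫⁻ y, m y * v y ∂μ) ^ r ≤ (∫⁻ y, m y ∂μ) ^ (r - 1) * ∫⁻ y, m y * v y ^ r ∂μ := by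
  have hr0 : 0 < r := by linarith
  have hr1 : 0 < r - 1 := by linarith
  have hc : (r / (r - 1)).HolderConjugate r := by
    rw [Real.holderConjugate_iff]
    refine ⟨by rw [one_lt_div hr1]; linarith, ?_⟩
    field_simp
    ring
  have h := ENNReal.lintegral_mul_le_Lp_mul_Lq μ hc
    (f := fun y => m y ^ ((r - 1) / r)) (g := fun y => m y ^ (1 / r) * v y)
    (hm.pow_const _).aemeasurable ((hm.pow_const _).mul hv).aemeasurable
  have e1 : ∀ y, m y ^ ((r - 1) / r) * (m y ^ (1 / r) * v y) = m y * v y := by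
    intro y
    rw [← mul_assoc, ← ENNReal.rpow_add_of_nonneg _ _ (by positivity) (by positivity)]
    congr 1
    rw [← add_div, sub_add_cancel, div_self hr0.ne', ENNReal.rpow_one]
  have e2 : ∀ y, (m y ^ ((r - 1) / r)) ^ (r / (r - 1)) = m y := by
    intro y
    rw [← ENNReal.rpow_mul, show (r - 1) / r * (r / (r - 1)) = 1 by field_simp, ENNReal.rpow_one]
  have e3 : ∀ y, (m y ^ (1 / r) * v y) ^ r = m y * v y ^ r := by
    intro y
    rw [ENNReal.mul_rpow_of_nonneg _ _ hr0.le, ← ENNReal.rpow_mul, one_div_mul_cancel hr0.ne',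
      ENNReal.rpow_one]
  simp only [Pi.mul_apply] at h
  simp_rw [e1, e2, e3] at h
  have h2 := ENNReal.rpow_le_rpow h hr0.le
  rw [ENNReal.mul_rpow_of_nonneg _ _ hr0.le, ← ENNReal.rpow_mul, ← ENNReal.rpow_mul,
    one_div_mul_cancel hr0.ne', ENNReal.rpow_one,
    show 1 / (r / (r - 1)) * r = r - 1 by field_simp] at h2
  exact h2

/-- Hölder estimate on a thin layer. -/
lemma layer_holder {d : ℕ} (hd : 0 < d) {r : ℝ} (hr : 1 < r) (x : Rd d) {h : ℝ} (hh : 0 < h)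
    {e1 e2 : ℝ} (he1 : 0 < e1) (he2 : 0 < e2) {D : Set (Rd d)} (hD : MeasurableSet D)
    (hDs : ∀ y ∈ D, h < dist x y ∧ (|dist x y - e1| ≤ h ∨ |dist x y - e2| ≤ h))
    {u : Rd d → ℝ≥0∞} (hu : Measurable u) :
    (∫⁻ y in D, (ENNReal.ofReal (dist x y ^ d))⁻¹ * u y) ^ r ≤
      (2 * (ENNReal.ofReal (3 ^ (d - 1) * d * 2) * vB d)) ^ (r - 1) *
      ∫⁻ y in D, Psi d (fun k => ENNReal.ofReal (((2 ^ k)⁻¹ : ℝ) ^ (r - 1))) h (dist x y) * u y ^ r := by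
  set m : Rd d → ℝ≥0∞ := fun y => (ENNReal.ofReal (dist x y ^ (d - 1)))⁻¹ with hm
  set v : Rd d → ℝ≥0∞ := fun y => (ENNReal.ofReal (dist x y))⁻¹ * u y with hv
  set c := ENNReal.ofReal (3 ^ (d - 1) * d * 2) * vB d with hc
  have hmm : Measurable m := by
    rw [hm]
    exact (Measurable.ennreal_ofReal (by fun_prop)).inv
  have hvm : Measurable v := by
    rw [hv]
    exact (Measurable.ennreal_ofReal (by fun_prop)).inv.mul hu
  have s1 : (∫⁻ y in D, (ENNReal.ofReal (dist x y ^ d))⁻¹ * u y) = ∫⁻ y in D, m y * v y := by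
    refine setLIntegral_congr_fun hD fun y hy => ?_
    have hw : 0 < dist x y := hh.trans (hDs y hy).1
    simp only [hm, hv]
    rw [← mul_assoc, ← ENNReal.mul_inv (Or.inr ENNReal.ofReal_ne_top) (Or.inl ENNReal.ofReal_ne_top),
      ← ENNReal.ofReal_mul (by positivity), ← pow_succ, Nat.sub_add_cancel hd]
  rw [s1]
  refine (jensen_w hr hmm hvm).trans ?_
  have s2 : ∫⁻ y in D, m y ≤ 2 * c * ENNReal.ofReal h := by
    have hsub : D ⊆ {y | |dist x y - e1| ≤ h ∧ h < dist x y} ∪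
        {y | |dist x y - e2| ≤ h ∧ h < dist x y} := by
      intro y hy
      obtain ⟨h1, h2⟩ := hDs y hy
      rcases h2 with h2 | h2
      · exact Or.inl ⟨h2, h1⟩
      · exact Or.inr ⟨h2, h1⟩
    refine (lintegral_mono_set hsub).trans ((lintegral_union_le _ _ _).trans ?_)
    refine (add_le_add (layerA hd x he1 hh) (layerA hd x he2 hh)).trans (le_of_eq ?_)
    rw [hc]; ring
  have s3 : ∫⁻ y in D, m y * v y ^ r ≤ (ENNReal.ofReal h)⁻¹ ^ (r - 1) *
      ∫⁻ y in D, Psi d (fun k => ENNReal.ofReal (((2 ^ k)⁻¹ : ℝ) ^ (r - 1))) h (dist x y) * u y ^ r := by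
    have hne : (ENNReal.ofReal h)⁻¹ ^ (r - 1) ≠ ∞ := by
      refine ENNReal.rpow_ne_top_of_nonneg (by linarith) (ENNReal.inv_ne_top.2 ?_)
      rw [ENNReal.ofReal_ne_zero_iff]; exact hh
    rw [← lintegral_const_mul' _ _ hne]
    refine setLIntegral_mono' hD fun y hy => ?_
    have hwh := (hDs y hy).1
    have hw : 0 < dist x y := hh.trans hwh
    have hφ : MonotoneOn (fun t : ℝ => t ^ (r - 1)) (Ici 0) := fun a ha b _ hab =>
      Real.rpow_le_rpow ha hab (by linarith)
    have hP := Psi_ge (d := d) hφ hh hwh.le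
    refine le_trans (le_of_eq ?_) (mul_le_mul_right (mul_le_mul_left hP _) _)
    simp only [hm, hv]
    rw [ENNReal.mul_rpow_of_nonneg _ _ (by linarith : 0 ≤ r), ← mul_assoc, ← mul_assoc]
    congr 1
    rw [← ENNReal.ofReal_inv_of_pos (by positivity), ← ENNReal.ofReal_inv_of_pos hw,
      ← ENNReal.ofReal_inv_of_pos hh, ENNReal.ofReal_rpow_of_nonneg (by positivity) (by linarith),
      ENNReal.ofReal_rpow_of_nonneg (by positivity) (by linarith), ← ENNReal.ofReal_mul (by positivity),
      ← ENNReal.ofReal_mul (by positivity)]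
    congr 1
    rw [Real.div_rpow hh.le hw.le, Real.inv_rpow hw.le, Real.inv_rpow hh.le]
    have e1 : dist x y ^ r = dist x y ^ (r - 1) * dist x y := by
      conv_lhs => rw [show r = (r - 1) + 1 by ring, Real.rpow_add hw, Real.rpow_one]
    have e2 : dist x y ^ d = dist x y ^ (d - 1) * dist x y := by
      rw [← pow_succ, Nat.sub_add_cancel hd]
    rw [e1, e2]
    have := Real.rpow_pos_of_pos hw (r - 1)
    have := Real.rpow_pos_of_pos hh (r - 1)
    field_simp
  refine (mul_le_mul' (ENNReal.rpow_le_rpow s2 (by linarith)) s3).trans (le_of_eq ?_)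
  rw [← mul_assoc, ENNReal.mul_rpow_of_nonneg _ _ (by linarith : 0 ≤ r - 1), mul_assoc ((2 * c) ^ (r - 1)),
    ← ENNReal.mul_rpow_of_nonneg _ _ (by linarith : 0 ≤ r - 1),
    ENNReal.mul_inv_cancel (by rw [ENNReal.ofReal_ne_zero_iff]; exact hh) ENNReal.ofReal_ne_top,
    ENNReal.one_rpow, mul_one]

lemma ofReal_abs_indicator {α : Type*} (A : Set α) (G : α → ℝ) (y : α) :
    ENNReal.ofReal |A.indicator G y| = A.indicator (fun y => ENNReal.ofReal |G y|) y := by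
  by_cases hy : y ∈ A <;> simp [hy]

/-- splitting of a difference of integrals over two sets -/
lemma diff_two {α : Type*} [MeasurableSpace α] {μ : Measure α} {G H : α → ℝ} (hG : Integrable G μ)
    (hH : Integrable H μ) {A B : Set α} (hA : MeasurableSet A) (hB : MeasurableSet B) :
    ENNReal.ofReal |∫ y in A, G y ∂μ| ≤ ENNReal.ofReal |∫ y in B, H y ∂μ| +
      (∫⁻ y in A, ENNReal.ofReal |G y - H y| ∂μ +
        ∫⁻ y in (A \ B) ∪ (B \ A), ENNReal.ofReal |H y| ∂μ) := by
  have hgi : ∀ s, IntegrableOn G s μ := fun s => hG.integrableOn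
  have hhi : ∀ s, IntegrableOn H s μ := fun s => hH.integrableOn
  have e1 : ∫ y in A, G y ∂μ = ∫ y in A, (G y - H y) ∂μ + ∫ y in A, H y ∂μ := by
    rw [integral_sub (hgi A) (hhi A)]; ring
  have e2 : ∫ y in A, H y ∂μ = ∫ y in A ∩ B, H y ∂μ + ∫ y in A \ B, H y ∂μ :=
    (integral_inter_add_sdiff hB (hhi A)).symm
  have e3 : ∫ y in B, H y ∂μ = ∫ y in A ∩ B, H y ∂μ + ∫ y in B \ A, H y ∂μ := by
    rw [inter_comm]; exact (integral_inter_add_sdiff hA (hhi B)).symm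
  have hre : |∫ y in A, G y ∂μ| ≤ |∫ y in B, H y ∂μ| + (|∫ y in A, (G y - H y) ∂μ| +
      (|∫ y in A \ B, H y ∂μ| + |∫ y in B \ A, H y ∂μ|)) := by
    rw [show ∫ y in A, G y ∂μ = ∫ y in B, H y ∂μ + (∫ y in A, (G y - H y) ∂μ +
      (∫ y in A \ B, H y ∂μ - ∫ y in B \ A, H y ∂μ)) by rw [e1, e2, e3]; ring]
    refine (abs_add_le _ _).trans (add_le_add_right ((abs_add_le _ _).trans
      (add_le_add_right (abs_sub _ _) _)) _)
  refine (ENNReal.ofReal_le_ofReal hre).trans ?_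
  rw [ENNReal.ofReal_add (by positivity) (by positivity),
    ENNReal.ofReal_add (by positivity) (by positivity),
    ENNReal.ofReal_add (by positivity) (by positivity)]
  refine add_le_add_right (add_le_add (ofReal_abs_integral_le _) ?_) _
  rw [lintegral_union (hB.diff hA) (disjoint_sdiff_left.mono_right sdiff_subset |>.symm.symm)]
  exact add_le_add (ofReal_abs_integral_le _) (ofReal_abs_integral_le _)


lemma CZO.Kf_int {d : ℕ} (S : CZO d) {f : Rd d → ℝ} (hf : Integrable f) (ξ : Rd d) {a : ℝ}
    (ha : 0 < a) (hz : ∀ y, dist ξ y ≤ a → f y = 0) : Integrable (fun y => S.K ξ y * f y) := by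
  have h := (integrable_indicator_iff (far_meas ξ a)).2 (S.K_int hf ξ ha)
  refine h.congr (ae_of_all _ fun y => ?_)
  by_cases hy : a < dist ξ y
  · rw [indicator_of_mem (show y ∈ {y : Rd d | a < dist ξ y} from hy)]
  · rw [indicator_of_notMem (show y ∉ {y : Rd d | a < dist ξ y} from hy)]
    simp only [hz y (not_lt.1 hy), mul_zero]

/-- Comparison of the variation at two nearby points. -/
lemma CZO.var_shift {d : ℕ} (hd : 0 < d) (S : CZO d) {ρ : ℝ} (hρ : 1 ≤ ρ) {r : ℝ} (hr : 1 < r)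
    (hrρ : r ≤ ρ) : ∃ C : ℝ≥0∞, C ≠ ∞ ∧ ∀ (f : Rd d → ℝ), Measurable f → Integrable f →
      ∀ (x ξ : Rd d) (h : ℝ), 0 < h → dist x ξ ≤ h / 2 → (∀ y, dist x y ≤ h → f y = 0) →
      S.var ρ f ξ ≤ S.var ρ f x + (C * HL (fun y => ENNReal.ofReal |f y|) x +
        C * HL (fun y => ENNReal.ofReal |f y| ^ r) x ^ (1 / r)) := by
  set C1 : ℝ≥0∞ := ENNReal.ofReal S.Cst *
    (ENNReal.ofReal (2 ^ d) * ∑' k : ℕ, ENNReal.ofReal (S.ω ((2 ^ k)⁻¹))) with hC1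
  set cc := (2 * (ENNReal.ofReal (3 ^ (d - 1) * d * 2) * vB d)) ^ (r - 1) with hcc
  set PC := ENNReal.ofReal (2 ^ d) * ∑' k : ℕ, ENNReal.ofReal (((2 ^ k)⁻¹ : ℝ) ^ (r - 1)) with hPC
  set C2 : ℝ≥0∞ := ENNReal.ofReal S.Cst ^ r * (cc * (2 * PC)) with hC2
  have hr0 : 0 < r := by linarith
  have hccf : cc ≠ ∞ := ENNReal.rpow_ne_top_of_nonneg (by linarith)
    (ENNReal.mul_ne_top (by simp) (ENNReal.mul_ne_top ENNReal.ofReal_ne_top (vB_ne_top d)))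
  have hPCf : PC ≠ ∞ := ENNReal.mul_ne_top ENNReal.ofReal_ne_top (tsum_pow_ne_top (by linarith))
  have hC1f : C1 ≠ ∞ := ENNReal.mul_ne_top ENNReal.ofReal_ne_top
    (ENNReal.mul_ne_top ENNReal.ofReal_ne_top S.tsum_ω_ne_top)
  have hC2f : C2 ≠ ∞ := ENNReal.mul_ne_top
    (ENNReal.rpow_ne_top_of_nonneg hr0.le ENNReal.ofReal_ne_top)
    (ENNReal.mul_ne_top hccf (ENNReal.mul_ne_top (by simp) hPCf))
  refine ⟨C1 + C2 ^ (1 / r), ENNReal.add_ne_top.2 ⟨hC1f,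
    ENNReal.rpow_ne_top_of_nonneg (by positivity) hC2f⟩, ?_⟩
  intro f hfm hf x ξ h hh hxξ hz
  have hdist : ∀ y, |dist x y - dist ξ y| ≤ h / 2 := fun y => by
    refine (abs_dist_sub_le x ξ y).trans hxξ
  have hz' : ∀ y, dist ξ y ≤ h / 2 → f y = 0 := by
    intro y hy
    refine hz y ?_
    have := abs_le.1 (hdist y)
    linarith [this.2]
  set G : Rd d → ℝ := fun y => S.K ξ y * f y with hG
  set H : Rd d → ℝ := fun y => S.K x y * f y with hH
  have hGi : Integrable G := S.Kf_int hf ξ (by linarith : 0 < h / 2) hz'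
  have hHi : Integrable H := S.Kf_int hf x hh hz
  -- the smooth part
  have hsm : ∫⁻ y, ENNReal.ofReal |G y - H y| ≤ C1 * HL (fun y => ENNReal.ofReal |f y|) x := by
    have h1 : ∀ y, ENNReal.ofReal |G y - H y| ≤ ENNReal.ofReal S.Cst *
        (Psi d (fun k => ENNReal.ofReal (S.ω ((2 ^ k)⁻¹))) h (dist x y) * ENNReal.ofReal |f y|) := by
      intro y
      by_cases hy : dist x y ≤ h
      · simp [hG, hH, hz y hy]
      rw [not_le] at hy
      have hw : 0 < dist x y := hh.trans hy
      have hsmooth := S.smooth x ξ y (dist_pos.1 hw) (by linarith)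
      have h2 : |S.K ξ y - S.K x y| ≤ S.Cst * (S.ω (h / dist x y) / dist x y ^ d) := by
        rw [abs_sub_comm]
        have h3 := abs_nonneg (S.K y x - S.K y ξ)
        have h4 : S.ω (dist x ξ / dist x y) ≤ S.ω (h / dist x y) := by
          refine S.ω_mono (mem_Ici.2 (by positivity)) (mem_Ici.2 (by positivity)) ?_
          gcongr; linarith
        have h5 : S.Cst * S.ω (dist x ξ / dist x y) / dist x y ^ d ≤
            S.Cst * (S.ω (h / dist x y) / dist x y ^ d) := by
          rw [mul_div_assoc]
          have := S.hCst
          gcongr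
        linarith
      have h6 : |G y - H y| ≤ S.Cst * (S.ω (h / dist x y) / dist x y ^ d) * |f y| := by
        rw [hG, hH]
        simp only
        rw [← sub_mul, abs_mul]
        gcongr
      have hω : 0 ≤ S.ω (h / dist x y) := S.ω_nonneg (by positivity)
      refine (ENNReal.ofReal_le_ofReal h6).trans ?_
      rw [mul_assoc, ENNReal.ofReal_mul S.hCst.le, ENNReal.ofReal_mul (by positivity)]
      refine mul_le_mul_right (mul_le_mul_left (Psi_ge S.ω_mono hh hy.le) _) _
    refine (lintegral_mono h1).trans ?_
    rw [lintegral_const_mul' _ _ ENNReal.ofReal_ne_top, hC1, mul_assoc]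
    exact mul_le_mul_right (Psi_lint _ hh x _ hfm.abs.ennreal_ofReal) _
  unfold CZO.var
  refine iSup₂_le fun ε hε => ?_
  set A : ℕ → Set (Rd d) := fun i => ann ξ (ε (i + 1)) (ε i) with hA
  set B : ℕ → Set (Rd d) := fun i => ann x (ε (i + 1)) (ε i) with hB
  set D : ℕ → Set (Rd d) := fun i => (A i \ B i) ∪ (B i \ A i) with hD
  have hAm : ∀ i, MeasurableSet (A i) := fun i => ann_meas _ _ _
  have hBm : ∀ i, MeasurableSet (B i) := fun i => ann_meas _ _ _
  have hDm : ∀ i, MeasurableSet (D i) := fun i =>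
    ((hAm i).diff (hBm i)).union ((hBm i).diff (hAm i))
  have hle : ∀ i, ε (i + 1) ≤ ε i := fun i => hε.1.antitone (Nat.le_succ i)
  -- bound on the layers
  have hq : ∀ i, (∫⁻ y in D i, ENNReal.ofReal |H y|) ^ r ≤ ENNReal.ofReal S.Cst ^ r * (cc *
      ∫⁻ y in D i, Psi d (fun k => ENNReal.ofReal (((2 ^ k)⁻¹ : ℝ) ^ (r - 1))) h (dist x y) *
        ENNReal.ofReal |f y| ^ r) := by
    intro i
    set D' := D i ∩ {y | h < dist x y} with hD'
    have hD'm : MeasurableSet D' := (hDm i).inter (far_meas x h)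
    have h1 : ∫⁻ y in D i, ENNReal.ofReal |H y| ≤ ENNReal.ofReal S.Cst *
        ∫⁻ y in D', (ENNReal.ofReal (dist x y ^ d))⁻¹ * ENNReal.ofReal |f y| := by
      rw [← lintegral_const_mul' _ _ ENNReal.ofReal_ne_top, ← lintegral_indicator (hDm i),
        ← lintegral_indicator hD'm]
      refine lintegral_mono fun y => ?_
      by_cases hy : y ∈ D i
      · by_cases hyh : h < dist x y
        · have hw : 0 < dist x y := hh.trans hyh
          rw [indicator_of_mem hy, indicator_of_mem (show y ∈ D' from ⟨hy, hyh⟩),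
            ← ENNReal.ofReal_inv_of_pos (by positivity), ← ENNReal.ofReal_mul (by positivity),
            ← ENNReal.ofReal_mul S.hCst.le]
          apply ENNReal.ofReal_le_ofReal
          rw [hH]; simp only
          rw [abs_mul, ← mul_assoc]
          gcongr
          rw [← div_eq_mul_inv]
          exact S.size x y (dist_pos.1 hw)
        · rw [indicator_of_mem hy]
          simp [hH, hz y (not_lt.1 hyh)]
      · rw [indicator_of_notMem hy]; exact zero_le
    refine (ENNReal.rpow_le_rpow h1 hr0.le).trans ?_
    rw [ENNReal.mul_rpow_of_nonneg _ _ hr0.le]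
    refine mul_le_mul_right ?_ _
    refine (layer_holder hd hr x hh (hε.2.1 (i + 1)) (hε.2.1 i) hD'm ?_
      hfm.abs.ennreal_ofReal).trans ?_
    · rintro y ⟨hy, hyh⟩
      refine ⟨hyh, ?_⟩
      have h2 := abs_le.1 (hdist y)
      have h3 := hle i
      rcases hy with ⟨ha, hb⟩ | ⟨hb, ha⟩
      · have ha1 : ε (i + 1) < dist ξ y := ha.1
        have ha2 : dist ξ y ≤ ε i := ha.2
        by_cases hc : ε (i + 1) < dist x y
        · have hc2 : ε i < dist x y := by
            by_contra hcon
            exact hb ⟨hc, not_lt.1 hcon⟩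
          right; rw [abs_le]; constructor <;> linarith [h2.1, h2.2]
        · rw [not_lt] at hc
          left; rw [abs_le]; constructor <;> linarith [h2.1, h2.2]
      · have hb1 : ε (i + 1) < dist x y := hb.1
        have hb2 : dist x y ≤ ε i := hb.2
        by_cases hc : ε (i + 1) < dist ξ y
        · have hc2 : ε i < dist ξ y := by
            by_contra hcon
            exact ha ⟨hc, not_lt.1 hcon⟩
          right; rw [abs_le]; constructor <;> linarith [h2.1, h2.2]
        · rw [not_lt] at hc
          left; rw [abs_le]; constructor <;> linarith [h2.1, h2.2]
    · refine mul_le_mul_right (lintegral_mono_set inter_subset_left) _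
  have hqs : ∑' i, (∫⁻ y in D i, ENNReal.ofReal |H y|) ^ r ≤
      C2 * HL (fun y => ENNReal.ofReal |f y| ^ r) x := by
    refine (ENNReal.tsum_le_tsum hq).trans ?_
    rw [ENNReal.tsum_mul_left, ENNReal.tsum_mul_left, hC2, mul_assoc, mul_assoc]
    refine mul_le_mul_right (mul_le_mul_right ?_ _) _
    set u : Rd d → ℝ≥0∞ := fun y => Psi d (fun k => ENNReal.ofReal (((2 ^ k)⁻¹ : ℝ) ^ (r - 1))) h
      (dist x y) * ENNReal.ofReal |f y| ^ r with hu
    have h1 : ∫⁻ y, u y ≤ PC * HL (fun y => ENNReal.ofReal |f y| ^ r) x :=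
      Psi_lint _ hh x _ (hfm.abs.ennreal_ofReal.pow_const r)
    calc ∑' i, ∫⁻ y in D i, u y ≤ ∑' i, ((∫⁻ y in A i, u y) + ∫⁻ y in B i, u y) := by
          refine ENNReal.tsum_le_tsum fun i => ?_
          refine (lintegral_union_le _ _ _).trans ?_
          exact add_le_add (lintegral_mono_set sdiff_subset) (lintegral_mono_set sdiff_subset)
      _ = (∑' i, ∫⁻ y in A i, u y) + ∑' i, ∫⁻ y in B i, u y := ENNReal.tsum_add
      _ ≤ (∫⁻ y, u y) + ∫⁻ y, u y := add_le_add (ann_tsum_le ξ hε.1.antitone univ u)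
          (ann_tsum_le x hε.1.antitone univ u)
      _ = 2 * ∫⁻ y, u y := by ring
      _ ≤ _ := by rw [mul_assoc]; exact mul_le_mul_right h1 _
  have hterm : ∀ i, ENNReal.ofReal |S.trunc (ε (i + 1)) f ξ - S.trunc (ε i) f ξ| ≤
      ENNReal.ofReal |S.trunc (ε (i + 1)) f x - S.trunc (ε i) f x| +
      ((∫⁻ y in A i, ENNReal.ofReal |G y - H y|) + ∫⁻ y in D i, ENNReal.ofReal |H y|) := by
    intro i
    rw [S.trunc_sub hf ξ (hε.2.1 _) (hle i), S.trunc_sub hf x (hε.2.1 _) (hle i)]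
    exact diff_two hGi hHi (hAm i) (hBm i)
  have hρ0 : 0 < ρ := by linarith
  calc _ ≤ (∑' i : ℕ, (ENNReal.ofReal |S.trunc (ε (i + 1)) f x - S.trunc (ε i) f x| +
      ((∫⁻ y in A i, ENNReal.ofReal |G y - H y|) +
        ∫⁻ y in D i, ENNReal.ofReal |H y|)) ^ ρ) ^ (1 / ρ) := by
        gcongr with i
        exact hterm i
    _ ≤ _ := mink_tsum hρ _ _
    _ ≤ _ := add_le_add (le_iSup₂_of_le ε hε le_rfl) (mink_tsum hρ _ _)
    _ ≤ _ := by
        refine add_le_add_right (add_le_add ?_ ?_) _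
        · refine (lp_le_lp one_pos hρ _).trans ?_
          simp only [ENNReal.rpow_one, div_one]
          refine (ann_tsum_le ξ hε.1.antitone univ _).trans (hsm.trans ?_)
          exact mul_le_mul_left le_self_add _
        · refine (lp_le_lp hr0 hrρ _).trans ?_
          refine (ENNReal.rpow_le_rpow hqs (by positivity)).trans ?_
          rw [ENNReal.mul_rpow_of_nonneg _ _ (by positivity)]
          exact mul_le_mul_left le_add_self _


lemma HL_measurable {d : ℕ} {u : Rd d → ℝ≥0∞} (hu : Measurable u) : Measurable (HL u) := by
  have hball : ∀ r : ℝ, Measurable fun x : Rd d => ∫⁻ y in Metric.closedBall x r, u y := by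
    intro r
    have e : (fun x : Rd d => ∫⁻ y in Metric.closedBall x r, u y) = fun x =>
        ∫⁻ y, ({z : Rd d × Rd d | dist z.2 z.1 ≤ r}).indicator (fun z => u z.2) (x, y) := by
      ext x
      rw [← lintegral_indicator measurableSet_closedBall]
      rfl
    rw [e]
    refine Measurable.lintegral_prod_right' (ν := (volume : Measure (Rd d))) ?_
    exact (hu.comp measurable_snd).indicator (measurableSet_le (by fun_prop) (by fun_prop))
  have e : HL u = fun x => ⨆ q : ℚ, (if (0 : ℝ) < q then (ENNReal.ofReal ((q : ℝ) ^ d))⁻¹ else 0) *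
      ∫⁻ y in Metric.closedBall x q, u y := by
    ext x
    unfold HL
    apply le_antisymm
    · refine iSup₂_le fun r hr => ?_
      obtain ⟨v, _, hv2, hv3⟩ := Real.exists_seq_rat_strictAnti_tendsto r
      have ht : Tendsto (fun n => (ENNReal.ofReal ((v n : ℝ) ^ d))⁻¹ *
          ∫⁻ y in Metric.closedBall x r, u y) atTop (nhds ((ENNReal.ofReal (r ^ d))⁻¹ *
          ∫⁻ y in Metric.closedBall x r, u y)) := by
        refine ENNReal.Tendsto.mul_const ?_ (Or.inl ?_)
        · exact ENNReal.tendsto_inv_iff.2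
            ((ENNReal.continuous_ofReal.tendsto _).comp (hv3.pow d))
        · rw [ENNReal.inv_ne_zero]; exact ENNReal.ofReal_ne_top
      refine le_of_tendsto ht (Eventually.of_forall fun n => ?_)
      refine le_trans ?_ (le_iSup (fun q : ℚ => (if (0 : ℝ) < q then
        (ENNReal.ofReal ((q : ℝ) ^ d))⁻¹ else 0) * ∫⁻ y in Metric.closedBall x q, u y) (v n))
      rw [if_pos (hr.trans (hv2 n))]
      exact mul_le_mul_right (lintegral_mono_set (Metric.closedBall_subset_closedBall (hv2 n).le)) _
    · refine iSup_le fun q => ?_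
      split_ifs with hq
      · exact le_iSup₂_of_le (f := fun (r : ℝ) (_ : 0 < r) =>
          (ENNReal.ofReal (r ^ d))⁻¹ * ∫⁻ y in Metric.closedBall x r, u y) (q : ℝ) hq le_rfl
      · rw [zero_mul]; exact zero_le
  rw [e]
  exact Measurable.iSup fun q => (hball q).const_mul _

/-- The pointwise majorant A. -/
lemma CZO.grand_le_A {d : ℕ} (hd : 0 < d) (S : CZO d) {ρ : ℝ} (hρ : 1 ≤ ρ) {r : ℝ} (hr : 1 < r)
    (hrρ : r ≤ ρ) : ∃ C : ℝ≥0∞, C ≠ ∞ ∧ ∀ (Q₀ : Cube d) (f F : Rd d → ℝ), Measurable f →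
      F = (Q₀.dilate 3).indicator f → Integrable F → ∀ x,
      S.grandMaxLoc ρ Q₀ f x ≤ S.var ρ F x + (C * HL (fun y => ENNReal.ofReal |F y|) x +
        C * HL (fun y => ENNReal.ofReal |F y| ^ r) x ^ (1 / r)) := by
  obtain ⟨C, hC, hmain⟩ := S.var_shift hd hρ hr hrρ
  have hκ := one_le_sqrt_d hd
  refine ⟨ENNReal.ofReal (S.Cst * (2 * √d) ^ d) + C, ENNReal.add_ne_top.2 ⟨ENNReal.ofReal_ne_top, hC⟩, ?_⟩
  intro Q₀ f F hf hFdef hF x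
  have hFm : Measurable F := by rw [hFdef]; exact hf.indicator (Q₀.meas_dilate 3)
  unfold CZO.grandMaxLoc
  split_ifs with hx
  swap
  · exact zero_le
  refine iSup₂_le fun Q hQ => ?_
  refine essSup_le_of_ae_le _ ((ae_restrict_iff' Q.meas_set).2 (ae_of_all _ fun ξ hξ => ?_))
  have hl := Q.hl
  set h := 2 * √d * Q.l with hh
  have hh0 : 0 < h := by positivity
  set g1 : Rd d → ℝ := ({y : Rd d | dist x y ≤ h} \ Q.dilate 3).indicator F with hg1
  set g2 : Rd d → ℝ := ({y : Rd d | h < dist x y}).indicator F with hg2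
  have hg1i : Integrable g1 := hF.indicator ((near_meas x h).diff (Q.meas_dilate 3))
  have hg2i : Integrable g2 := hF.indicator (far_meas x h)
  have hg2m : Measurable g2 := hFm.indicator (far_meas x h)
  have esum : (Q₀.dilate 3 \ Q.dilate 3).indicator f = fun y => g1 y + g2 y := by
    ext y
    rw [hg1, hg2, hFdef]
    by_cases h0 : y ∈ Q₀.dilate 3
    · by_cases h3 : y ∈ Q.dilate 3
      · have hn : dist x y ≤ h := by
          have := Q.dist_le_three hQ.1 h3
          rw [hh]; linarith
        have hn' : ¬ h < dist x y := not_lt.2 hn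
        simp [h3, hn']
      · by_cases hn : dist x y ≤ h
        · have hn' : ¬ h < dist x y := not_lt.2 hn
          simp [h0, h3, hn, hn']
        · have hn' : h < dist x y := not_le.1 hn
          simp [h0, h3, hn, hn']
    · simp [h0, indicator]
  rw [esum]
  refine (S.var_add_le hρ hg1i hg2i ξ).trans ?_
  have b2 : S.var ρ g2 ξ ≤ S.var ρ F x + (C * HL (fun y => ENNReal.ofReal |F y|) x +
        C * HL (fun y => ENNReal.ofReal |F y| ^ r) x ^ (1 / r)) := by
    refine (hmain g2 hg2m hg2i x ξ h hh0 ?_ ?_).trans ?_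
    · have := Q.dist_le hQ.1 hξ
      rw [hh]; linarith
    · intro y hy
      rw [hg2, indicator_of_notMem]
      exact not_lt.2 hy
    · have hle : ∀ y, |g2 y| ≤ |F y| := by
        intro y
        rw [hg2]
        by_cases hy : y ∈ {y : Rd d | h < dist x y}
        · rw [indicator_of_mem hy]
        · rw [indicator_of_notMem hy]; simp
      refine add_le_add (S.var_far_le (by linarith) hF x hh0) (add_le_add ?_ ?_)
      · refine mul_le_mul_right (HL_mono (fun y => ENNReal.ofReal_le_ofReal (hle y)) x) _
      · refine mul_le_mul_right (ENNReal.rpow_le_rpow (HL_mono (fun y => ?_) x) (by positivity)) _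
        exact ENNReal.rpow_le_rpow (ENNReal.ofReal_le_ofReal (hle y)) (by linarith)
  have b1 : S.var ρ g1 ξ ≤ ENNReal.ofReal (S.Cst * (2 * √d) ^ d) *
      HL (fun y => ENNReal.ofReal |F y|) x := by
    refine (S.var_le_lint hρ hg1i ξ).trans ?_
    have p1 : ∀ y, ENNReal.ofReal |S.K ξ y * g1 y| ≤ ENNReal.ofReal (S.Cst / Q.l ^ d) *
        (Metric.closedBall x h).indicator (fun y => ENNReal.ofReal |F y|) y := by
      intro y
      by_cases hy : y ∈ {y : Rd d | dist x y ≤ h} \ Q.dilate 3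
      · have hy1 : y ∈ Metric.closedBall x h := by rw [Metric.mem_closedBall']; exact hy.1
        rw [indicator_of_mem hy1, hg1, indicator_of_mem hy, abs_mul,
          ← ENNReal.ofReal_mul (div_nonneg S.hCst.le (by positivity))]
        apply ENNReal.ofReal_le_ofReal
        gcongr
        exact S.K_le hl (Q.le_dist hξ hy.2)
      · rw [hg1, indicator_of_notMem hy]; simp
    refine (lintegral_mono p1).trans ?_
    rw [lintegral_const_mul' _ _ ENNReal.ofReal_ne_top, lintegral_indicator measurableSet_closedBall]
    refine (mul_le_mul_right (le_HL _ x hh0) _).trans (le_of_eq ?_)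
    rw [← mul_assoc, ← ENNReal.ofReal_mul (div_nonneg S.hCst.le (by positivity))]
    congr 2
    rw [hh, mul_pow]
    field_simp
  calc _ ≤ ENNReal.ofReal (S.Cst * (2 * √d) ^ d) *
      HL (fun y => ENNReal.ofReal |F y|) x + (S.var ρ F x + (C * HL (fun y => ENNReal.ofReal |F y|) x +
        C * HL (fun y => ENNReal.ofReal |F y| ^ r) x ^ (1 / r))) := add_le_add b1 b2
    _ = S.var ρ F x + ((ENNReal.ofReal (S.Cst * (2 * √d) ^ d) + C) *
        HL (fun y => ENNReal.ofReal |F y|) x +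
        C * HL (fun y => ENNReal.ofReal |F y| ^ r) x ^ (1 / r)) := by ring
    _ ≤ _ := add_le_add_right (add_le_add_right (mul_le_mul_left le_add_self _) _) _

lemma Cube.vol_dilate_lt {d : ℕ} (Q : Cube d) (t : ℝ) : volume (Q.dilate t) < ∞ := by
  by_cases hne : (Q.dilate t).Nonempty
  · obtain ⟨z, hz⟩ := hne
    refine (measure_mono (t := Metric.closedBall z (√d * (|t| * Q.l))) ?_).trans_lt
      measure_closedBall_lt_top
    intro y hy
    have := Q.hl
    refine dist_le_of_coord y z (by positivity) fun i => ?_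
    have h1 := hy i
    have h2 := hz i
    have h3 : t * Q.l ≤ |t| * Q.l := by gcongr; exact le_abs_self t
    rw [abs_le]; constructor <;> linarith
  · rw [not_nonempty_iff_eq_empty.1 hne]; simp

lemma int_of_Lq {d : ℕ} {q : ℝ} (hq : 1 ≤ q) {f : Rd d → ℝ} (hf : Measurable f)
    (hfin : ∫⁻ x, ENNReal.ofReal |f x| ^ q ≠ ∞) {E : Set (Rd d)} (hE : MeasurableSet E)
    (hE' : volume E < ∞) : Integrable (E.indicator f) := by
  refine ⟨(hf.indicator hE).aestronglyMeasurable, ?_⟩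
  rw [hasFiniteIntegral_iff_enorm]
  have h1 : ∀ y, ‖E.indicator f y‖ₑ ≤ E.indicator 1 y + ENNReal.ofReal |f y| ^ q := by
    intro y
    by_cases hy : y ∈ E
    · rw [indicator_of_mem hy, indicator_of_mem hy, Real.enorm_eq_ofReal_abs, Pi.one_apply]
      rcases le_total (ENNReal.ofReal |f y|) 1 with h | h
      · exact h.trans le_self_add
      · refine le_trans ?_ le_add_self
        calc ENNReal.ofReal |f y| = ENNReal.ofReal |f y| ^ (1 : ℝ) := (ENNReal.rpow_one _).symm
          _ ≤ _ := ENNReal.rpow_le_rpow_of_exponent_le h hq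
    · rw [indicator_of_notMem hy]; simp
  refine (lintegral_mono h1).trans_lt ?_
  rw [lintegral_add_left (measurable_one.indicator hE), lintegral_indicator_one hE]
  exact ENNReal.add_lt_top.2 ⟨hE', hfin.lt_top⟩

lemma add3_rpow (a b c : ℝ≥0∞) {q : ℝ} (hq : 1 ≤ q) :
    (a + (b + c)) ^ q ≤ 2 ^ (q - 1) * (2 ^ (q - 1)) * (a ^ q + (b ^ q + c ^ q)) := by
  have h1 := ENNReal.rpow_add_le_mul_rpow_add_rpow a (b + c) hq
  have h2 := ENNReal.rpow_add_le_mul_rpow_add_rpow b c hq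
  have h3 : (1 : ℝ≥0∞) ≤ 2 ^ (q - 1) := by
    simpa using ENNReal.rpow_le_rpow_of_exponent_le (x := 2) (by norm_num) (by linarith : 0 ≤ q - 1)
  refine h1.trans ?_
  rw [mul_assoc]
  refine mul_le_mul_right ?_ _
  rw [mul_add]
  refine add_le_add ?_ h2
  calc a ^ q = 1 * a ^ q := (one_mul _).symm
    _ ≤ _ := mul_le_mul_left h3 _

/-- `L^q` bound through a measurable majorant. -/
lemma CZO.maj_q {d : ℕ} (hd : 0 < d) (S : CZO d) {ρ q : ℝ} (hρ : 2 < ρ) (hq : 1 < q)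
    (hbdd : S.VarBdd ρ q) : ∃ C : ℝ≥0∞, C ≠ ∞ ∧ ∀ (Q₀ : Cube d) (f : Rd d → ℝ), Measurable f →
      ∃ Φ : Rd d → ℝ≥0∞, Measurable Φ ∧ (∀ x, S.grandMaxLoc ρ Q₀ f x ≤ Φ x) ∧
        ∫⁻ x, Φ x ^ q ≤ C * ∫⁻ x, ENNReal.ofReal |f x| ^ q := by
  obtain ⟨r, hr1, hr2⟩ : ∃ r, 1 < r ∧ r < min q 2 := exists_between (lt_min hq (by norm_num))
  have hrq : r < q := hr2.trans_le (min_le_left _ _)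
  have hr2' : r < 2 := hr2.trans_le (min_le_right _ _)
  obtain ⟨C0, hC0, hA⟩ := S.grand_le_A hd (by linarith : 1 ≤ ρ) hr1 (by linarith)
  obtain ⟨C1, hC1, hH1⟩ := HL_strong hd hq
  obtain ⟨C2, hC2, hH2⟩ := HL_strong hd (s := q / r) (by rw [one_lt_div (by linarith)]; exact hrq)
  obtain ⟨A, hA0, hAb⟩ := hbdd
  set c2 : ℝ≥0∞ := 2 ^ (q - 1) * (2 ^ (q - 1)) with hc2
  have hc2f : c2 ≠ ∞ := by
    have : (2 : ℝ≥0∞) ^ (q - 1) ≠ ∞ := ENNReal.rpow_ne_top_of_nonneg (by linarith) (by simp)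
    exact ENNReal.mul_ne_top this this
  have hq0 : 0 < q := by linarith
  have hr0 : 0 < r := by linarith
  have hC0q : C0 ^ q ≠ ∞ := ENNReal.rpow_ne_top_of_nonneg hq0.le hC0
  refine ⟨c2 * (ENNReal.ofReal A + (C0 ^ q * C1 + C0 ^ q * C2)) + 1, ?_, ?_⟩
  · refine ENNReal.add_ne_top.2 ⟨ENNReal.mul_ne_top hc2f (ENNReal.add_ne_top.2
      ⟨ENNReal.ofReal_ne_top, ENNReal.add_ne_top.2 ⟨ENNReal.mul_ne_top hC0q hC1,
        ENNReal.mul_ne_top hC0q hC2⟩⟩), by simp⟩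
  intro Q₀ f hf
  by_cases hfin : ∫⁻ x, ENNReal.ofReal |f x| ^ q = ∞
  · refine ⟨fun _ => ∞, measurable_const, fun _ => le_top, ?_⟩
    rw [hfin, ENNReal.mul_top (by simp)]; exact le_top
  set F : Rd d → ℝ := (Q₀.dilate 3).indicator f with hF
  have hFi : Integrable F := int_of_Lq hq.le hf hfin (Q₀.meas_dilate 3) (Q₀.vol_dilate_lt 3)
  have hFm : Measurable F := hf.indicator (Q₀.meas_dilate 3)
  have hFle : ∫⁻ x, ENNReal.ofReal |F x| ^ q ≤ ∫⁻ x, ENNReal.ofReal |f x| ^ q := by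
    refine lintegral_mono fun y => ?_
    refine ENNReal.rpow_le_rpow (ENNReal.ofReal_le_ofReal ?_) hq0.le
    rw [hF]
    by_cases hy : y ∈ Q₀.dilate 3
    · rw [indicator_of_mem hy]
    · rw [indicator_of_notMem hy]; simp
  have m1 := HL_measurable hFm.abs.ennreal_ofReal
  have m2 := HL_measurable (hFm.abs.ennreal_ofReal.pow_const r)
  have m0 := S.var_meas (by linarith : 0 < ρ) hFm hFi
  refine ⟨fun x => S.var ρ F x + (C0 * HL (fun y => ENNReal.ofReal |F y|) x +
        C0 * HL (fun y => ENNReal.ofReal |F y| ^ r) x ^ (1 / r)),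
    m0.add ((m1.const_mul _).add ((m2.pow_const _).const_mul _)), hA Q₀ f F hf hF hFi, ?_⟩
  have i1 : ∫⁻ x, HL (fun y => ENNReal.ofReal |F y|) x ^ q ≤ C1 * ∫⁻ x, ENNReal.ofReal |F x| ^ q := by
    refine (hH1 (fun y => |F y|) hFm.abs (fun y => abs_nonneg _)).trans (le_of_eq ?_)
    congr 2; ext y
    rw [ENNReal.ofReal_rpow_of_nonneg (abs_nonneg _) hq0.le]
  have i2 : ∫⁻ x, (HL (fun y => ENNReal.ofReal |F y| ^ r) x ^ (1 / r)) ^ q ≤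
      C2 * ∫⁻ x, ENNReal.ofReal |F x| ^ q := by
    refine le_trans (le_of_eq ?_) ((hH2 (fun y => |F y| ^ r) (hFm.abs.pow_const r)
      (fun y => by positivity)).trans (le_of_eq ?_))
    · congr 1; ext x
      rw [← ENNReal.rpow_mul, show 1 / r * q = q / r by ring]
      congr 3; ext y
      rw [ENNReal.ofReal_rpow_of_nonneg (abs_nonneg _) hr0.le]
    · congr 2; ext y
      rw [ENNReal.ofReal_rpow_of_nonneg (abs_nonneg _) hq0.le, ← Real.rpow_mul (abs_nonneg _)]
      congr 2; field_simp
  calc _ ≤ ∫⁻ x, c2 * (S.var ρ F x ^ q + (C0 ^ q * HL (fun y => ENNReal.ofReal |F y|) x ^ q +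
        C0 ^ q * (HL (fun y => ENNReal.ofReal |F y| ^ r) x ^ (1 / r)) ^ q)) := by
        refine lintegral_mono fun x => ?_
        refine (add3_rpow _ _ _ hq.le).trans (le_of_eq ?_)
        rw [ENNReal.mul_rpow_of_nonneg _ _ hq0.le, ENNReal.mul_rpow_of_nonneg _ _ hq0.le]
    _ = c2 * ((∫⁻ x, S.var ρ F x ^ q) + (C0 ^ q * (∫⁻ x, HL (fun y => ENNReal.ofReal |F y|) x ^ q) +
        C0 ^ q * ∫⁻ x, (HL (fun y => ENNReal.ofReal |F y| ^ r) x ^ (1 / r)) ^ q)) := by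
        rw [lintegral_const_mul' _ _ hc2f, lintegral_add_left (m0.pow_const q),
          lintegral_add_left ((m1.pow_const q).const_mul _), lintegral_const_mul' _ _ hC0q,
          lintegral_const_mul' _ _ hC0q]
    _ ≤ c2 * (ENNReal.ofReal A * (∫⁻ x, ENNReal.ofReal |F x| ^ q) +
        (C0 ^ q * (C1 * ∫⁻ x, ENNReal.ofReal |F x| ^ q) +
        C0 ^ q * (C2 * ∫⁻ x, ENNReal.ofReal |F x| ^ q))) := by
        gcongr
        exact hAb F hFm
    _ = c2 * (ENNReal.ofReal A + (C0 ^ q * C1 + C0 ^ q * C2)) * ∫⁻ x, ENNReal.ofReal |F x| ^ q := by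
        ring
    _ ≤ _ := mul_le_mul' le_self_add hFle

lemma CZO.grand_strong_q {d : ℕ} (hd : 0 < d) (S : CZO d) {ρ q : ℝ} (hρ : 2 < ρ) (hq : 1 < q)
    (hbdd : S.VarBdd ρ q) : ∃ C : ℝ≥0∞, C ≠ ∞ ∧ ∀ (Q₀ : Cube d) (f : Rd d → ℝ), Measurable f →
      (∫⁻ x, S.grandMaxLoc ρ Q₀ f x ^ q ≤ C * ∫⁻ x, ENNReal.ofReal |f x| ^ q) ∧
      ∀ t : ℝ, 0 < t → ENNReal.ofReal t ^ q * volume {x | ENNReal.ofReal t < S.grandMaxLoc ρ Q₀ f x} ≤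
        C * ∫⁻ x, ENNReal.ofReal |f x| ^ q := by
  obtain ⟨C, hC, h⟩ := S.maj_q hd hρ hq hbdd
  refine ⟨C, hC, fun Q₀ f hf => ?_⟩
  obtain ⟨Φ, hΦ, h1, h2⟩ := h Q₀ f hf
  have hq0 : 0 < q := by linarith
  refine ⟨(lintegral_mono fun x => ENNReal.rpow_le_rpow (h1 x) hq0.le).trans h2, fun t ht => ?_⟩
  refine le_trans ?_ ((mul_meas_ge_le_lintegral₀ (hΦ.pow_const q).aemeasurable
    (ENNReal.ofReal t ^ q)).trans h2)
  refine mul_le_mul_right (measure_mono fun x hx => ?_) _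
  exact ENNReal.rpow_le_rpow ((le_of_lt hx).trans (h1 x)) hq0.le


/-- The dyadic cube of generation `n` that contains `y`. -/
def dyc {d : ℕ} (n : ℤ) (y : Rd d) : Set (Rd d) := {z | ∀ i, ⌊z i / (2 : ℝ) ^ n⌋ = ⌊y i / (2 : ℝ) ^ n⌋}

lemma mem_dyc_self {d : ℕ} (n : ℤ) (y : Rd d) : y ∈ dyc n y := fun _ => rfl

lemma dyc_eq_box {d : ℕ} (n : ℤ) (y : Rd d) : dyc n y =
    {z | ∀ i, (2 : ℝ) ^ n * ⌊y i / (2 : ℝ) ^ n⌋ ≤ z i ∧ z i < (2 : ℝ) ^ n * (⌊y i / (2 : ℝ) ^ n⌋ + 1)} := by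
  ext z
  have h2 : (0 : ℝ) < (2 : ℝ) ^ n := by positivity
  simp only [dyc, mem_ofPred_eq]
  refine forall_congr' fun i => ?_
  rw [Int.floor_eq_iff, le_div_iff₀ h2, div_lt_iff₀ h2, mul_comm, mul_comm ((_ : ℝ) + 1)]

lemma dyc_meas {d : ℕ} (n : ℤ) (y : Rd d) : MeasurableSet (dyc n y) := by
  rw [dyc_eq_box]; exact meas_box _ _

lemma dyc_eq {d : ℕ} {n : ℤ} {y z : Rd d} (h : z ∈ dyc n y) : dyc n z = dyc n y := by
  ext w
  simp only [dyc, mem_ofPred_eq] at *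
  exact forall_congr' fun i => by rw [h i]

lemma dyc_mono {d : ℕ} {n m : ℤ} (hnm : n ≤ m) (y : Rd d) : dyc n y ⊆ dyc m y := by
  intro z hz i
  obtain ⟨k, rfl⟩ := Int.le.dest hnm
  have e : ∀ t : ℝ, t / (2 : ℝ) ^ (n + (k : ℤ)) = t / (2 : ℝ) ^ n / ((2 ^ k : ℕ) : ℝ) := by
    intro t
    rw [zpow_add₀ (by norm_num), zpow_natCast]
    push_cast
    field_simp
  rw [e, e, Int.floor_div_natCast, Int.floor_div_natCast, hz i]

lemma dyc_eq' {d : ℕ} {n m : ℤ} (hnm : n ≤ m) {y z : Rd d} (h : z ∈ dyc n y) : dyc m z = dyc m y :=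
  dyc_eq (dyc_mono hnm y h)

lemma dyc_dist {d : ℕ} {n : ℤ} {y z w : Rd d} (hz : z ∈ dyc n y) (hw : w ∈ dyc n y) :
    dist z w ≤ √d * (2 : ℝ) ^ n := by
  rw [dyc_eq_box] at hz hw
  refine dist_le_of_coord z w (by positivity) fun i => ?_
  have h1 := hz i
  have h2 := hw i
  rw [abs_le]; constructor <;> linarith

lemma dyc_vol {d : ℕ} (n : ℤ) (y : Rd d) : volume (dyc n y) = ENNReal.ofReal (((2 : ℝ) ^ n) ^ d) := by
  set a : Fin d → ℝ := fun i => (2 : ℝ) ^ n * ⌊y i / (2 : ℝ) ^ n⌋ with ha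
  set b : Fin d → ℝ := fun i => (2 : ℝ) ^ n * (⌊y i / (2 : ℝ) ^ n⌋ + 1) with hb
  have e : dyc n y = (MeasurableEquiv.toLp 2 (Fin d → ℝ)).symm ⁻¹' (Set.pi univ fun i => Ico (a i) (b i)) := by
    rw [dyc_eq_box]
    ext z
    simp [Set.mem_pi, ha, hb]
  rw [e, (EuclideanSpace.volume_preserving_symm_measurableEquiv_toLp (Fin d)).measure_preimage
    (MeasurableSet.univ_pi fun i => measurableSet_Ico).nullMeasurableSet, Real.volume_pi_Ico]
  have : ∀ i, b i - a i = (2 : ℝ) ^ n := fun i => by rw [ha, hb]; ring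
  simp only [this]
  rw [Finset.prod_const, Finset.card_univ, Fintype.card_fin, ENNReal.ofReal_pow (by positivity)]

/-- Calderon-Zygmund decomposition of `f` at height `α`. -/
structure CZD (d : ℕ) (f : Rd d → ℝ) (α : ℝ) where
  ι : Type
  cnt : Countable ι
  P : ι → Set (Rd d)
  c : ι → Rd d
  δ : ι → ℝ
  b : Rd d → ℝ
  mP : ∀ j, MeasurableSet (P j)
  disj : Pairwise (Function.onFun Disjoint P)
  cP : ∀ j, c j ∈ P j
  δpos : ∀ j, 0 < δ j
  diam : ∀ j, ∀ y ∈ P j, ∀ z ∈ P j, dist y z ≤ δ j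
  volP : ∀ j, ENNReal.ofReal (δ j ^ d) ≤ ENNReal.ofReal (√d ^ d) * volume (P j)
  mb : Measurable b
  b0 : ∀ y, (∀ j, y ∉ P j) → b y = 0
  bmean : ∀ j, ∫ y in P j, b y = 0
  bL : ∀ j, ∫⁻ y in P j, ENNReal.ofReal |b y| ≤ ENNReal.ofReal (2 ^ (d + 1) * α) * volume (P j)
  bint : ∫⁻ y, ENNReal.ofReal |b y| ≤ 2 * ∫⁻ y, ENNReal.ofReal |f y|
  volsum : ENNReal.ofReal α * ∑' j, volume (P j) ≤ ∫⁻ y, ENNReal.ofReal |f y|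
  gbd : ∀ᵐ y, |f y - b y| ≤ 2 ^ d * α

/-- The dyadic cube of generation `n` around `y` is heavy. -/
def heavy {d : ℕ} (f : Rd d → ℝ) (α : ℝ) (n : ℤ) (y : Rd d) : Prop :=
  ENNReal.ofReal α * volume (dyc n y) < ∫⁻ z in dyc n y, ENNReal.ofReal |f z|

/-- Selected cubes. -/
def selP {d : ℕ} (f : Rd d → ℝ) (α : ℝ) (j : ℤ × (Fin d → ℤ)) : Set (Rd d) :=
  {y | (∀ i, ⌊y i / (2 : ℝ) ^ j.1⌋ = j.2 i) ∧ heavy f α j.1 y ∧ ∀ m, j.1 < m → ¬ heavy f α m y}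

lemma selP_eq {d : ℕ} {f : Rd d → ℝ} {α : ℝ} {j : ℤ × (Fin d → ℤ)} {y : Rd d}
    (hy : y ∈ selP f α j) : selP f α j = dyc j.1 y := by
  have key : ∀ z ∈ dyc j.1 y, ∀ m, j.1 ≤ m → (heavy f α m z ↔ heavy f α m y) := by
    intro z hz m hm
    unfold heavy
    rw [dyc_eq' hm hz]
  ext z
  constructor
  · intro hz i
    rw [hz.1 i, hy.1 i]
  · intro hz
    refine ⟨fun i => by rw [hz i, hy.1 i], (key z hz _ le_rfl).2 hy.2.1, fun m hm h => ?_⟩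
    exact hy.2.2 m hm ((key z hz m hm.le).1 h)

lemma selP_disj {d : ℕ} {f : Rd d → ℝ} {α : ℝ} {j j' : ℤ × (Fin d → ℤ)} {y : Rd d}
    (hy : y ∈ selP f α j) (hy' : y ∈ selP f α j') : j = j' := by
  have e : j.1 = j'.1 := by
    rcases lt_trichotomy j.1 j'.1 with h | h | h
    · exact absurd hy'.2.1 (hy.2.2 _ h)
    · exact h
    · exact absurd hy.2.1 (hy'.2.2 _ h)
  refine Prod.ext e (funext fun i => ?_)
  rw [← hy.1 i, ← hy'.1 i, e]

lemma selP_exists {d : ℕ} (hd : 0 < d) {f : Rd d → ℝ} {α : ℝ} (hα : 0 < α)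
    (hf : ∫⁻ y, ENNReal.ofReal |f y| ≠ ∞) {n : ℤ} {y : Rd d} (h : heavy f α n y) :
    ∃ j, y ∈ selP f α j := by
  have hb : ∃ b : ℤ, ∀ m, heavy f α m y → m ≤ b := by
    set I := (∫⁻ y, ENNReal.ofReal |f y|).toReal with hI
    obtain ⟨k, hk⟩ := pow_unbounded_of_one_lt (I / α) (by norm_num : (1 : ℝ) < 2)
    refine ⟨k, fun m hm => ?_⟩
    by_contra hlt
    rw [not_le] at hlt
    unfold heavy at hm
    refine absurd hm (not_lt.2 ?_)
    refine (setLIntegral_le_lintegral _ _).trans ?_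
    rw [dyc_vol, ← ENNReal.ofReal_mul hα.le, ← ENNReal.ofReal_toReal hf]
    apply ENNReal.ofReal_le_ofReal
    rw [← hI]
    have h1 : (2 : ℝ) ^ k ≤ (2 : ℝ) ^ m := by
      rw [← zpow_natCast]; exact zpow_le_zpow_right₀ (by norm_num) hlt.le
    have h2 : (1 : ℝ) ≤ (2 : ℝ) ^ k := one_le_pow₀ (by norm_num)
    have h3 : (2 : ℝ) ^ m ≤ ((2 : ℝ) ^ m) ^ d := le_self_pow₀ (h2.trans h1) hd.ne'
    rw [div_lt_iff₀ hα] at hk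
    nlinarith
  obtain ⟨N, hN, hmax⟩ := Int.exists_greatest_of_bdd hb ⟨n, h⟩
  exact ⟨(N, fun i => ⌊y i / (2 : ℝ) ^ N⌋), fun i => rfl, hN,
    fun m hm h' => absurd (hmax m h') (not_le.2 hm)⟩

lemma selP_upper {d : ℕ} {f : Rd d → ℝ} {α : ℝ} (hα : 0 < α) {j : ℤ × (Fin d → ℤ)} {y : Rd d}
    (hy : y ∈ selP f α j) :
    ∫⁻ z in selP f α j, ENNReal.ofReal |f z| ≤ ENNReal.ofReal (2 ^ d * α) * volume (selP f α j) := by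
  have h1 := hy.2.2 (j.1 + 1) (by omega)
  unfold heavy at h1
  rw [not_lt] at h1
  rw [selP_eq hy]
  refine (lintegral_mono_set (dyc_mono (by omega : j.1 ≤ j.1 + 1) y)).trans (h1.trans (le_of_eq ?_))
  rw [dyc_vol, dyc_vol, ← ENNReal.ofReal_mul hα.le, ← ENNReal.ofReal_mul (by positivity),
    zpow_add₀ (by norm_num), zpow_one, mul_pow]
  congr 1; ring

/-- Lebesgue differentiation along dyadic cubes. -/
lemma leb_dyadic {d : ℕ} (hd : 0 < d) {f : Rd d → ℝ} {α : ℝ} (hα : 0 < α) (hf : Integrable f) :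
    ∀ᵐ y, (∀ n, ¬ heavy f α n y) → |f y| ≤ α := by
  filter_upwards [IsUnifLocDoublingMeasure.ae_tendsto_average_norm_sub
    (μ := (volume : Measure (Rd d))) hf.locallyIntegrable 1] with y hy hn
  have hκ := one_le_sqrt_d hd
  set D : ℕ → ℝ := fun k => √d * ((2 : ℝ) ^ k)⁻¹ with hD
  have hDpos : ∀ k, 0 < D k := fun k => by rw [hD]; positivity
  have hDt : Tendsto D atTop (nhdsWithin 0 (Ioi 0)) := by
    refine tendsto_nhdsWithin_iff.2 ⟨?_, Eventually.of_forall hDpos⟩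
    have : Tendsto (fun k : ℕ => √d * ((2 : ℝ)⁻¹) ^ k) atTop (nhds (√d * 0)) :=
      (tendsto_pow_atTop_nhds_zero_of_lt_one (by norm_num) (by norm_num)).const_mul _
    simpa [hD, inv_pow] using this
  have ht := hy (fun _ : ℕ => y) D hDt (Eventually.of_forall fun k => by
    simp [(hDpos k).le])
  have hvB : 0 < (vB d).toReal := ENNReal.toReal_pos (vB_ne_zero d) (vB_ne_top d)
  have hbound : ∀ k, |f y| ≤ α + √d ^ d * (vB d).toReal *
      ⨍ z in Metric.closedBall y (D k), ‖f z - f y‖ := by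
    intro k
    have h1 := hn (-(k : ℤ))
    unfold heavy at h1
    rw [not_lt] at h1
    set Q := dyc (-(k : ℤ)) y with hQ
    have hs : ((2 : ℝ) ^ (-(k : ℤ))) = ((2 : ℝ) ^ k)⁻¹ := by rw [zpow_neg, zpow_natCast]
    set s := ((2 : ℝ) ^ k)⁻¹ with hsdef
    have hs0 : 0 < s := by positivity
    have hvol : volume Q = ENNReal.ofReal (s ^ d) := by rw [hQ, dyc_vol, hs]
    have hvr : volume.real Q = s ^ d := by
      rw [Measure.real, hvol, ENNReal.toReal_ofReal (by positivity)]
    have hsub : Q ⊆ Metric.closedBall y (D k) := by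
      intro z hz
      have := dyc_dist hz (mem_dyc_self _ y)
      rw [hs] at this
      exact this
    have hfin : volume Q ≠ ∞ := by rw [hvol]; exact ENNReal.ofReal_ne_top
    have e1 : ∫ z in Q, |f z| ≤ α * s ^ d := by
      have : ENNReal.ofReal (∫ z in Q, |f z|) ≤ ENNReal.ofReal (α * s ^ d) := by
        rw [ofReal_integral_eq_lintegral_ofReal hf.abs.integrableOn (ae_of_all _ fun z => abs_nonneg _),
          ENNReal.ofReal_mul hα.le, ← hvol]
        exact h1
      exact (ENNReal.ofReal_le_ofReal_iff (by positivity)).1 this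
    have hIs : ∀ E : Set (Rd d), volume E ≠ ∞ → IntegrableOn (fun z => ‖f z - f y‖) E := by
      intro E hE
      exact (hf.integrableOn.sub (integrableOn_const hE)).norm
    have hball : volume (Metric.closedBall y (D k)) ≠ ∞ := measure_closedBall_lt_top.ne
    have e2 : ∫ z in Q, ‖f z - f y‖ ≤ ∫ z in Metric.closedBall y (D k), ‖f z - f y‖ :=
      setIntegral_mono_set (hIs _ hball) (ae_of_all _ fun z => norm_nonneg _) hsub.eventuallyLE
    have e3 : s ^ d * |f y| ≤ (∫ z in Q, |f z|) + ∫ z in Q, ‖f z - f y‖ := by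
      rw [← integral_add hf.abs.integrableOn (hIs _ hfin)]
      have : s ^ d * |f y| = ∫ z in Q, |f y| := by
        rw [setIntegral_const, hvr, smul_eq_mul]
      rw [this]
      refine setIntegral_mono (integrableOn_const hfin)
        (hf.abs.integrableOn.add (hIs _ hfin)) fun z => ?_
      have := abs_sub_abs_le_abs_sub (f y) (f z)
      rw [abs_sub_comm] at this
      simp only [Real.norm_eq_abs]
      linarith
    rw [setAverage_eq, smul_eq_mul, Measure.real, vol_closedBall y (hDpos k).le, ENNReal.toReal_mul,
      ENNReal.toReal_ofReal (by have := hDpos k; positivity)]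
    have hDd : D k ^ d = √d ^ d * s ^ d := by rw [hD]; simp only; rw [mul_pow]
    rw [hDd]
    set I := ∫ z in Metric.closedBall y (D k), ‖f z - f y‖ with hI
    have e4 : s ^ d * |f y| ≤ α * s ^ d + I := by linarith
    have hk0 : 0 < √d ^ d := by positivity
    have e5 : √d ^ d * (vB d).toReal * ((√d ^ d * s ^ d * (vB d).toReal)⁻¹ * I) = I / s ^ d := by
      field_simp
    rw [e5]
    have : |f y| = (s ^ d * |f y|) / s ^ d := by field_simp
    rw [this]
    have h6 : α + I / s ^ d = (α * s ^ d + I) / s ^ d := by field_simp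
    rw [h6]
    gcongr
  have hlim := (ht.const_mul (√d ^ d * (vB d).toReal)).const_add α
  rw [mul_zero, add_zero] at hlim
  exact ge_of_tendsto hlim (Eventually.of_forall hbound)


/-- Existence of the Calderon-Zygmund decomposition. -/
lemma czd_exists {d : ℕ} (hd : 0 < d) {f : Rd d → ℝ} (hfm : Measurable f) (hf : Integrable f)
    {α : ℝ} (hα : 0 < α) : Nonempty (CZD d f α) := by
  have hfin : ∫⁻ y, ENNReal.ofReal |f y| ≠ ∞ := by
    have := hf.2
    rw [hasFiniteIntegral_iff_enorm] at this
    simpa [Real.enorm_eq_ofReal_abs] using this.ne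
  let ι := {j : ℤ × (Fin d → ℤ) // (selP f α j).Nonempty}
  let P : ι → Set (Rd d) := fun j => selP f α j.1
  let c : ι → Rd d := fun j => j.2.choose
  have hc : ∀ j, c j ∈ P j := fun j => j.2.choose_spec
  have hPeq : ∀ j, P j = dyc j.1.1 (c j) := fun j => selP_eq (hc j)
  have hmP : ∀ j, MeasurableSet (P j) := fun j => by rw [hPeq]; exact dyc_meas _ _
  have hvol : ∀ j, volume (P j) = ENNReal.ofReal (((2 : ℝ) ^ j.1.1) ^ d) := fun j => by
    rw [hPeq, dyc_vol]
  have hvfin : ∀ j, volume (P j) ≠ ∞ := fun j => by rw [hvol]; exact ENNReal.ofReal_ne_top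
  have hvpos : ∀ j, 0 < volume.real (P j) := fun j => by
    rw [Measure.real, hvol, ENNReal.toReal_ofReal (by positivity)]; positivity
  have huniq : ∀ (j j' : ι) (y : Rd d), y ∈ P j → y ∈ P j' → j = j' := fun j j' y h h' =>
    Subtype.ext (selP_disj h h')
  have hdisj : Pairwise (Function.onFun Disjoint P) := by
    intro j j' hne
    rw [Function.onFun, Set.disjoint_left]
    exact fun y h h' => hne (huniq j j' y h h')
  let a : ι → ℝ := fun j => (volume.real (P j))⁻¹ * ∫ z in P j, f z
  let b : Rd d → ℝ := fun y => if h : ∃ j, y ∈ P j then f y - a h.choose else 0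
  have hbP : ∀ j, ∀ y ∈ P j, b y = f y - a j := by
    intro j y hy
    have h : ∃ j, y ∈ P j := ⟨j, hy⟩
    have : h.choose = j := huniq _ _ y h.choose_spec hy
    simp only [b, dif_pos h, this]
  have hb0 : ∀ y, (∀ j, y ∉ P j) → b y = 0 := by
    intro y hy
    have h : ¬ ∃ j, y ∈ P j := fun ⟨j, hj⟩ => hy j hj
    simp only [b, dif_neg h]
  have hmb : Measurable b := by
    intro s hs
    have e : b ⁻¹' s = (⋃ j, P j ∩ (fun y => f y - a j) ⁻¹' s) ∪ ((⋃ j, P j)ᶜ ∩ (fun _ => (0 : ℝ)) ⁻¹' s) := by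
      ext y
      by_cases h : ∃ j, y ∈ P j
      · obtain ⟨j, hj⟩ := h
        simp only [mem_preimage, mem_union, mem_iUnion, mem_inter_iff, mem_compl_iff, hbP j y hj]
        constructor
        · exact fun h => Or.inl ⟨j, hj, h⟩
        · rintro (⟨j', hj', h⟩ | ⟨h, _⟩)
          · rw [huniq j j' y hj hj']; exact h
          · exact absurd ⟨j, hj⟩ h
      · have h0 := hb0 y (fun j hj => h ⟨j, hj⟩)
        simp only [mem_preimage, mem_union, mem_iUnion, mem_inter_iff, mem_compl_iff, h0]
        constructor
        · exact fun h' => Or.inr ⟨h, h'⟩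
        · rintro (⟨j', hj', _⟩ | ⟨_, h'⟩)
          · exact absurd ⟨j', hj'⟩ h
          · exact h'
    rw [e]
    refine (MeasurableSet.iUnion fun j => (hmP j).inter ((hfm.sub_const _) hs)).union
      ((MeasurableSet.iUnion hmP).compl.inter (measurable_const hs))
  have ha : ∀ j, ENNReal.ofReal |a j| * volume (P j) ≤ ∫⁻ z in P j, ENNReal.ofReal |f z| := by
    intro j
    have h1 : |a j| * volume.real (P j) = |∫ z in P j, f z| := by
      simp only [a]
      rw [abs_mul, abs_of_pos (inv_pos.2 (hvpos j))]
      have := hvpos j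
      field_simp
    have h2 : volume (P j) = ENNReal.ofReal (volume.real (P j)) := by
      rw [Measure.real, ENNReal.ofReal_toReal (hvfin j)]
    rw [h2, ← ENNReal.ofReal_mul (abs_nonneg _), h1]
    have := ofReal_abs_integral_le (μ := volume.restrict (P j)) f
    exact this
  have hbj : ∀ j, ∫⁻ y in P j, ENNReal.ofReal |b y| ≤ 2 * ∫⁻ z in P j, ENNReal.ofReal |f z| := by
    intro j
    calc _ ≤ ∫⁻ y in P j, (ENNReal.ofReal |f y| + ENNReal.ofReal |a j|) := by
          refine setLIntegral_mono' (hmP j) fun y hy => ?_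
          rw [hbP j y hy, ← ENNReal.ofReal_add (abs_nonneg _) (abs_nonneg _)]
          exact ENNReal.ofReal_le_ofReal (abs_sub _ _)
      _ = (∫⁻ z in P j, ENNReal.ofReal |f z|) + ENNReal.ofReal |a j| * volume (P j) := by
          rw [lintegral_add_left hfm.abs.ennreal_ofReal, setLIntegral_const]
      _ ≤ (∫⁻ z in P j, ENNReal.ofReal |f z|) + ∫⁻ z in P j, ENNReal.ofReal |f z| :=
          add_le_add_right (ha j) _
      _ = _ := (two_mul _).symm
  have hsumf : ∑' j, ∫⁻ z in P j, ENNReal.ofReal |f z| ≤ ∫⁻ z, ENNReal.ofReal |f z| := by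
    rw [← lintegral_iUnion hmP hdisj]
    exact setLIntegral_le_lintegral _ _
  refine ⟨CZD.mk ι inferInstance P c (fun j => √d * (2 : ℝ) ^ j.1.1) b hmP hdisj hc
    ?_ ?_ ?_ hmb hb0 ?_ ?_ ?_ ?_ ?_⟩
  · intro j
    have := one_le_sqrt_d hd
    positivity
  · intro j y hy z hz
    rw [hPeq] at hy hz
    exact dyc_dist hy hz
  · intro j
    rw [hvol, mul_pow, ENNReal.ofReal_mul (by positivity)]
  · intro j
    rw [setIntegral_congr_fun (hmP j) (fun y hy => hbP j y hy),
      integral_sub hf.integrableOn (integrableOn_const (hvfin j)), setIntegral_const, smul_eq_mul]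
    simp only [a]
    have := (hvpos j).ne'
    field_simp
    ring
  · intro j
    refine (hbj j).trans ((mul_le_mul_right (selP_upper hα (hc j)) 2).trans (le_of_eq ?_))
    rw [← mul_assoc, pow_succ, show (2 : ℝ) ^ d * 2 * α = 2 * (2 ^ d * α) by ring,
      ENNReal.ofReal_mul (p := 2) (by norm_num)]
    simp [P]
  · have e : ∫⁻ y, ENNReal.ofReal |b y| = ∫⁻ y in ⋃ j, P j, ENNReal.ofReal |b y| := by
      rw [← lintegral_indicator (MeasurableSet.iUnion hmP)]
      congr 1; ext y
      by_cases hy : y ∈ ⋃ j, P j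
      · rw [indicator_of_mem hy]
      · rw [indicator_of_notMem hy, hb0 y (fun j hj => hy (mem_iUnion.2 ⟨j, hj⟩))]; simp
    rw [e, lintegral_iUnion hmP hdisj]
    refine (ENNReal.tsum_le_tsum hbj).trans ?_
    rw [ENNReal.tsum_mul_left]
    exact mul_le_mul_right hsumf 2
  · rw [← ENNReal.tsum_mul_left]
    refine le_trans (ENNReal.tsum_le_tsum fun j => ?_) hsumf
    have := (hc j).2.1
    unfold heavy at this
    rw [hPeq]
    exact this.le
  · filter_upwards [leb_dyadic hd hα hf] with y hy
    by_cases h : ∃ j, y ∈ P j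
    · obtain ⟨j, hj⟩ := h
      rw [hbP j y hj, sub_sub_cancel]
      have h1 := (ha j).trans (selP_upper hα (hc j))
      have h0 : volume (P j) ≠ 0 := fun h0 => by
        have := hvpos j
        rw [Measure.real, h0] at this; simp at this
      have h2 : ENNReal.ofReal |a j| ≤ ENNReal.ofReal (2 ^ d * α) :=
        (ENNReal.mul_le_mul_iff_left h0 (hvfin j)).1 h1
      exact (ENNReal.ofReal_le_ofReal_iff (by positivity)).1 h2
    · rw [hb0 y (fun j hj => h ⟨j, hj⟩), sub_zero]
      refine (hy fun n hn => ?_).trans ?_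
      · obtain ⟨j, hj⟩ := selP_exists hd hα hfin hn
        exact h ⟨⟨j, ⟨y, hj⟩⟩, hj⟩
      · have : (1 : ℝ) ≤ 2 ^ d := one_le_pow₀ (by norm_num)
        nlinarith


lemma ann_tsum_set {d : ℕ} (x : Rd d) {ε : ℕ → ℝ} (h : Antitone ε) {P : Set (Rd d)}
    (hP : MeasurableSet P) (u : Rd d → ℝ≥0∞) :
    ∑' i, ∫⁻ y in P ∩ ann x (ε (i + 1)) (ε i), u y ≤ ∫⁻ y in P, u y := by
  have := ann_tsum_le x h univ (P.indicator u)
  simp only [setLIntegral_indicator hP, lintegral_indicator hP] at this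
  exact this

/-- Separation facts for a cube far from `ξ`. -/
lemma CZD.far_facts {d : ℕ} {f : Rd d → ℝ} {α : ℝ} (D : CZD d f α) {ξ : Rd d} {j : D.ι}
    (hfar : ∀ y ∈ D.P j, 4 * D.δ j ≤ dist ξ y) :
    4 * D.δ j ≤ dist ξ (D.c j) ∧ ∀ y ∈ D.P j, dist ξ (D.c j) / 2 ≤ dist ξ y := by
  refine ⟨hfar _ (D.cP j), fun y hy => ?_⟩
  have h1 := hfar y hy
  have h2 := D.diam j y hy _ (D.cP j)
  have h3 := dist_triangle ξ y (D.c j)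
  have h4 := D.δpos j
  linarith

lemma CZO.B_smooth {d : ℕ} (S : CZO d) {f : Rd d → ℝ} {α : ℝ} (D : CZD d f α) {ξ : Rd d} {j : D.ι}
    (hfar : ∀ y ∈ D.P j, 4 * D.δ j ≤ dist ξ y) {y : Rd d} (hy : y ∈ D.P j) :
    |S.K ξ y - S.K ξ (D.c j)| ≤ S.Cst * S.ω (D.δ j / dist ξ (D.c j)) / dist ξ (D.c j) ^ d := by
  obtain ⟨h1, _⟩ := D.far_facts hfar
  have hδ := D.δpos j
  have hpos : 0 < dist ξ (D.c j) := by linarith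
  have h2 := D.diam j _ (D.cP j) y hy
  have hs := S.smooth (D.c j) y ξ (fun h => by rw [h, dist_self] at hpos; exact lt_irrefl _ hpos)
    (by rw [dist_comm _ ξ]; linarith)
  rw [dist_comm _ ξ] at hs
  have h3 : |S.K ξ y - S.K ξ (D.c j)| ≤
      S.Cst * S.ω (dist (D.c j) y / dist ξ (D.c j)) / dist ξ (D.c j) ^ d := by
    rw [abs_sub_comm]
    have := abs_nonneg (S.K (D.c j) ξ - S.K y ξ)
    linarith
  refine h3.trans ?_
  have hC := S.hCst
  have := S.ω_mono (a := dist (D.c j) y / dist ξ (D.c j)) (b := D.δ j / dist ξ (D.c j))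
    (by show (0 : ℝ) ≤ _; positivity) (by show (0 : ℝ) ≤ _; positivity) (by gcongr)
  gcongr

/-- Bound for a single annulus and a single cube. -/
lemma CZO.B_term {d : ℕ} (S : CZO d) {f : Rd d → ℝ} {α : ℝ} (D : CZD d f α)
    (hbi : Integrable D.b) {ξ : Rd d} {E : Set (Rd d)} (hE : MeasurableSet E) (j : D.ι)
    (hfar : (D.P j ∩ E).Nonempty → ∀ y ∈ D.P j, 4 * D.δ j ≤ dist ξ y) {a e : ℝ} (ha : 0 < a) :
    ENNReal.ofReal |∫ y in D.P j ∩ ann ξ a e, S.K ξ y * E.indicator D.b y| ≤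
      (if (D.P j ∩ E).Nonempty then
        ENNReal.ofReal (S.Cst * S.ω (D.δ j / dist ξ (D.c j)) / dist ξ (D.c j) ^ d) *
          ∫⁻ y in D.P j ∩ ann ξ a e, ENNReal.ofReal |D.b y| else 0) +
      ((if (D.P j ∩ E).Nonempty ∧ ¬ D.P j ⊆ E then
        ∫⁻ y in (D.P j ∩ E) ∩ ann ξ a e, ENNReal.ofReal |S.K ξ y * D.b y| else 0) +
      (if (D.P j ∩ E).Nonempty ∧ (∃ y ∈ D.P j, y ∈ ann ξ a e) ∧ (∃ y ∈ D.P j, y ∉ ann ξ a e) then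
        ENNReal.ofReal (S.Cst * 2 ^ d / dist ξ (D.c j) ^ d) *
          ∫⁻ y in D.P j ∩ ann ξ a e, ENNReal.ofReal |D.b y| else 0)) := by
  have hmA := ann_meas ξ a e
  have hmP := D.mP j
  by_cases hne : (D.P j ∩ E).Nonempty
  swap
  · have : ∫ y in D.P j ∩ ann ξ a e, S.K ξ y * E.indicator D.b y = 0 := by
      rw [setIntegral_congr_fun (hmP.inter hmA) (g := fun _ => (0 : ℝ)) (fun y hy => ?_)]
      · simp
      · have : y ∉ E := fun h => hne ⟨y, hy.1, h⟩
        simp [this]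
    rw [this]; simp
  have hf := hfar hne
  obtain ⟨h1, h2⟩ := D.far_facts hf
  have hδ := D.δpos j
  have hpos : 0 < dist ξ (D.c j) := by linarith
  by_cases hsub : D.P j ⊆ E
  swap
  · rw [if_pos (⟨hne, hsub⟩ : _ ∧ _)]
    refine le_trans ?_ (le_add_left le_self_add)
    refine (ofReal_abs_integral_le _).trans (le_of_eq ?_)
    rw [← lintegral_indicator (hmP.inter hmA), ← lintegral_indicator ((hmP.inter hE).inter hmA)]
    congr 1; ext y
    by_cases hy1 : y ∈ D.P j <;> by_cases hy2 : y ∈ E <;> by_cases hy3 : y ∈ ann ξ a e <;>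
      simp [indicator, hy1, hy2, hy3]
  have eF : ∫ y in D.P j ∩ ann ξ a e, S.K ξ y * E.indicator D.b y =
      ∫ y in D.P j ∩ ann ξ a e, S.K ξ y * D.b y :=
    setIntegral_congr_fun (hmP.inter hmA) fun y hy => by
      simp only [indicator_of_mem (hsub hy.1)]
  rw [eF]
  by_cases hin : ∃ y ∈ D.P j, y ∈ ann ξ a e
  swap
  · have : D.P j ∩ ann ξ a e = ∅ := by
      ext y
      exact ⟨fun hy => hin ⟨y, hy.1, hy.2⟩, fun hy => absurd hy (notMem_empty y)⟩
    rw [this]; simp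
  by_cases hout : ∃ y ∈ D.P j, y ∉ ann ξ a e
  · rw [if_pos (⟨hne, hin, hout⟩ : _ ∧ _ ∧ _)]
    refine le_trans ?_ (le_add_left le_add_self)
    refine (ofReal_abs_integral_le _).trans ?_
    rw [← lintegral_const_mul' _ _ ENNReal.ofReal_ne_top]
    refine setLIntegral_mono' (hmP.inter hmA) fun y hy => ?_
    rw [abs_mul, ENNReal.ofReal_mul (abs_nonneg _)]
    refine mul_le_mul_left (ENNReal.ofReal_le_ofReal ?_) _
    refine (S.K_le (by positivity) (h2 y hy.1)).trans (le_of_eq ?_)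
    rw [div_pow]; field_simp
  · rw [if_pos hne]
    refine le_trans ?_ le_self_add
    have hPA : D.P j ∩ ann ξ a e = D.P j := by
      ext y
      refine ⟨fun h => h.1, fun h => ⟨h, ?_⟩⟩
      by_contra h'
      exact hout ⟨y, h, h'⟩
    have hKi : IntegrableOn (fun y => S.K ξ y * D.b y) (D.P j) :=
      (S.K_int hbi ξ ha).mono_set (fun y hy => by rw [← hPA] at hy; exact hy.2.1)
    rw [hPA]
    have e2 : ∫ y in D.P j, S.K ξ y * D.b y = ∫ y in D.P j, (S.K ξ y - S.K ξ (D.c j)) * D.b y := by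
      simp only [sub_mul]
      rw [integral_sub hKi (hbi.integrableOn.const_mul _), integral_const_mul, D.bmean j]
      simp
    rw [e2]
    refine (ofReal_abs_integral_le _).trans ?_
    rw [← lintegral_const_mul' _ _ ENNReal.ofReal_ne_top]
    refine setLIntegral_mono' hmP fun y hy => ?_
    rw [abs_mul, ENNReal.ofReal_mul (abs_nonneg _)]
    exact mul_le_mul_left (ENNReal.ofReal_le_ofReal (S.B_smooth D hf hy)) _

/-- The boundary cubes. -/
lemma CZO.B_bdry {d : ℕ} (hd : 0 < d) (S : CZO d) : ∃ C : ℝ≥0∞, C ≠ ∞ ∧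
    ∀ {f : Rd d → ℝ} {α : ℝ} (_ : 0 < α) (D : CZD d f α) {ξ : Rd d} {E : Set (Rd d)}
    (_ : ∀ j, (D.P j ∩ E).Nonempty → ∀ y ∈ D.P j, 4 * D.δ j ≤ dist ξ y) {a e : ℝ} (_ : 0 < a)
    (_ : a < e),
    ∑' j, (if (D.P j ∩ E).Nonempty ∧ (∃ y ∈ D.P j, y ∈ ann ξ a e) ∧ (∃ y ∈ D.P j, y ∉ ann ξ a e) then
        ENNReal.ofReal (S.Cst * 2 ^ d / dist ξ (D.c j) ^ d) *
          ∫⁻ y in D.P j ∩ ann ξ a e, ENNReal.ofReal |D.b y| else 0) *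
        (ENNReal.ofReal √(D.δ j / dist ξ (D.c j)))⁻¹ ≤ C * ENNReal.ofReal α := by
  obtain ⟨C, hC, hΘ⟩ := Theta_lint d hd
  refine ⟨ENNReal.ofReal (S.Cst * 2 ^ d * 2 ^ (d + 1) * 2 ^ (d + 1)) * (C + C),
    ENNReal.mul_ne_top ENNReal.ofReal_ne_top (ENNReal.add_ne_top.2 ⟨hC, hC⟩), ?_⟩
  intro f α hα D ξ E hfar a e ha hae
  haveI := D.cnt
  set c0 : ℝ := S.Cst * 2 ^ d * 2 ^ (d + 1) * 2 ^ (d + 1) * α with hc0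
  have hCst := S.hCst
  have hterm : ∀ j, (if (D.P j ∩ E).Nonempty ∧ (∃ y ∈ D.P j, y ∈ ann ξ a e) ∧
        (∃ y ∈ D.P j, y ∉ ann ξ a e) then
        ENNReal.ofReal (S.Cst * 2 ^ d / dist ξ (D.c j) ^ d) *
          ∫⁻ y in D.P j ∩ ann ξ a e, ENNReal.ofReal |D.b y| else 0) *
        (ENNReal.ofReal √(D.δ j / dist ξ (D.c j)))⁻¹ ≤
      ENNReal.ofReal c0 * ∫⁻ y in D.P j, (Theta ξ a y + Theta ξ e y) := by
    intro j
    split_ifs with h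
    swap
    · simp
    obtain ⟨hne, ⟨y, hy, hyA⟩, ⟨z, hz, hzA⟩⟩ := h
    have hf := hfar j hne
    obtain ⟨h1, h2⟩ := D.far_facts hf
    have hδ := D.δpos j
    have hpos : 0 < dist ξ (D.c j) := by linarith
    have hdist : ∀ u ∈ D.P j, ∀ w ∈ D.P j, dist ξ u ≤ dist ξ w + D.δ j := by
      intro u hu w hw
      have := D.diam j w hw u hu
      have := dist_triangle ξ w u
      linarith
    obtain ⟨r, hr, hrP⟩ : ∃ r, (r = a ∨ r = e) ∧ ∀ w ∈ D.P j, |dist ξ w - r| ≤ D.δ j := by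
      have hy1 := hyA.1
      have hy2 := hyA.2
      by_cases hza : dist ξ z ≤ a
      · refine ⟨a, Or.inl rfl, fun w hw => ?_⟩
        have := hdist w hw z hz
        have := hdist y hy w hw
        rw [abs_le]; constructor <;> linarith
      · have hze : e < dist ξ z := by
          by_contra hh
          exact hzA ⟨not_le.1 hza, not_lt.1 hh⟩
        refine ⟨e, Or.inr rfl, fun w hw => ?_⟩
        have := hdist w hw y hy
        have := hdist z hz w hw
        rw [abs_le]; constructor <;> linarith
    have hrc := hrP _ (D.cP j)
    rw [abs_le] at hrc
    have hr0 : D.δ j ≤ r := by linarith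
    have hrpos : 0 < r := by linarith
    set w := dist ξ (D.c j) with hw
    have hwr : w ≤ 2 * r := by linarith
    have hrw : r ≤ 2 * w := by linarith
    have hΘr : ∀ u ∈ D.P j, ENNReal.ofReal (√(r / D.δ j) / r ^ d) ≤ Theta ξ a u + Theta ξ e u := by
      intro u hu
      rcases hr with rfl | rfl
      · exact (Theta_ge hδ hr0 (hrP u hu)).trans le_self_add
      · exact (Theta_ge hδ hr0 (hrP u hu)).trans le_add_self
    have hβ : ∫⁻ y in D.P j ∩ ann ξ a e, ENNReal.ofReal |D.b y| ≤
        ENNReal.ofReal (2 ^ (d + 1) * α) * volume (D.P j) :=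
      (lintegral_mono_set inter_subset_left).trans (D.bL j)
    have hvol : ENNReal.ofReal (√(r / D.δ j) / r ^ d) * volume (D.P j) ≤
        ∫⁻ y in D.P j, (Theta ξ a y + Theta ξ e y) := by
      rw [← setLIntegral_const]
      exact setLIntegral_mono' (D.mP j) hΘr
    have hsq : 0 < √(D.δ j / w) := Real.sqrt_pos.2 (by positivity)
    have hscal : S.Cst * 2 ^ d / w ^ d * (2 ^ (d + 1) * α) * (√(D.δ j / w))⁻¹ ≤
        c0 * (√(r / D.δ j) / r ^ d) := by
      have q1 : (√(D.δ j / w))⁻¹ = √(w / D.δ j) := by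
        rw [← Real.sqrt_inv, inv_div]
      have q2 : √(w / D.δ j) ≤ 2 * √(r / D.δ j) := by
        have : (2 : ℝ) * √(r / D.δ j) = √(4 * (r / D.δ j)) := by
          rw [Real.sqrt_mul (by norm_num), show (4 : ℝ) = 2 ^ 2 by norm_num, Real.sqrt_sq (by norm_num)]
        rw [this]
        apply Real.sqrt_le_sqrt
        rw [← mul_div_assoc]
        gcongr
        linarith
      have q3 : 1 / w ^ d ≤ 2 ^ d / r ^ d := by
        rw [div_le_div_iff₀ (by positivity) (by positivity), one_mul, ← mul_pow]
        gcongr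
      rw [q1]
      calc _ = S.Cst * 2 ^ d * (2 ^ (d + 1) * α) * (1 / w ^ d) * √(w / D.δ j) := by ring
        _ ≤ S.Cst * 2 ^ d * (2 ^ (d + 1) * α) * (2 ^ d / r ^ d) * (2 * √(r / D.δ j)) := by gcongr
        _ = _ := by rw [hc0]; ring
    calc _ ≤ ENNReal.ofReal (S.Cst * 2 ^ d / w ^ d) *
          (ENNReal.ofReal (2 ^ (d + 1) * α) * volume (D.P j)) * (ENNReal.ofReal √(D.δ j / w))⁻¹ := by
          gcongr
      _ = ENNReal.ofReal (S.Cst * 2 ^ d / w ^ d * (2 ^ (d + 1) * α) * (√(D.δ j / w))⁻¹) * volume (D.P j) := by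
          rw [← ENNReal.ofReal_inv_of_pos hsq,
            ENNReal.ofReal_mul (p := S.Cst * 2 ^ d / w ^ d * (2 ^ (d + 1) * α)) (by positivity),
            ENNReal.ofReal_mul (p := S.Cst * 2 ^ d / w ^ d) (by positivity)]
          ring
      _ ≤ ENNReal.ofReal (c0 * (√(r / D.δ j) / r ^ d)) * volume (D.P j) := by gcongr
      _ = ENNReal.ofReal c0 * (ENNReal.ofReal (√(r / D.δ j) / r ^ d) * volume (D.P j)) := by
          rw [ENNReal.ofReal_mul (by positivity), mul_assoc]
      _ ≤ _ := by gcongr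
  refine (ENNReal.tsum_le_tsum hterm).trans ?_
  rw [ENNReal.tsum_mul_left, ← lintegral_iUnion D.mP D.disj]
  have := (setLIntegral_le_lintegral (⋃ j, D.P j) (fun y => Theta ξ a y + Theta ξ e y)
    (μ := (volume : Measure (Rd d)))).trans_eq (lintegral_add_left (Theta_measurable ξ a) _)
  refine (mul_le_mul_right (this.trans (add_le_add (hΘ ξ a ha) (hΘ ξ e (ha.trans hae)))) _).trans
    (le_of_eq ?_)
  rw [hc0, ENNReal.ofReal_mul (by positivity)]
  ring


lemma CZO.B_trunc {d : ℕ} (S : CZO d) {f : Rd d → ℝ} {α : ℝ} (D : CZD d f α)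
    (hbi : Integrable D.b) (ξ : Rd d) {E : Set (Rd d)} (hE : MeasurableSet E) {a e : ℝ} (ha : 0 < a)
    (hae : a ≤ e) :
    ENNReal.ofReal |S.trunc a (E.indicator D.b) ξ - S.trunc e (E.indicator D.b) ξ| ≤
      ∑' j, ENNReal.ofReal |∫ y in D.P j ∩ ann ξ a e, S.K ξ y * E.indicator D.b y| := by
  have := D.cnt
  have hFi := hbi.indicator hE
  rw [S.trunc_sub hFi ξ ha hae]
  have hI : IntegrableOn (fun y => S.K ξ y * E.indicator D.b y) (ann ξ a e) :=
    (S.K_int hFi ξ ha).mono_set fun y hy => hy.1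
  have hmU : MeasurableSet (⋃ j, D.P j ∩ ann ξ a e) :=
    MeasurableSet.iUnion fun j => (D.mP j).inter (ann_meas ξ a e)
  have e1 : ∫ y in ann ξ a e, S.K ξ y * E.indicator D.b y =
      ∫ y in ⋃ j, D.P j ∩ ann ξ a e, S.K ξ y * E.indicator D.b y := by
    rw [← integral_indicator (ann_meas ξ a e), ← integral_indicator hmU]
    congr 1; ext y
    by_cases hA : y ∈ ann ξ a e
    · by_cases hP : ∃ j, y ∈ D.P j
      · obtain ⟨j, hj⟩ := hP
        have hU : y ∈ ⋃ j, D.P j ∩ ann ξ a e := mem_iUnion.2 ⟨j, hj, hA⟩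
        rw [indicator_of_mem hA, indicator_of_mem hU]
      · have hb := D.b0 y (fun j hj => hP ⟨j, hj⟩)
        have hF : E.indicator D.b y = 0 := by
          by_cases hy : y ∈ E
          · rw [indicator_of_mem hy, hb]
          · rw [indicator_of_notMem hy]
        have hF2 : S.K ξ y * E.indicator D.b y = 0 := by rw [hF, mul_zero]
        simp only [indicator_apply _ (fun y => S.K ξ y * E.indicator D.b y), hF2, ite_self]
    · rw [indicator_of_notMem hA, indicator_of_notMem]
      intro h
      obtain ⟨j, hj⟩ := mem_iUnion.1 h
      exact hA hj.2
  have hs := hasSum_integral_iUnion (μ := (volume : Measure (Rd d)))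
    (f := fun y => S.K ξ y * E.indicator D.b y) (s := fun j => D.P j ∩ ann ξ a e)
    (fun j => (D.mP j).inter (ann_meas ξ a e))
    (fun i j hij => (D.disj hij).mono inter_subset_left inter_subset_left)
    (hI.mono_set (iUnion_subset fun j => inter_subset_right))
  rw [e1, ← hs.tsum_eq]
  simp only [← Real.enorm_eq_ofReal_abs]
  exact enorm_tsum_le_tsum_enorm

/-- Pointwise bound for the bad part. -/
lemma CZO.B_point {d : ℕ} (hd : 0 < d) (S : CZO d) : ∃ C : ℝ≥0∞, C ≠ ∞ ∧
    ∀ {ρ : ℝ} (_ : 2 ≤ ρ) {f : Rd d → ℝ} {α : ℝ} (_ : 0 < α) (D : CZD d f α) (_ : Integrable D.b)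
    {ξ : Rd d} {E : Set (Rd d)} (_ : MeasurableSet E)
    (_ : ∀ j, (D.P j ∩ E).Nonempty → ∀ y ∈ D.P j, 4 * D.δ j ≤ dist ξ y),
    S.var ρ (E.indicator D.b) ξ ≤
      (∑' j, if (D.P j ∩ E).Nonempty then
        ENNReal.ofReal (S.Cst * S.ω (D.δ j / dist ξ (D.c j)) / dist ξ (D.c j) ^ d) *
          ∫⁻ y in D.P j, ENNReal.ofReal |D.b y| else 0) +
      ((∑' j, if (D.P j ∩ E).Nonempty ∧ ¬ D.P j ⊆ E then
        ∫⁻ y in D.P j ∩ E, ENNReal.ofReal |S.K ξ y * D.b y| else 0) +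
      (C * ENNReal.ofReal α * ∑' j, if (D.P j ∩ E).Nonempty then
        ENNReal.ofReal (√(D.δ j / dist ξ (D.c j)) / dist ξ (D.c j) ^ d) *
          ∫⁻ y in D.P j, ENNReal.ofReal |D.b y| else 0) ^ (1 / 2 : ℝ)) := by
  obtain ⟨C, hC, hB⟩ := S.B_bdry hd
  refine ⟨ENNReal.ofReal (S.Cst * 2 ^ d) * C, ENNReal.mul_ne_top ENNReal.ofReal_ne_top hC, ?_⟩
  intro ρ hρ f α hα D hbi ξ E hE hfar
  have := D.cnt
  have hCst := S.hCst
  unfold CZO.var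
  refine iSup₂_le fun ε hε => ?_
  have hanti : Antitone ε := hε.1.antitone
  set β : ℕ → D.ι → ℝ≥0∞ := fun i j =>
    ∫⁻ y in D.P j ∩ ann ξ (ε (i + 1)) (ε i), ENNReal.ofReal |D.b y| with hβ
  set w : D.ι → ℝ := fun j => dist ξ (D.c j) with hw
  set X : ℕ → D.ι → ℝ≥0∞ := fun i j => if (D.P j ∩ E).Nonempty then
        ENNReal.ofReal (S.Cst * S.ω (D.δ j / dist ξ (D.c j)) / dist ξ (D.c j) ^ d) * β i j else 0 with hX
  set Y : ℕ → D.ι → ℝ≥0∞ := fun i j => if (D.P j ∩ E).Nonempty ∧ ¬ D.P j ⊆ E then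
        ∫⁻ y in (D.P j ∩ E) ∩ ann ξ (ε (i + 1)) (ε i), ENNReal.ofReal |S.K ξ y * D.b y| else 0 with hY
  set Z : ℕ → D.ι → ℝ≥0∞ := fun i j => if (D.P j ∩ E).Nonempty ∧
        (∃ y ∈ D.P j, y ∈ ann ξ (ε (i + 1)) (ε i)) ∧ (∃ y ∈ D.P j, y ∉ ann ξ (ε (i + 1)) (ε i)) then
        ENNReal.ofReal (S.Cst * 2 ^ d / dist ξ (D.c j) ^ d) * β i j else 0 with hZ
  have hβsum : ∀ j, ∑' i, β i j ≤ ∫⁻ y in D.P j, ENNReal.ofReal |D.b y| := fun j =>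
    ann_tsum_set ξ hanti (D.mP j) _
  have step1 : ∀ i, ENNReal.ofReal |S.trunc (ε (i + 1)) (E.indicator D.b) ξ -
      S.trunc (ε i) (E.indicator D.b) ξ| ≤ (∑' j, X i j) + ((∑' j, Y i j) + ∑' j, Z i j) := by
    intro i
    refine (S.B_trunc D hbi ξ hE (hε.2.1 (i + 1)) (hanti (Nat.le_succ i))).trans ?_
    rw [← ENNReal.tsum_add, ← ENNReal.tsum_add]
    exact ENNReal.tsum_le_tsum fun j => S.B_term D hbi hE j (hfar j) (hε.2.1 (i + 1))
  have hρ1 : 1 ≤ ρ := by linarith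
  have l1 : ∀ u : ℕ → ℝ≥0∞, (∑' i, u i ^ ρ) ^ (1 / ρ) ≤ ∑' i, u i := by
    intro u
    simpa using lp_le_lp (s := 1) (by norm_num) hρ1 u
  calc _ ≤ (∑' i, ((∑' j, X i j) + ((∑' j, Y i j) + ∑' j, Z i j)) ^ ρ) ^ (1 / ρ) := by
        refine ENNReal.rpow_le_rpow (ENNReal.tsum_le_tsum fun i => ?_) (by positivity)
        exact ENNReal.rpow_le_rpow (step1 i) (by linarith)
    _ ≤ (∑' i, (∑' j, X i j) ^ ρ) ^ (1 / ρ) + ((∑' i, (∑' j, Y i j) ^ ρ) ^ (1 / ρ) +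
        (∑' i, (∑' j, Z i j) ^ ρ) ^ (1 / ρ)) :=
        (mink_tsum hρ1 _ _).trans (add_le_add_right (mink_tsum hρ1 _ _) _)
    _ ≤ _ := by
        refine add_le_add ?_ (add_le_add ?_ ?_)
        · refine (l1 _).trans ?_
          rw [ENNReal.tsum_comm]
          refine ENNReal.tsum_le_tsum fun j => ?_
          simp only [hX]
          split_ifs
          · rw [ENNReal.tsum_mul_left]
            exact mul_le_mul_right (hβsum j) _
          · simp
        · refine (l1 _).trans ?_
          rw [ENNReal.tsum_comm]
          refine ENNReal.tsum_le_tsum fun j => ?_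
          simp only [hY]
          split_ifs
          · exact ann_tsum_set ξ hanti ((D.mP j).inter hE) _
          · simp
        · refine (lp_le_lp (s := 2) (by norm_num) hρ _).trans ?_
          refine ENNReal.rpow_le_rpow ?_ (by norm_num)
          set m : D.ι → ℝ≥0∞ := fun j => if (D.P j ∩ E).Nonempty then
            ENNReal.ofReal √(D.δ j / w j) else 1 with hm
          have hwpos : ∀ j, (D.P j ∩ E).Nonempty → 0 < w j := by
            intro j hj
            have := (D.far_facts (hfar j hj)).1
            have := D.δpos j
            simp only [hw]; linarith
          have hm0 : ∀ j, m j ≠ 0 := by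
            intro j
            simp only [hm]
            split_ifs with hj
            · have := D.δpos j
              have := hwpos j hj
              rw [ne_eq, ENNReal.ofReal_eq_zero, not_le]
              exact Real.sqrt_pos.2 (by positivity)
            · simp
          have hmt : ∀ j, m j ≠ ∞ := by
            intro j
            simp only [hm]
            split_ifs with hj <;> simp
          have f2 : ∀ i, ∑' j, Z i j * (m j)⁻¹ ≤ C * ENNReal.ofReal α := by
            intro i
            refine le_trans (le_of_eq ?_) (hB hα D hfar (hε.2.1 (i + 1)) (hε.1 (Nat.lt_succ_self i)))
            refine tsum_congr fun j => ?_
            simp only [hZ, hm]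
            by_cases hj : (D.P j ∩ E).Nonempty
            · simp [hj, hβ, hw]
            · simp [hj]
          calc _ ≤ ∑' i, (∑' j, Z i j * m j) * (C * ENNReal.ofReal α) :=
                ENNReal.tsum_le_tsum fun i => (cs_tsum _ m hm0 hmt).trans (mul_le_mul_right (f2 i) _)
            _ = (∑' j, ∑' i, Z i j * m j) * (C * ENNReal.ofReal α) := by
                rw [ENNReal.tsum_mul_right, ENNReal.tsum_comm]
            _ ≤ (∑' j, ENNReal.ofReal (S.Cst * 2 ^ d) * if (D.P j ∩ E).Nonempty then
                  ENNReal.ofReal (√(D.δ j / dist ξ (D.c j)) / dist ξ (D.c j) ^ d) *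
                  ∫⁻ y in D.P j, ENNReal.ofReal |D.b y| else 0) * (C * ENNReal.ofReal α) := by
                refine mul_le_mul_left (ENNReal.tsum_le_tsum fun j => ?_) _
                by_cases hj : (D.P j ∩ E).Nonempty
                swap
                · simp [hZ, hj]
                have hwp := hwpos j hj
                rw [if_pos hj]
                have hZle : ∀ i, Z i j * m j ≤ ENNReal.ofReal (S.Cst * 2 ^ d) *
                    ENNReal.ofReal (√(D.δ j / w j) / w j ^ d) * β i j := by
                  intro i
                  simp only [hZ, hm, if_pos hj]
                  split_ifs
                  · refine le_of_eq ?_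
                    rw [mul_right_comm, ← ENNReal.ofReal_mul (by positivity),
                      ← ENNReal.ofReal_mul (by positivity)]
                    congr 2
                    simp only [hw]
                    ring
                  · simp
                refine (ENNReal.tsum_le_tsum hZle).trans ?_
                rw [ENNReal.tsum_mul_left, mul_assoc]
                exact mul_le_mul_right (mul_le_mul_right (hβsum j) _) _
            _ = _ := by
                rw [ENNReal.tsum_mul_left]; ring


/-- Sums of bumps adapted to the bad cubes. -/
def CZD.H {d : ℕ} {f : Rd d → ℝ} {α : ℝ} (D : CZD d f α) (c : ℕ → ℝ≥0∞) (x : Rd d) : ℝ≥0∞ :=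
  ∑' j, (∫⁻ y in D.P j, ENNReal.ofReal |D.b y|) * Psi d c (D.δ j) (dist x (D.c j))

/-- Geometry of bad cubes seen from `x` and `ξ`. -/
lemma geo_compare {d : ℕ} (hd : 0 < d) {f : Rd d → ℝ} {α : ℝ} (D : CZD d f α) {Q : Cube d}
    {x ξ : Rd d} (hx : x ∈ Q.set) (hξ : ξ ∈ Q.set) {j : D.ι}
    (hfar : 6 * (1 + √d) * D.δ j < dist x (D.c j)) {y0 : Rd d} (hy0 : y0 ∈ D.P j)
    (hy0Q : y0 ∉ Q.dilate 3) :
    (∀ y ∈ D.P j, 4 * D.δ j ≤ dist ξ y) ∧ dist x (D.c j) ≤ 2 * (1 + √d) * dist ξ (D.c j) := by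
  have hκ := one_le_sqrt_d hd
  have hδ := D.δpos j
  set κ := √d
  have h1 := Q.le_dist hξ hy0Q
  have h2 := Q.dist_le hx hξ
  have h3 := dist_triangle x ξ y0
  have h4 : dist x y0 ≤ (1 + κ) * dist ξ y0 := by nlinarith
  have h5 := D.diam j y0 hy0 _ (D.cP j)
  have h6 := dist_triangle x y0 (D.c j)
  have h7 : 5 * D.δ j ≤ dist ξ y0 := by
    by_contra h
    rw [not_le] at h
    nlinarith
  have h8 : ∀ y ∈ D.P j, 4 * D.δ j ≤ dist ξ y := by
    intro y hy
    have := D.diam j y hy y0 hy0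
    have := dist_triangle ξ y y0
    linarith
  refine ⟨h8, ?_⟩
  have h9 := h8 _ (D.cP j)
  have h10 := dist_triangle ξ (D.c j) y0
  rw [dist_comm (D.c j) y0] at h10
  nlinarith

lemma CZO.X_compare {d : ℕ} (S : CZO d) {δ w W L : ℝ} {N : ℕ} (hδ : 0 < δ) (hw : 0 < w)
    (hL : 1 ≤ L) (hN : L ≤ N) (hW : W ≤ L * w) (hδW : δ ≤ W) :
    ENNReal.ofReal (S.Cst * S.ω (δ / w) / w ^ d) ≤ ENNReal.ofReal (S.Cst * N * L ^ d) *
      Psi d (fun k => ENNReal.ofReal (S.ω ((2 ^ k)⁻¹))) δ W := by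
  have hC := S.hCst
  have hWp : 0 < W := by linarith
  refine le_trans ?_ (mul_le_mul_right (Psi_ge S.ω_mono hδ hδW) _)
  rw [← ENNReal.ofReal_mul (by positivity)]
  apply ENNReal.ofReal_le_ofReal
  have h1 : S.ω (δ / w) ≤ N * S.ω (δ / W) := by
    refine le_trans (S.ω_mono (by show (0 : ℝ) ≤ _; positivity) (by show (0 : ℝ) ≤ _; positivity) ?_)
      (S.ω_nat_mul N (by positivity))
    rw [← mul_div_assoc, div_le_div_iff₀ hw hWp]
    nlinarith [mul_pos hδ hw]
  have h2 : 1 / w ^ d ≤ L ^ d / W ^ d := by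
    rw [div_le_div_iff₀ (by positivity) (by positivity), one_mul, ← mul_pow]
    gcongr
  have h3 : 0 ≤ S.ω (δ / W) := S.ω_nonneg (by positivity)
  calc _ = S.Cst * S.ω (δ / w) * (1 / w ^ d) := by ring
    _ ≤ S.Cst * (N * S.ω (δ / W)) * (L ^ d / W ^ d) := by
        gcongr
    _ = _ := by ring

lemma Z_compare {d : ℕ} {δ w W L : ℝ} (hδ : 0 < δ) (hw : 0 < w)
    (hL : 1 ≤ L) (hW : W ≤ L * w) (hδW : δ ≤ W) :
    ENNReal.ofReal (√(δ / w) / w ^ d) ≤ ENNReal.ofReal (L * L ^ d) *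
      Psi d (fun k => ENNReal.ofReal (√((2 ^ k)⁻¹))) δ W := by
  have hWp : 0 < W := by linarith
  refine le_trans ?_ (mul_le_mul_right (Psi_ge (φ := Real.sqrt)
    (fun a _ b _ hab => Real.sqrt_le_sqrt hab) hδ hδW) _)
  rw [← ENNReal.ofReal_mul (by positivity)]
  apply ENNReal.ofReal_le_ofReal
  have h1 : √(δ / w) ≤ L * √(δ / W) := by
    have e : L * √(δ / W) = √(L ^ 2 * (δ / W)) := by
      rw [Real.sqrt_mul (by positivity), Real.sqrt_sq (by linarith)]
    rw [e]
    apply Real.sqrt_le_sqrt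
    rw [← mul_div_assoc, div_le_div_iff₀ hw hWp]
    have : L * w ≤ L ^ 2 * w := by nlinarith
    nlinarith
  have h2 : 1 / w ^ d ≤ L ^ d / W ^ d := by
    rw [div_le_div_iff₀ (by positivity) (by positivity), one_mul, ← mul_pow]
    gcongr
  calc _ = √(δ / w) * (1 / w ^ d) := by ring
    _ ≤ (L * √(δ / W)) * (L ^ d / W ^ d) := by gcongr
    _ = _ := by ring

/-- Cubes crossing the boundary of the localisation set. -/
lemma CZO.Y_bound {d : ℕ} (hd : 0 < d) (S : CZO d) {f : Rd d → ℝ} {α : ℝ} (D : CZD d f α)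
    {Q₀ Q : Cube d} (hQ : Q.set ⊆ Q₀.set) {x ξ : Rd d} (hx : x ∈ Q.set) (hξ : ξ ∈ Q.set)
    (hfar : ∀ j, 6 * (1 + √d) * D.δ j < dist x (D.c j)) :
    (∑' j, if (D.P j ∩ (Q₀.dilate 3 \ Q.dilate 3)).Nonempty ∧ ¬ D.P j ⊆ (Q₀.dilate 3 \ Q.dilate 3) then
        ∫⁻ y in D.P j ∩ (Q₀.dilate 3 \ Q.dilate 3), ENNReal.ofReal |S.K ξ y * D.b y| else 0) ≤
      ENNReal.ofReal (2 * (S.Cst * 2 ^ d * (3 * √d) ^ d)) * HL (fun y => ENNReal.ofReal |D.b y|) x := by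
  have := D.cnt
  have hκ := one_le_sqrt_d hd
  have hC := S.hCst
  have hl := Q.hl
  have hl0 := Q₀.hl
  set E := Q₀.dilate 3 \ Q.dilate 3 with hEdef
  have hE : MeasurableSet E := (Q₀.meas_dilate 3).diff (Q.meas_dilate 3)
  set κ := √d with hκdef
  set B : ℝ → Rd d → ℝ≥0∞ := fun l => (Metric.closedBall x (3 * κ * l)).indicator
    (fun y => ENNReal.ofReal (S.Cst * 2 ^ d / l ^ d) * ENNReal.ofReal |D.b y|) with hB
  have hBm : ∀ l, Measurable (B l) := fun l =>
    (D.mb.abs.ennreal_ofReal.const_mul _).indicator measurableSet_closedBall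
  have hBint : ∀ l, 0 < l → ∫⁻ y, B l y ≤ ENNReal.ofReal (S.Cst * 2 ^ d * (3 * κ) ^ d) *
      HL (fun y => ENNReal.ofReal |D.b y|) x := by
    intro l hl
    rw [hB, lintegral_indicator measurableSet_closedBall, lintegral_const_mul' _ _ ENNReal.ofReal_ne_top]
    refine (mul_le_mul_right (le_HL _ x (by positivity)) _).trans (le_of_eq ?_)
    rw [← mul_assoc, ← ENNReal.ofReal_mul (by positivity)]
    congr 2
    rw [mul_pow (3 * κ)]
    field_simp
  have hpt : ∀ (l : ℝ) (y : Rd d), 0 < l → l / 2 ≤ dist ξ y → dist x y ≤ 3 * κ * l →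
      ENNReal.ofReal |S.K ξ y * D.b y| ≤ B l y := by
    intro l y hl h1 h2
    have hy : y ∈ Metric.closedBall x (3 * κ * l) := by rw [Metric.mem_closedBall']; exact h2
    simp only [hB]
    rw [indicator_of_mem hy, abs_mul, ENNReal.ofReal_mul (abs_nonneg _)]
    refine mul_le_mul_left (ENNReal.ofReal_le_ofReal ?_) _
    refine (S.K_le (by positivity) h1).trans (le_of_eq ?_)
    rw [div_pow]; field_simp
  have hterm : ∀ j, (if (D.P j ∩ E).Nonempty ∧ ¬ D.P j ⊆ E then
        ∫⁻ y in D.P j ∩ E, ENNReal.ofReal |S.K ξ y * D.b y| else 0) ≤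
      ∫⁻ y in D.P j, (B Q.l y + B Q₀.l y) := by
    intro j
    split_ifs with h
    swap
    · exact zero_le
    obtain ⟨⟨y0, hy0, hy0E⟩, hnot⟩ := h
    obtain ⟨z, hz, hzE⟩ := not_subset.1 hnot
    obtain ⟨g1, g2⟩ := geo_compare hd D hx hξ (hfar j) hy0 hy0E.2
    have hδ := D.δpos j
    refine le_trans ?_ (lintegral_mono_set inter_subset_left (s := D.P j ∩ E))
    refine setLIntegral_mono' ((D.mP j).inter hE) fun y hy => ?_
    have hyz := D.diam j y hy.1 z hz
    have g1z := g1 z hz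
    have g1y := g1 y hy.1
    by_cases hz3 : z ∈ Q.dilate 3
    · refine (hpt Q.l y hl ?_ ?_).trans le_self_add
      · have := Q.le_dist hξ hy.2.2
        linarith
      · have a1 := Q.dist_le_three hξ hz3
        have a2 := Q.dist_le_three hx hz3
        have a3 := dist_triangle x z y
        rw [dist_comm z y] at a3
        nlinarith
    · have hz0 : z ∉ Q₀.dilate 3 := fun h => hzE ⟨h, hz3⟩
      refine (hpt Q₀.l y hl0 ?_ ?_).trans le_add_self
      · have a1 := Q₀.le_dist (hQ hξ) hz0
        have a3 := dist_triangle ξ y z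
        linarith
      · have a1 := Q₀.dist_le_three (hQ hx) hy.2.1
        nlinarith
  refine (ENNReal.tsum_le_tsum hterm).trans ?_
  rw [← lintegral_iUnion D.mP D.disj]
  refine (setLIntegral_le_lintegral _ _).trans ?_
  rw [lintegral_add_left (hBm _)]
  refine (add_le_add (hBint _ hl) (hBint _ hl0)).trans (le_of_eq ?_)
  rw [← two_mul, ENNReal.ofReal_mul (p := 2) (by norm_num), ENNReal.ofReal_ofNat]
  ring

/-- Pointwise bound of the grand maximal function of the bad part. -/
lemma CZO.grand_bad {d : ℕ} (hd : 0 < d) (S : CZO d) : ∃ C : ℝ≥0∞, C ≠ ∞ ∧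
    ∀ {ρ : ℝ} (_ : 2 ≤ ρ) {f : Rd d → ℝ} {α : ℝ} (_ : 0 < α) (D : CZD d f α) (_ : Integrable D.b)
    (Q₀ : Cube d) (x : Rd d) (_ : ∀ j, 6 * (1 + √d) * D.δ j < dist x (D.c j)),
    S.grandMaxLoc ρ Q₀ D.b x ≤ C * D.H (fun k => ENNReal.ofReal (S.ω ((2 ^ k)⁻¹))) x +
      (C * HL (fun y => ENNReal.ofReal |D.b y|) x +
      (C * ENNReal.ofReal α * D.H (fun k => ENNReal.ofReal (√((2 ^ k)⁻¹))) x) ^ (1 / 2 : ℝ)) := by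
  obtain ⟨C, hC, hB⟩ := S.B_point hd
  have hκ := one_le_sqrt_d hd
  set L : ℝ := 2 * (1 + √d) with hL
  have hL1 : 1 ≤ L := by linarith
  obtain ⟨N, hN⟩ := exists_nat_ge L
  set C1 := ENNReal.ofReal (S.Cst * N * L ^ d) with hC1
  set C2 := ENNReal.ofReal (2 * (S.Cst * 2 ^ d * (3 * √d) ^ d)) with hC2
  set C3 := C * ENNReal.ofReal (L * L ^ d) with hC3
  refine ⟨C1 + (C2 + C3), ENNReal.add_ne_top.2 ⟨ENNReal.ofReal_ne_top, ENNReal.add_ne_top.2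
    ⟨ENNReal.ofReal_ne_top, ENNReal.mul_ne_top hC ENNReal.ofReal_ne_top⟩⟩, ?_⟩
  intro ρ hρ f α hα D hbi Q₀ x hfar
  unfold CZO.grandMaxLoc
  split_ifs with hx0
  swap
  · exact zero_le
  refine iSup₂_le fun Q hQ => ?_
  refine essSup_le_of_ae_le _ ((ae_restrict_iff' Q.meas_set).2 (ae_of_all _ fun ξ hξ => ?_))
  set E := Q₀.dilate 3 \ Q.dilate 3 with hEdef
  have hE : MeasurableSet E := (Q₀.meas_dilate 3).diff (Q.meas_dilate 3)
  have hgeo : ∀ j, (D.P j ∩ E).Nonempty → (∀ y ∈ D.P j, 4 * D.δ j ≤ dist ξ y) ∧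
      dist x (D.c j) ≤ L * dist ξ (D.c j) := by
    rintro j ⟨y0, hy0, hy0E⟩
    exact geo_compare hd D hQ.1 hξ (hfar j) hy0 hy0E.2
  have hδW : ∀ j, D.δ j ≤ dist x (D.c j) := fun j => by
    have := hfar j
    have := D.δpos j
    nlinarith
  refine (hB hρ hα D hbi hE (fun j hj => (hgeo j hj).1)).trans (add_le_add ?_ (add_le_add ?_ ?_))
  · refine le_trans ?_ (mul_le_mul_left (le_self_add : C1 ≤ C1 + (C2 + C3)) _)
    rw [CZD.H, ← ENNReal.tsum_mul_left]
    refine ENNReal.tsum_le_tsum fun j => ?_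
    split_ifs with hj
    · obtain ⟨g1, g2⟩ := hgeo j hj
      have := g1 _ (D.cP j)
      have hδ := D.δpos j
      refine (mul_le_mul_left (S.X_compare hδ (by linarith) hL1 hN g2 (hδW j)) _).trans (le_of_eq ?_)
      ring
    · exact zero_le
  · refine (S.Y_bound hd D hQ.2 hQ.1 hξ hfar).trans (mul_le_mul_left ?_ _)
    exact le_self_add.trans le_add_self
  · refine ENNReal.rpow_le_rpow ?_ (by norm_num)
    calc _ ≤ C * ENNReal.ofReal α * (ENNReal.ofReal (L * L ^ d) *
          D.H (fun k => ENNReal.ofReal (√((2 ^ k)⁻¹))) x) := by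
          refine mul_le_mul_right ?_ _
          rw [CZD.H, ← ENNReal.tsum_mul_left]
          refine ENNReal.tsum_le_tsum fun j => ?_
          split_ifs with hj
          · obtain ⟨g1, g2⟩ := hgeo j hj
            have := g1 _ (D.cP j)
            have hδ := D.δpos j
            refine (mul_le_mul_left (Z_compare hδ (by linarith) hL1 g2 (hδW j)) _).trans (le_of_eq ?_)
            ring
          · exact zero_le
      _ = C3 * ENNReal.ofReal α * D.H (fun k => ENNReal.ofReal (√((2 ^ k)⁻¹))) x := by
          rw [hC3]; ring
      _ ≤ _ := by
          refine mul_le_mul_left (mul_le_mul_left ?_ _) _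
          exact le_add_self.trans le_add_self


lemma CZO.grand_add {d : ℕ} (S : CZO d) {ρ : ℝ} (hρ : 1 ≤ ρ) (Q₀ : Cube d) {g b : Rd d → ℝ}
    (hg : Integrable g) (hb : Integrable b) (x : Rd d) :
    S.grandMaxLoc ρ Q₀ (fun y => g y + b y) x ≤ S.grandMaxLoc ρ Q₀ g x + S.grandMaxLoc ρ Q₀ b x := by
  unfold CZO.grandMaxLoc
  split_ifs with hx
  swap
  · simp
  refine iSup₂_le fun Q hQ => ?_
  have hE : MeasurableSet (Q₀.dilate 3 \ Q.dilate 3) := (Q₀.meas_dilate 3).diff (Q.meas_dilate 3)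
  set E := Q₀.dilate 3 \ Q.dilate 3
  have e : E.indicator (fun y => g y + b y) = fun y => E.indicator g y + E.indicator b y := by
    ext y
    by_cases hy : y ∈ E <;> simp [hy]
  have h1 : essSup (fun ξ => S.var ρ (E.indicator (fun y => g y + b y)) ξ) (volume.restrict Q.set) ≤
      essSup (fun ξ => S.var ρ (E.indicator g) ξ) (volume.restrict Q.set) +
      essSup (fun ξ => S.var ρ (E.indicator b) ξ) (volume.restrict Q.set) := by
    refine le_trans (essSup_mono_ae (Eventually.of_forall fun ξ => ?_))
      (ENNReal.essSup_add_le (μ := volume.restrict Q.set)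
        (fun ξ => S.var ρ (E.indicator g) ξ) (fun ξ => S.var ρ (E.indicator b) ξ))
    rw [e]
    exact S.var_add_le hρ (hg.indicator hE) (hb.indicator hE) ξ
  refine h1.trans (add_le_add ?_ ?_)
  · exact le_iSup₂ (f := fun (Q : Cube d) (_ : x ∈ Q.set ∧ Q.set ⊆ Q₀.set) =>
      essSup (fun ξ => S.var ρ ((Q₀.dilate 3 \ Q.dilate 3).indicator g) ξ)
        (volume.restrict Q.set)) Q hQ
  · exact le_iSup₂ (f := fun (Q : Cube d) (_ : x ∈ Q.set ∧ Q.set ⊆ Q₀.set) =>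
      essSup (fun ξ => S.var ρ ((Q₀.dilate 3 \ Q.dilate 3).indicator b) ξ)
        (volume.restrict Q.set)) Q hQ

lemma CZD.sum_β {d : ℕ} {f : Rd d → ℝ} {α : ℝ} (D : CZD d f α) :
    ∑' j, ∫⁻ y in D.P j, ENNReal.ofReal |D.b y| ≤ 2 * ∫⁻ y, ENNReal.ofReal |f y| := by
  have := D.cnt
  rw [← lintegral_iUnion D.mP D.disj]
  exact (setLIntegral_le_lintegral _ _).trans D.bint

lemma CZD.H_meas {d : ℕ} {f : Rd d → ℝ} {α : ℝ} (D : CZD d f α) (c : ℕ → ℝ≥0∞) :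
    Measurable (D.H c) := by
  have := D.cnt
  unfold CZD.H
  refine Measurable.tsum fun j => ?_
  exact ((Psi_measurable d c (D.δ j)).comp (by fun_prop)).const_mul _

lemma CZD.H_int {d : ℕ} {f : Rd d → ℝ} {α : ℝ} (D : CZD d f α) (c : ℕ → ℝ≥0∞) :
    ∫⁻ x, D.H c x ≤ ENNReal.ofReal (2 ^ d) * (∑' k, c k) * vB d * (2 * ∫⁻ y, ENNReal.ofReal |f y|) := by
  have := D.cnt
  unfold CZD.H
  have hm : ∀ j, Measurable fun x => Psi d c (D.δ j) (dist x (D.c j)) := fun j =>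
    (Psi_measurable d c (D.δ j)).comp (by fun_prop)
  rw [lintegral_tsum fun j => ((hm j).const_mul _).aemeasurable]
  simp only [lintegral_const_mul _ (hm _)]
  refine (ENNReal.tsum_le_tsum fun j => mul_le_mul_right (Psi_lint_one c (D.δpos j) (D.c j)) _).trans ?_
  rw [ENNReal.tsum_mul_right, mul_comm]
  exact mul_le_mul_right D.sum_β _

lemma CZD.vol_Om {d : ℕ} {f : Rd d → ℝ} {α : ℝ} (D : CZD d f α) {R : ℝ} (hR : 0 ≤ R) :
    ENNReal.ofReal α * volume (⋃ j, Metric.closedBall (D.c j) (R * D.δ j)) ≤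
      ENNReal.ofReal (R ^ d) * ENNReal.ofReal (√d ^ d) * vB d * ∫⁻ y, ENNReal.ofReal |f y| := by
  have := D.cnt
  calc _ ≤ ENNReal.ofReal α * ∑' j, ENNReal.ofReal (R ^ d) * ENNReal.ofReal (√d ^ d) * vB d * volume (D.P j) := by
        refine mul_le_mul_right ((measure_iUnion_le _).trans (ENNReal.tsum_le_tsum fun j => ?_)) _
        have := D.δpos j
        rw [vol_closedBall _ (by positivity), mul_pow, ENNReal.ofReal_mul (by positivity)]
        calc _ ≤ ENNReal.ofReal (R ^ d) * (ENNReal.ofReal (√d ^ d) * volume (D.P j)) * vB d := by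
              gcongr
              exact D.volP j
          _ = _ := by ring
    _ = ENNReal.ofReal (R ^ d) * ENNReal.ofReal (√d ^ d) * vB d * (ENNReal.ofReal α * ∑' j, volume (D.P j)) := by
        rw [ENNReal.tsum_mul_left]; ring
    _ ≤ _ := mul_le_mul_right D.volsum _

lemma HL_const_mul {d : ℕ} (u : Rd d → ℝ≥0∞) {C : ℝ≥0∞} (hC : C ≠ ∞) (x : Rd d) :
    C * HL u x ≤ HL (fun y => C * u y) x := by
  unfold HL
  simp only [ENNReal.mul_iSup, lintegral_const_mul' _ _ hC]
  refine iSup₂_mono fun r hr => le_of_eq ?_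
  ring

lemma cheb_scaled {d : ℕ} {g : Rd d → ℝ≥0∞} (hg : Measurable g) {t a : ℝ} (ht : 0 < t) (ha : 0 < a) :
    ENNReal.ofReal t * volume {x | ENNReal.ofReal (t / a) ≤ g x} ≤ ENNReal.ofReal a * ∫⁻ x, g x := by
  have h := mul_meas_ge_le_lintegral₀ (μ := (volume : Measure (Rd d))) hg.aemeasurable (ENNReal.ofReal (t / a))
  have : ENNReal.ofReal t = ENNReal.ofReal a * ENNReal.ofReal (t / a) := by
    rw [← ENNReal.ofReal_mul ha.le]; congr 1; field_simp
  rw [this, mul_assoc]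
  exact mul_le_mul_right h _

lemma CZO.weak_bad {d : ℕ} (hd : 0 < d) (S : CZO d) : ∃ C : ℝ≥0∞, C ≠ ∞ ∧
    ∀ {ρ : ℝ} (_ : 2 ≤ ρ) {f : Rd d → ℝ} {t : ℝ} (_ : 0 < t) (D : CZD d f t) (_ : Integrable D.b)
    (Q₀ : Cube d), ENNReal.ofReal t * volume {x | ENNReal.ofReal (t / 2) < S.grandMaxLoc ρ Q₀ D.b x} ≤
      C * ∫⁻ y, ENNReal.ofReal |f y| := by
  obtain ⟨C, hC, hG⟩ := S.grand_bad hd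
  set c1 : ℕ → ℝ≥0∞ := fun k => ENNReal.ofReal (S.ω ((2 ^ k)⁻¹)) with hc1
  set c2 : ℕ → ℝ≥0∞ := fun k => ENNReal.ofReal (√((2 ^ k)⁻¹)) with hc2
  have hs1 : ∑' k, c1 k ≠ ∞ := S.tsum_ω_ne_top
  have hs2 : ∑' k, c2 k ≠ ∞ := by
    have := tsum_pow_ne_top (a := 1 / 2) (by norm_num)
    simpa [hc2, Real.sqrt_eq_rpow] using this
  set R : ℝ := 6 * (1 + √d) with hR
  have hR0 : 0 ≤ R := by positivity
  set k0 := ENNReal.ofReal (R ^ d) * ENNReal.ofReal (√d ^ d) * vB d with hk0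
  set k1 := ENNReal.ofReal 6 * (C * (ENNReal.ofReal (2 ^ d) * (∑' k, c1 k) * vB d * 2)) with hk1
  set k2 := ENNReal.ofReal 6 * (cHL d * (C * 2)) with hk2
  set k3 := ENNReal.ofReal 36 * (C * (ENNReal.ofReal (2 ^ d) * (∑' k, c2 k) * vB d * 2)) with hk3
  have hv := vB_ne_top d
  have hcH := cHL_ne_top d
  refine ⟨k0 + (k1 + (k2 + k3)), ?_, ?_⟩
  · simp only [hk0, hk1, hk2, hk3]
    finiteness
  intro ρ hρ f t ht D hbi Q₀
  set I := ∫⁻ y, ENNReal.ofReal |f y| with hI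
  set Om := ⋃ j, Metric.closedBall (D.c j) (R * D.δ j) with hOm
  set A1 := {x | ENNReal.ofReal (t / 6) ≤ C * D.H c1 x} with hA1
  set A2 := {x | ENNReal.ofReal (t / 6) < HL (fun y => C * ENNReal.ofReal |D.b y|) x} with hA2
  set A3 := {x | ENNReal.ofReal (t / 36) ≤ C * D.H c2 x} with hA3
  have hsub : {x | ENNReal.ofReal (t / 2) < S.grandMaxLoc ρ Q₀ D.b x} ⊆ Om ∪ (A1 ∪ (A2 ∪ A3)) := by
    intro x hx
    by_contra hn
    simp only [mem_union, not_or] at hn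
    obtain ⟨n0, n1, n2, n3⟩ := hn
    have hfar : ∀ j, 6 * (1 + √d) * D.δ j < dist x (D.c j) := by
      intro j
      by_contra h
      exact n0 (mem_iUnion.2 ⟨j, by rw [Metric.mem_closedBall]; exact not_lt.1 h⟩)
    have h := hG hρ ht D hbi Q₀ x hfar
    simp only [hA1, hA2, hA3, mem_ofPred_eq, not_le, not_lt] at n1 n2 n3
    have m2 := (HL_const_mul (fun y => ENNReal.ofReal |D.b y|) hC x).trans n2
    have m3 : (C * ENNReal.ofReal t * D.H c2 x) ^ (1 / 2 : ℝ) ≤ ENNReal.ofReal (t / 6) := by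
      have : C * ENNReal.ofReal t * D.H c2 x ≤ ENNReal.ofReal ((t / 6) ^ (2 : ℝ)) := by
        calc _ = ENNReal.ofReal t * (C * D.H c2 x) := by ring
          _ ≤ ENNReal.ofReal t * ENNReal.ofReal (t / 36) := mul_le_mul_right n3.le _
          _ = _ := by
            rw [← ENNReal.ofReal_mul ht.le]
            congr 1
            rw [Real.rpow_two]; ring
      refine (ENNReal.rpow_le_rpow this (by norm_num)).trans (le_of_eq ?_)
      rw [← ENNReal.ofReal_rpow_of_pos (by positivity), ← ENNReal.rpow_mul]
      norm_num
    have hx' : ENNReal.ofReal (t / 2) < S.grandMaxLoc ρ Q₀ D.b x := hx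
    refine absurd (hx'.trans_le (h.trans (add_le_add n1.le (add_le_add m2 m3)))) (not_lt.2 (le_of_eq ?_))
    rw [← ENNReal.ofReal_add (by positivity) (by positivity),
      ← ENNReal.ofReal_add (by positivity) (by positivity)]
    congr 1; ring
  have b0 : ENNReal.ofReal t * volume Om ≤ k0 * I := D.vol_Om hR0
  have b1 : ENNReal.ofReal t * volume A1 ≤ k1 * I := by
    refine (cheb_scaled ((D.H_meas c1).const_mul C) ht (by norm_num)).trans ?_
    rw [lintegral_const_mul' _ _ hC]
    refine (mul_le_mul_right (mul_le_mul_right (D.H_int c1) _) _).trans (le_of_eq ?_)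
    rw [hk1]; ring
  have b3 : ENNReal.ofReal t * volume A3 ≤ k3 * I := by
    refine (cheb_scaled ((D.H_meas c2).const_mul C) ht (by norm_num)).trans ?_
    rw [lintegral_const_mul' _ _ hC]
    refine (mul_le_mul_right (mul_le_mul_right (D.H_int c2) _) _).trans (le_of_eq ?_)
    rw [hk3]; ring
  have b2 : ENNReal.ofReal t * volume A2 ≤ k2 * I := by
    have h := HL_weak hd (fun y => C * ENNReal.ofReal |D.b y|) (t := ENNReal.ofReal (t / 6))
      (by rw [ne_eq, ENNReal.ofReal_eq_zero, not_le]; positivity) ENNReal.ofReal_ne_top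
    rw [lintegral_const_mul' _ _ hC] at h
    have e : ENNReal.ofReal t = ENNReal.ofReal 6 * ENNReal.ofReal (t / 6) := by
      rw [← ENNReal.ofReal_mul (by norm_num)]; congr 1; field_simp
    rw [e, mul_assoc]
    refine (mul_le_mul_right (h.trans (mul_le_mul_right (mul_le_mul_right D.bint _) _)) _).trans (le_of_eq ?_)
    rw [hk2]; ring
  calc _ ≤ ENNReal.ofReal t * (volume Om + (volume A1 + (volume A2 + volume A3))) := by
        refine mul_le_mul_right ((measure_mono hsub).trans ?_) _
        refine (measure_union_le _ _).trans (add_le_add_right ?_ _)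
        refine (measure_union_le _ _).trans (add_le_add_right ?_ _)
        exact measure_union_le _ _
    _ = ENNReal.ofReal t * volume Om + (ENNReal.ofReal t * volume A1 +
        (ENNReal.ofReal t * volume A2 + ENNReal.ofReal t * volume A3)) := by ring
    _ ≤ k0 * I + (k1 * I + (k2 * I + k3 * I)) := by gcongr
    _ = _ := by ring


lemma lint_ne_top_of_int {d : ℕ} {f : Rd d → ℝ} (hf : Integrable f) :
    ∫⁻ y, ENNReal.ofReal |f y| ≠ ∞ := by
  have := hf.2
  rw [hasFiniteIntegral_iff_enorm] at this
  simpa [Real.enorm_eq_ofReal_abs] using this.ne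

lemma int_of_lint_ne_top {d : ℕ} {f : Rd d → ℝ} (hfm : Measurable f)
    (h : ∫⁻ y, ENNReal.ofReal |f y| ≠ ∞) : Integrable f := by
  refine ⟨hfm.aestronglyMeasurable, ?_⟩
  rw [hasFiniteIntegral_iff_enorm]
  simpa [Real.enorm_eq_ofReal_abs] using h.lt_top

lemma CZO.split_meas {d : ℕ} (S : CZO d) {ρ : ℝ} (hρ : 1 ≤ ρ) (Q₀ : Cube d) {f g b : Rd d → ℝ}
    (hg : Integrable g) (hb : Integrable b) (hf : f = fun y => g y + b y) {t : ℝ} (ht : 0 < t) :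
    volume {x | ENNReal.ofReal t < S.grandMaxLoc ρ Q₀ f x} ≤
      volume {x | ENNReal.ofReal (t / 2) < S.grandMaxLoc ρ Q₀ g x} +
      volume {x | ENNReal.ofReal (t / 2) < S.grandMaxLoc ρ Q₀ b x} := by
  refine (measure_mono fun x hx => ?_).trans (measure_union_le _ _)
  have hx' : ENNReal.ofReal t < S.grandMaxLoc ρ Q₀ f x := hx
  by_contra hcon
  have h1 : ¬ (ENNReal.ofReal (t / 2) < S.grandMaxLoc ρ Q₀ g x) := fun h => hcon (Or.inl h)
  have h2 : ¬ (ENNReal.ofReal (t / 2) < S.grandMaxLoc ρ Q₀ b x) := fun h => hcon (Or.inr h)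
  refine absurd hx' (not_lt.2 ?_)
  rw [hf]
  refine (S.grand_add hρ Q₀ hg hb x).trans ((add_le_add (not_lt.1 h1) (not_lt.1 h2)).trans ?_)
  rw [← ENNReal.ofReal_add (by positivity) (by positivity)]
  exact le_of_eq (by congr 1; ring)

lemma CZO.weak11 {d : ℕ} (hd : 0 < d) (S : CZO d) {ρ q : ℝ} (hρ : 2 < ρ) (hq : 1 < q)
    (hbdd : S.VarBdd ρ q) : ∃ C : ℝ≥0∞, C ≠ ∞ ∧ ∀ (Q₀ : Cube d) (f : Rd d → ℝ), Measurable f →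
      ∀ t : ℝ, 0 < t → ENNReal.ofReal t * volume {x | ENNReal.ofReal t < S.grandMaxLoc ρ Q₀ f x} ≤
        C * ∫⁻ x, ENNReal.ofReal |f x| := by
  obtain ⟨Cq, hCq, hQ⟩ := S.grand_strong_q hd hρ hq hbdd
  obtain ⟨Cb, hCb, hB⟩ := S.weak_bad hd
  set k : ℝ≥0∞ := ENNReal.ofReal (2 ^ q * (2 ^ d) ^ (q - 1)) with hk
  refine ⟨k * Cq * 3 + Cb + 1, by finiteness, fun Q₀ f hfm t ht => ?_⟩
  by_cases hfin : ∫⁻ x, ENNReal.ofReal |f x| = ∞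
  · rw [hfin, ENNReal.mul_top (by simp)]; exact le_top
  have hf : Integrable f := int_of_lint_ne_top hfm hfin
  obtain ⟨D⟩ := czd_exists hd hfm hf ht
  have hbI : Integrable D.b := int_of_lint_ne_top D.mb
    (ne_top_of_le_ne_top (ENNReal.mul_ne_top (by simp) hfin) D.bint)
  set g : Rd d → ℝ := fun y => f y - D.b y with hg
  have hgI : Integrable g := hf.sub hbI
  have hgm : Measurable g := hfm.sub D.mb
  have hsp := S.split_meas (by linarith : 1 ≤ ρ) Q₀ hgI hbI (f := f) (by ext y; simp [hg]) ht
  have hb := hB hρ.le ht D hbI Q₀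
  have hgq := (hQ Q₀ g hgm).2 (t / 2) (by positivity)
  have hg1 : ∫⁻ y, ENNReal.ofReal |g y| ≤ 3 * ∫⁻ y, ENNReal.ofReal |f y| := by
    calc ∫⁻ y, ENNReal.ofReal |g y| ≤ ∫⁻ y, (ENNReal.ofReal |f y| + ENNReal.ofReal |D.b y|) := by
          refine lintegral_mono fun y => ?_
          rw [← ENNReal.ofReal_add (abs_nonneg _) (abs_nonneg _)]
          exact ENNReal.ofReal_le_ofReal (abs_sub _ _)
      _ = (∫⁻ y, ENNReal.ofReal |f y|) + ∫⁻ y, ENNReal.ofReal |D.b y| :=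
          lintegral_add_left (by fun_prop) _
      _ ≤ (∫⁻ y, ENNReal.ofReal |f y|) + 2 * ∫⁻ y, ENNReal.ofReal |f y| := by
          gcongr; exact D.bint
      _ = _ := by ring
  have hg2 : ∫⁻ y, ENNReal.ofReal |g y| ^ q ≤
      ENNReal.ofReal ((2 ^ d * t) ^ (q - 1)) * ∫⁻ y, ENNReal.ofReal |g y| := by
    rw [← lintegral_const_mul _ (by fun_prop)]
    refine lintegral_mono_ae ?_
    filter_upwards [D.gbd] with y hy
    have e : ENNReal.ofReal |g y| ^ q = ENNReal.ofReal |g y| ^ (q - 1) * ENNReal.ofReal |g y| := by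
      conv_rhs => rw [← ENNReal.rpow_one (ENNReal.ofReal |g y|), ← ENNReal.rpow_mul, one_mul,
        ← ENNReal.rpow_add_of_nonneg _ _ (by linarith) zero_le_one]
      congr 1; ring
    rw [e]
    refine mul_le_mul_left ?_ _
    rw [ENNReal.ofReal_rpow_of_nonneg (abs_nonneg _) (by linarith)]
    exact ENNReal.ofReal_le_ofReal (Real.rpow_le_rpow (abs_nonneg _) hy (by linarith))
  have e1 : ENNReal.ofReal t = ENNReal.ofReal (2 ^ q * t ^ (1 - q)) * ENNReal.ofReal (t / 2) ^ q := by
    rw [ENNReal.ofReal_rpow_of_nonneg (by positivity) (by linarith),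
      ← ENNReal.ofReal_mul (by positivity)]
    congr 1
    rw [Real.div_rpow ht.le (by norm_num)]
    have h2 : (2 : ℝ) ^ q ≠ 0 := by positivity
    field_simp
    rw [← Real.rpow_add ht]; simp
  have e2 : ENNReal.ofReal (2 ^ q * t ^ (1 - q)) * ENNReal.ofReal ((2 ^ d * t) ^ (q - 1)) = k := by
    rw [← ENNReal.ofReal_mul (by positivity), hk]
    congr 1
    rw [Real.mul_rpow (by positivity) ht.le]
    have : t ^ (1 - q) * t ^ (q - 1) = 1 := by rw [← Real.rpow_add ht]; simp
    linear_combination (2 ^ q * (2 ^ d) ^ (q - 1)) * this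
  have hgood : ENNReal.ofReal t * volume {x | ENNReal.ofReal (t / 2) < S.grandMaxLoc ρ Q₀ g x} ≤
      k * Cq * 3 * ∫⁻ y, ENNReal.ofReal |f y| := by
    rw [e1, mul_assoc]
    calc _ ≤ ENNReal.ofReal (2 ^ q * t ^ (1 - q)) * (Cq * (ENNReal.ofReal ((2 ^ d * t) ^ (q - 1)) *
            (3 * ∫⁻ y, ENNReal.ofReal |f y|))) := by
          refine mul_le_mul_right (hgq.trans (mul_le_mul_right (hg2.trans ?_) _)) _
          exact mul_le_mul_right hg1 _
      _ = _ := by rw [← e2]; ring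
  calc _ ≤ ENNReal.ofReal t * (volume {x | ENNReal.ofReal (t / 2) < S.grandMaxLoc ρ Q₀ g x} +
      volume {x | ENNReal.ofReal (t / 2) < S.grandMaxLoc ρ Q₀ D.b x}) := mul_le_mul_right hsp _
    _ ≤ k * Cq * 3 * (∫⁻ y, ENNReal.ofReal |f y|) + Cb * ∫⁻ y, ENNReal.ofReal |f y| := by
        rw [mul_add]; exact add_le_add hgood hb
    _ ≤ _ := by rw [← add_mul]; exact mul_le_mul_left le_self_add _

lemma CZO.grand_restrict {d : ℕ} (S : CZO d) (ρ : ℝ) (Q₀ : Cube d) (f : Rd d → ℝ) (x : Rd d) :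
    S.grandMaxLoc ρ Q₀ f x = S.grandMaxLoc ρ Q₀ ((Q₀.dilate 3).indicator f) x := by
  unfold CZO.grandMaxLoc
  have e : ∀ Q : Cube d, (Q₀.dilate 3 \ Q.dilate 3).indicator f =
      (Q₀.dilate 3 \ Q.dilate 3).indicator ((Q₀.dilate 3).indicator f) := by
    intro Q
    rw [indicator_indicator, inter_eq_left.2 diff_subset]
  simp only [← e]

lemma CZO.grand_strong_p {d : ℕ} (hd : 0 < d) (S : CZO d) {ρ q : ℝ} (hρ : 2 < ρ) (hq : 1 < q)
    (hbdd : S.VarBdd ρ q) {p : ℝ} (hp : 1 < p) (hpq : p < q) :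
    ∃ C : ℝ≥0∞, C ≠ ∞ ∧ ∀ (Q₀ : Cube d) (f : Rd d → ℝ), Measurable f →
      ∫⁻ x, S.grandMaxLoc ρ Q₀ f x ^ p ≤ C * ∫⁻ x, ENNReal.ofReal |f x| ^ p := by
  obtain ⟨Cq, hCq, hQ⟩ := S.grand_strong_q hd hρ hq hbdd
  obtain ⟨Cw, hCw, hW⟩ := S.weak11 hd hρ hq hbdd
  set C1 : ℝ≥0∞ := ENNReal.ofReal 2 * Cw with hC1
  set C2 : ℝ≥0∞ := ENNReal.ofReal (2 ^ q) * Cq with hC2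
  set C := ENNReal.ofReal p * (C1 * ENNReal.ofReal (1 / (p - 1)) + C2 * ENNReal.ofReal (1 / (q - p)))
    with hC
  refine ⟨C + 1, by finiteness, fun Q₀ f hfm => ?_⟩
  by_cases hfin : ∫⁻ x, ENNReal.ofReal |f x| ^ p = ∞
  · rw [hfin, ENNReal.mul_top (by simp)]; exact le_top
  set F := (Q₀.dilate 3).indicator f with hF
  have hFI : Integrable F := int_of_Lq hp.le hfm hfin (Q₀.meas_dilate 3) (Q₀.vol_dilate_lt 3)
  have hFm : Measurable F := hfm.indicator (Q₀.meas_dilate 3)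
  have key := marc (volume : Measure (Rd d)) hp hpq C1 C2 (S.grandMaxLoc ρ Q₀ F) (fun y => |F y|)
    (by fun_prop) (fun y => abs_nonneg _) ?_
  · calc ∫⁻ x, S.grandMaxLoc ρ Q₀ f x ^ p = ∫⁻ x, S.grandMaxLoc ρ Q₀ F x ^ p := by
          simp only [S.grand_restrict ρ Q₀ f, hF]
      _ ≤ C * ∫⁻ x, ENNReal.ofReal (|F x| ^ p) := key
      _ ≤ C * ∫⁻ x, ENNReal.ofReal |f x| ^ p := by
          refine mul_le_mul_right (lintegral_mono fun x => ?_) _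
          dsimp only
          rw [ENNReal.ofReal_rpow_of_nonneg (abs_nonneg _) (by linarith)]
          refine ENNReal.ofReal_le_ofReal (Real.rpow_le_rpow (abs_nonneg _) ?_ (by linarith))
          by_cases hx : x ∈ Q₀.dilate 3 <;> simp [hF, hx]
      _ ≤ _ := mul_le_mul_left le_self_add _
  intro t ht
  set A : Set (Rd d) := {y | t < |F y|} with hA
  have hAm : MeasurableSet A := measurableSet_lt measurable_const (by fun_prop)
  have hI1 : Integrable (A.indicator F) := hFI.indicator hAm
  have hI2 : Integrable (Aᶜ.indicator F) := hFI.indicator hAm.compl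
  have hsp := S.split_meas (by linarith : 1 ≤ ρ) Q₀ hI1 hI2 (f := F)
    (by ext y; by_cases hy : y ∈ A <;> simp [hy]) ht
  have h1 := hW Q₀ (A.indicator F) (hFm.indicator hAm) (t / 2) (by positivity)
  have h2 := (hQ Q₀ (Aᶜ.indicator F) (hFm.indicator hAm.compl)).2 (t / 2) (by positivity)
  have i1 : ∫⁻ x, ENNReal.ofReal |A.indicator F x| =
      ∫⁻ y, (if t < |F y| then ENNReal.ofReal |F y| else 0) := by
    refine lintegral_congr fun y => ?_
    by_cases hy : t < |F y|
    · rw [if_pos hy, indicator_of_mem (show y ∈ A from hy)]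
    · rw [if_neg hy, indicator_of_notMem (show y ∉ A from hy)]; simp
  have i2 : ∫⁻ x, ENNReal.ofReal |Aᶜ.indicator F x| ^ q =
      ∫⁻ y, (if |F y| ≤ t then ENNReal.ofReal (|F y| ^ q) else 0) := by
    refine lintegral_congr fun y => ?_
    rw [ENNReal.ofReal_rpow_of_nonneg (abs_nonneg _) (by linarith)]
    by_cases hy : t < |F y|
    · rw [if_neg (not_le.2 hy), indicator_of_notMem (show y ∉ Aᶜ from fun h => h hy)]
      simp [Real.zero_rpow (by linarith : q ≠ 0)]
    · rw [if_pos (not_lt.1 hy), indicator_of_mem (show y ∈ Aᶜ from hy)]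
  rw [i1] at h1
  rw [i2] at h2
  refine hsp.trans (add_le_add ?_ ?_)
  · have e : ENNReal.ofReal 2 * ENNReal.ofReal t⁻¹ * ENNReal.ofReal (t / 2) = 1 := by
      rw [← ENNReal.ofReal_mul (by positivity), ← ENNReal.ofReal_mul (by positivity),
        ← ENNReal.ofReal_one]
      congr 1; field_simp
    have := mul_le_mul_right h1 (ENNReal.ofReal 2 * ENNReal.ofReal t⁻¹)
    rw [← mul_assoc, e, one_mul] at this
    refine this.trans (le_of_eq ?_)
    rw [hC1]; ring
  · have e : ENNReal.ofReal (2 ^ q) * ENNReal.ofReal (t ^ (-q)) * ENNReal.ofReal (t / 2) ^ q = 1 := by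
      rw [ENNReal.ofReal_rpow_of_nonneg (by positivity) (by linarith),
        ← ENNReal.ofReal_mul (by positivity), ← ENNReal.ofReal_mul (by positivity),
        ← ENNReal.ofReal_one]
      congr 1
      rw [Real.div_rpow ht.le (by norm_num), Real.rpow_neg ht.le]
      have h2 : (2 : ℝ) ^ q ≠ 0 := by positivity
      have h3 : t ^ q ≠ 0 := by positivity
      field_simp
    have := mul_le_mul_right h2 (ENNReal.ofReal (2 ^ q) * ENNReal.ofReal (t ^ (-q)))
    rw [← mul_assoc, e, one_mul] at this
    refine this.trans (le_of_eq ?_)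
    rw [hC2]; ring

lemma real_const {C : ℝ≥0∞} (hC : C ≠ ∞) : ∃ c : ℝ, 0 < c ∧ C ≤ ENNReal.ofReal c := by
  refine ⟨C.toReal + 1, by positivity, ?_⟩
  conv_lhs => rw [← ENNReal.ofReal_toReal hC]
  exact ENNReal.ofReal_le_ofReal (by linarith)

/-- The local grand maximal truncated operator `M_{V_ρ(T_*),Q₀}` is bounded
on `L^p(ℝ^d)` for `p ∈ (1,q]` and of weak type `(1,1)`, with operator norms independent of
the cube `Q₀`. -/
theorem grandMaxLoc_bounded
    (d : ℕ) (hd : 0 < d) (S : CZO d) (ρ q : ℝ) (hρ : 2 < ρ) (hq : 1 < q)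
    (hbdd : S.VarBdd ρ q) (p : ℝ) (hp : 1 < p) (hpq : p ≤ q) :
    (∃ C : ℝ, 0 < C ∧ ∀ (Q₀ : Cube d) (f : Rd d → ℝ), Measurable f →
        ∫⁻ x, S.grandMaxLoc ρ Q₀ f x ^ p ∂volume ≤
          ENNReal.ofReal C * ∫⁻ x, ENNReal.ofReal |f x| ^ p ∂volume) ∧
    (∃ C : ℝ, 0 < C ∧ ∀ (Q₀ : Cube d) (f : Rd d → ℝ), Measurable f → ∀ t : ℝ, 0 < t →
        ENNReal.ofReal t * volume {x | ENNReal.ofReal t < S.grandMaxLoc ρ Q₀ f x} ≤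
          ENNReal.ofReal C * ∫⁻ x, ENNReal.ofReal |f x| ∂volume) := by
  obtain ⟨Cw, hCw, hW⟩ := S.weak11 hd hρ hq hbdd
  have hS : ∃ C : ℝ≥0∞, C ≠ ∞ ∧ ∀ (Q₀ : Cube d) (f : Rd d → ℝ), Measurable f →
      ∫⁻ x, S.grandMaxLoc ρ Q₀ f x ^ p ≤ C * ∫⁻ x, ENNReal.ofReal |f x| ^ p := by
    rcases hpq.eq_or_lt with h | h
    · obtain ⟨C, hC, hQ⟩ := S.grand_strong_q hd hρ hq hbdd
      subst h
      exact ⟨C, hC, fun Q₀ f hf => (hQ Q₀ f hf).1⟩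
    · exact S.grand_strong_p hd hρ hq hbdd hp h
  obtain ⟨Cs, hCs, hS⟩ := hS
  obtain ⟨cs, hcs, hcs2⟩ := real_const hCs
  obtain ⟨cw, hcw, hcw2⟩ := real_const hCw
  exact ⟨⟨cs, hcs, fun Q₀ f hf => (hS Q₀ f hf).trans (mul_le_mul_left hcs2 _)⟩,
    ⟨cw, hcw, fun Q₀ f hf t ht => (hW Q₀ f hf t ht).trans (mul_le_mul_left hcw2 _)⟩⟩
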